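/- For any α ∈ ℕR_λ^+ there exists a decomposition α = σ^(1) + … + σ^(r) with all σ^(t) ∈ Σ_λ which every other decomposition of α as a sum of elements of Σ_λ refines: that is, whenever α = Σ_{j=1}^n β^(j) with all β^(j) ∈ Σ_λ, there is a partition {1,…,n} = P_1 ∪ … ∪ P_r into disjoint subsets with σ^(t) = Σ_{j∈P_t} β^(j) for each t. -/

import Mathlib

open scoped BigOperators

noncomputable section

/-- A quiver with a finite vertex set `I` and a finite arrow set `A`;
`h a` and `t a` are the head and the tail of the arrow `a`. -/
structure FinQuiver where
  I : Type
  [fintypeI : Fintype I]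
  [decEqI : DecidableEq I]
  A : Type
  [fintypeA : Fintype A]
  h : A → I
  t : A → I

attribute [instance] FinQuiver.fintypeI FinQuiver.decEqI FinQuiver.fintypeA

namespace FinQuiver

variable (Q : FinQuiver)

/-- Arrows of the double quiver `Q̄` : every arrow `a : i → j` of `Q` (as `Sum.inl a`)
together with a reverse arrow `a* : j → i` (as `Sum.inr a`). -/
@[reducible] def DA : Type := Q.A ⊕ Q.A

instance : Fintype Q.DA := inferInstanceAs (Fintype (Q.A ⊕ Q.A))

/-- Head of an arrow of the double quiver. -/
@[reducible] def dh : Q.DA → Q.I := fun a => match a with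
  | Sum.inl a => Q.h a
  | Sum.inr a => Q.t a

/-- Tail of an arrow of the double quiver. -/
@[reducible] def dt : Q.DA → Q.I := fun a => match a with
  | Sum.inl a => Q.t a
  | Sum.inr a => Q.h a

/-- The symmetric bilinear form
`(α,β) = ∑_{i∈I} 2 α_i β_i − ∑_{a∈Q̄} α_{h(a)} β_{t(a)}` on `ℤ^I`. -/
def bil (α β : Q.I → ℤ) : ℤ :=
  (∑ i, 2 * α i * β i) - ∑ a : Q.DA, α (Q.dh a) * β (Q.dt a)

/-- `p(α) = 1 − q(α) = 1 − α·α + ∑_{a ∈ Q} α_{t(a)} α_{h(a)}`. -/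
def pp (α : Q.I → ℤ) : ℤ :=
  1 - (∑ i, α i * α i) + ∑ a : Q.A, α (Q.t a) * α (Q.h a)

/-- The coordinate vector `ε_i` at a vertex `i`. -/
def ev (i : Q.I) : Q.I → ℤ := fun j => if j = i then 1 else 0

/-- The coordinate vector of a vertex, as a vector of natural numbers. -/
def evN (i : Q.I) : Q.I → ℕ := fun j => if j = i then 1 else 0

/-- A vertex is loopfree if no arrow has both its head and its tail there. -/
def Loopfree (i : Q.I) : Prop := ∀ a : Q.A, ¬ (Q.h a = i ∧ Q.t a = i)

/-- The reflection `s_i(α) = α − (α,ε_i) ε_i` at a (loopfree) vertex `i`. -/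
def refl (i : Q.I) (α : Q.I → ℤ) : Q.I → ℤ := α - Q.bil α (Q.ev i) • Q.ev i

/-- Two vertices are joined by some arrow. -/
def Adj (i j : Q.I) : Prop :=
  ∃ a : Q.A, (Q.h a = i ∧ Q.t a = j) ∨ (Q.h a = j ∧ Q.t a = i)

/-- The quiver is connected. -/
def Connected : Prop := ∀ i j : Q.I, Relation.ReflTransGen Q.Adj i j

/-- The support of the vector `α` is connected in `Q`. -/
def SuppConnected (α : Q.I → ℤ) : Prop :=
  ∀ i j : Q.I, α i ≠ 0 → α j ≠ 0 →
    Relation.ReflTransGen (fun x y => α x ≠ 0 ∧ α y ≠ 0 ∧ Q.Adj x y) i j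

/-- The fundamental region: nonzero nonnegative vectors with connected support
such that `(α, ε_i) ≤ 0` for every vertex `i`. -/
def InFund (α : Q.I → ℤ) : Prop :=
  α ≠ 0 ∧ (∀ i, 0 ≤ α i) ∧ Q.SuppConnected α ∧ ∀ i, Q.bil α (Q.ev i) ≤ 0

/-- The roots of the Kac root system attached to `Q` : the real roots form the orbit
of the simple roots (coordinate vectors at loopfree vertices) under the reflections at
loopfree vertices, and the imaginary roots form the orbit of `±(fundamental region)`
under these reflections. -/
inductive IsRoot : (Q.I → ℤ) → Prop
  | simple (i : Q.I) (hi : Q.Loopfree i) : IsRoot (Q.ev i)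
  | fund (α : Q.I → ℤ) (hα : Q.InFund α) : IsRoot α
  | neg_fund (α : Q.I → ℤ) (hα : Q.InFund α) : IsRoot (-α)
  | reflect (i : Q.I) (hi : Q.Loopfree i) (α : Q.I → ℤ) (hα : IsRoot α) :
      IsRoot (Q.refl i α)

/-- Positive roots: roots all of whose components are nonnegative. -/
def IsPosRoot (α : Q.I → ℤ) : Prop := Q.IsRoot α ∧ (∀ i, 0 ≤ α i) ∧ α ≠ 0

/-- The Tits form is positive semidefinite. -/
def PosSemidef : Prop := ∀ α : Q.I → ℤ, 0 ≤ Q.bil α α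

/-- The Tits form is positive definite. -/
def PosDef : Prop := Q.PosSemidef ∧ ∀ α : Q.I → ℤ, Q.bil α α = 0 → α = 0

/-- Dynkin quivers: connected, with positive definite Tits form. -/
def IsDynkin : Prop := Q.Connected ∧ Q.PosDef

/-- Extended Dynkin quivers: connected, with positive semidefinite but not
positive definite Tits form. -/
def IsExtDynkin : Prop := Q.Connected ∧ Q.PosSemidef ∧ ¬ Q.PosDef

/-- `δ` is the minimal positive imaginary root of an extended Dynkin quiver:
the minimal nonzero nonnegative vector in the radical of the Tits form. -/
def IsMinImag (δ : Q.I → ℤ) : Prop :=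
  (∀ i, 0 ≤ δ i) ∧ δ ≠ 0 ∧ (∀ i, Q.bil δ (Q.ev i) = 0) ∧
    ∀ β : Q.I → ℤ, (∀ i, 0 ≤ β i) → β ≠ 0 → (∀ i, Q.bil β (Q.ev i) = 0) →
      ∀ i, δ i ≤ β i

/-- The subquiver of `Q` on a subset `S` of vertices and a subset `B` of arrows. -/
def restrict (S : Set Q.I) (B : Set Q.A) (hh : ∀ a ∈ B, Q.h a ∈ S)
    (ht : ∀ a ∈ B, Q.t a ∈ S) : FinQuiver :=
  { I := S
    fintypeI := Fintype.ofFinite S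
    decEqI := Classical.decEq _
    A := B
    fintypeA := Fintype.ofFinite B
    h := fun a => ⟨Q.h a.1, hh a.1 a.2⟩
    t := fun a => ⟨Q.t a.1, ht a.1 a.2⟩ }

/-- The support quiver of a vector: the full subquiver on the support of `β`. -/
def suppQuiver (β : Q.I → ℤ) : FinQuiver :=
  Q.restrict {i | β i ≠ 0} {a | β (Q.h a) ≠ 0 ∧ β (Q.t a) ≠ 0}
    (fun _ ha => ha.1) (fun _ ha => ha.2)

/-- A dimension vector (of natural numbers), viewed in `ℤ^I`. -/
def toZ (α : Q.I → ℕ) : Q.I → ℤ := fun i => (α i : ℤ)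

/-- An oriented cycle in the double quiver `Q̄`, consisting of `n+1` arrows,
the tail of each arrow being the head of the (cyclically) next one. -/
structure Cyc (Q' : FinQuiver) where
  n : ℕ
  ar : Fin (n + 1) → Q'.DA
  compat : ∀ i : Fin (n + 1), Q'.dt (ar i) = Q'.dh (ar (i + 1))

section WithField

variable (K : Type) [Field K]

/-- `λ·α = ∑_i λ_i α_i`. -/
def pair (l : Q.I → K) (α : Q.I → ℤ) : K := ∑ i, l i * (α i : K)

/-- `R_λ^+`, the set of positive roots `α` with `λ·α = 0`. -/
def Rplus (l : Q.I → K) : Set (Q.I → ℤ) :=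
  {α | Q.IsPosRoot α ∧ Q.pair K l α = 0}

/-- `ℕ R_λ^+`, the set of sums (including the empty sum `0`) of elements of `R_λ^+`. -/
def NRplus (l : Q.I → K) : Set (Q.I → ℤ) :=
  (AddSubmonoid.closure (Q.Rplus K l) : AddSubmonoid (Q.I → ℤ))

/-- `Σ_λ` : the elements `α ∈ R_λ^+` with `p(α) > ∑ p(β⁽ᵗ⁾)` for every decomposition
of `α` as a sum of at least two elements `β⁽ᵗ⁾` of `R_λ^+`. -/
def SigmaSet (l : Q.I → K) : Set (Q.I → ℤ) :=
  {α | α ∈ Q.Rplus K l ∧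
    ∀ (n : ℕ) (β : Fin n → (Q.I → ℤ)), 2 ≤ n → (∀ j, β j ∈ Q.Rplus K l) →
      α = ∑ j, β j → (∑ j, Q.pp (β j)) < Q.pp α}

/-- The dual reflection `r_i(λ)_j = λ_j − (ε_i,ε_j) λ_i`. -/
def coRefl (i : Q.I) (l : Q.I → K) : Q.I → K :=
  fun j => l j - (Q.bil (Q.ev i) (Q.ev j) : ℤ) * l i

/-- A single admissible reflection applied to the pair `(λ, α)`:
a reflection at a loopfree vertex `i` with `λ_i ≠ 0`. -/
def AdmStep (x y : (Q.I → K) × (Q.I → ℤ)) : Prop :=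
  ∃ i : Q.I, Q.Loopfree i ∧ x.1 i ≠ 0 ∧ y.1 = Q.coRefl K i x.1 ∧ y.2 = Q.refl i x.2

/-- `(ν,β)` is obtained from `(λ,α)` by a sequence of admissible reflections:
the two pairs lie in the same class of the equivalence relation generated by
admissible reflections. -/
def AdmEquiv (x y : (Q.I → K) × (Q.I → ℤ)) : Prop :=
  Relation.EqvGen (Q.AdmStep K) x y

/-- The space `Rep(Q̄,α)` of representations of the double quiver. -/
def Rep (α : Q.I → ℕ) : Type :=
  ∀ a : Q.DA, Matrix (Fin (α (Q.dh a))) (Fin (α (Q.dt a))) K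

/-- The moment map
`μ_α(x)_i = ∑_{a∈Q, h(a)=i} x_a x_{a*} − ∑_{a∈Q, t(a)=i} x_{a*} x_a`. -/
def moment (α : Q.I → ℕ) (x : Q.Rep K α) (i : Q.I) :
    Matrix (Fin (α i)) (Fin (α i)) K :=
  (∑ a : Q.A, if h : Q.h a = i then
      (x (Sum.inl a) * x (Sum.inr a)).submatrix
        (Fin.cast (congrArg α h).symm) (Fin.cast (congrArg α h).symm)
    else 0)
  - ∑ a : Q.A, if h : Q.t a = i then
      (x (Sum.inr a) * x (Sum.inl a)).submatrix
        (Fin.cast (congrArg α h).symm) (Fin.cast (congrArg α h).symm)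
    else 0

/-- The fibre `μ_α^{-1}(λ)` of the moment map over (the central element
corresponding to) `λ`. -/
def MomentFiber (l : Q.I → K) (α : Q.I → ℕ) : Set (Q.Rep K α) :=
  {x | ∀ i : Q.I, Q.moment K α x i = l i • (1 : Matrix (Fin (α i)) (Fin (α i)) K)}

/-- The group `∏_i GL(α_i,K)`; it acts on `Rep(Q̄,α)` by conjugation, with the same
orbits and the same invariant functions as `G(α) = (∏_i GL(α_i,K))/K^*`. -/
def Gl (α : Q.I → ℕ) : Type := ∀ i : Q.I, Matrix.GeneralLinearGroup (Fin (α i)) K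

/-- The conjugation action of `∏_i GL(α_i,K)` on `Rep(Q̄,α)`. -/
def glAct (α : Q.I → ℕ) (g : Q.Gl K α) (x : Q.Rep K α) : Q.Rep K α :=
  fun a => (g (Q.dh a) : Matrix (Fin (α (Q.dh a))) (Fin (α (Q.dh a))) K) * x a *
    (((g (Q.dt a))⁻¹ : Matrix.GeneralLinearGroup (Fin (α (Q.dt a))) K) :
      Matrix (Fin (α (Q.dt a))) (Fin (α (Q.dt a))) K)

/-- Coordinates on `Rep(Q̄,α)`: matrix entries. -/
def Coords (α : Q.I → ℕ) : Type :=
  Σ a : Q.DA, Fin (α (Q.dh a)) × Fin (α (Q.dt a))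

/-- The coordinate ring `K[V]` of a subset `V` of `Rep(Q̄,α)` : the algebra of
`K`-valued functions on `V` which are restrictions of polynomial functions. -/
def fnRing (α : Q.I → ℕ) (V : Set (Q.Rep K α)) : Subalgebra K (↥V → K) :=
  (MvPolynomial.aeval
    (fun c : Q.Coords α => fun v : ↥V => v.1 c.1 c.2.1 c.2.2) :
    MvPolynomial (Q.Coords α) K →ₐ[K] (↥V → K)).range

end WithField

end FinQuiver

/-- The subalgebra of functions invariant under a relation (e.g. the orbit
relation of a group action). -/
def relInv (K : Type) [Field K] {V : Type} (R : V → V → Prop) :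
    Subalgebra K (V → K) where
  carrier := {f | ∀ x y : V, R x y → f x = f y}
  mul_mem' := by
    intro f g hf hg x y hxy
    simp only [Pi.mul_apply, hf x y hxy, hg x y hxy]
  one_mem' := fun x y _ => rfl
  add_mem' := by
    intro f g hf hg x y hxy
    simp only [Pi.add_apply, hf x y hxy, hg x y hxy]
  zero_mem' := fun x y _ => rfl
  algebraMap_mem' := fun c x y _ => rfl

namespace FinQuiver

variable (Q : FinQuiver) (K : Type) [Field K]

/-- The coordinate ring of the Marsden–Weinstein reduction
`N(λ,α) = μ_α^{-1}(λ) ⫽ G(α)` : the `G(α)`-invariant functions in the coordinate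
ring of `μ_α^{-1}(λ)`.  Two such reductions are isomorphic as (affine) varieties
exactly when these `K`-algebras are isomorphic. -/
def InvRing (l : Q.I → K) (α : Q.I → ℕ) :
    Subalgebra K (↥(Q.MomentFiber K l α) → K) :=
  Q.fnRing K α (Q.MomentFiber K l α) ⊓
    relInv K (fun x y : ↥(Q.MomentFiber K l α) =>
      ∃ g : Q.Gl K α, y.1 = Q.glAct K α g x.1)

/-- Index type for a product `∏_t X_t^{m_t}`. -/
@[reducible] def SymIdx (s : ℕ) (m : Fin s → ℕ) : Type := Σ t : Fin s, Fin (m t)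

/-- The product `∏_{t} Rep(Q̄, d_t)^{m_t}` of representation spaces. -/
def SymRep (s : ℕ) (m : Fin s → ℕ) (d : Fin s → (Q.I → ℕ)) : Type :=
  ∀ p : SymIdx s m, Q.Rep K (d p.1)

/-- The product `∏_t μ_{d_t}^{-1}(λ)^{m_t}` of moment map fibres. -/
def SymFiber (s : ℕ) (m : Fin s → ℕ) (d : Fin s → (Q.I → ℕ)) (l : Q.I → K) :
    Set (Q.SymRep K s m d) :=
  {x | ∀ p : SymIdx s m, x p ∈ Q.MomentFiber K l (d p.1)}

/-- Polynomial functions on the product of fibres. -/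
def symFnRing (s : ℕ) (m : Fin s → ℕ) (d : Fin s → (Q.I → ℕ)) (l : Q.I → K) :
    Subalgebra K (↥(Q.SymFiber K s m d l) → K) :=
  (MvPolynomial.aeval
    (fun c : Σ p : SymIdx s m, Q.Coords (d p.1) =>
      fun v : ↥(Q.SymFiber K s m d l) => v.1 c.1 c.2.1 c.2.2.1 c.2.2.2) :
    MvPolynomial (Σ p : SymIdx s m, Q.Coords (d p.1)) K →ₐ[K]
      (↥(Q.SymFiber K s m d l) → K)).range

/-- The componentwise action of the product of the groups `∏ GL(d_t)^{m_t}`. -/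
def symGlAct (s : ℕ) (m : Fin s → ℕ) (d : Fin s → (Q.I → ℕ))
    (g : ∀ p : SymIdx s m, Q.Gl K (d p.1)) (x : Q.SymRep K s m d) :
    Q.SymRep K s m d :=
  fun p => Q.glAct K (d p.1) (g p) (x p)

/-- The action of `∏_t S_{m_t}` permuting the factors of each `X_t^{m_t}`. -/
def symPermAct (s : ℕ) (m : Fin s → ℕ) (d : Fin s → (Q.I → ℕ))
    (π : ∀ t : Fin s, Equiv.Perm (Fin (m t))) (x : Q.SymRep K s m d) :
    Q.SymRep K s m d :=
  fun p => x ⟨p.1, π p.1 p.2⟩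

/-- The coordinate ring of the product of symmetric products
`∏_t S^{m_t} N(λ, d_t)` of Marsden–Weinstein reductions: functions on
`∏_t μ_{d_t}^{-1}(λ)^{m_t}` which are polynomial, invariant under all the groups
`G(d_t)` acting on the separate factors, and symmetric under permutations of the
`m_t` factors of each type `t`. -/
def SymInvRing (s : ℕ) (m : Fin s → ℕ) (d : Fin s → (Q.I → ℕ)) (l : Q.I → K) :
    Subalgebra K (↥(Q.SymFiber K s m d l) → K) :=
  Q.symFnRing K s m d l ⊓
    relInv K (fun x y : ↥(Q.SymFiber K s m d l) =>
      ∃ g : ∀ p : SymIdx s m, Q.Gl K (d p.1), y.1 = Q.symGlAct K s m d g x.1) ⊓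
    relInv K (fun x y : ↥(Q.SymFiber K s m d l) =>
      ∃ π : ∀ t : Fin s, Equiv.Perm (Fin (m t)), y.1 = Q.symPermAct K s m d π x.1)

/-- The trace function `tr_p` of an oriented cycle `p` in `Q̄` :
`tr_p(x) = tr(x_{a_1} ⋯ x_{a_ℓ})`, written out via matrix entries. -/
def cycTr (α : Q.I → ℕ) (p : Q.Cyc) (x : Q.Rep K α) : K :=
  ∑ c : ∀ i : Fin (p.n + 1), Fin (α (Q.dh (p.ar i))),
    ∏ i : Fin (p.n + 1),
      x (p.ar i) (c i) (Fin.cast (congrArg α (p.compat i)).symm (c (i + 1)))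

/-- `U` is a subrepresentation of the `Π^λ`-module given by the point
`x ∈ Rep(Q̄,α)` : a collection of subspaces stable under all the maps `x_a`. -/
def SubRep (α : Q.I → ℕ) (x : Q.Rep K α)
    (U : ∀ i : Q.I, Submodule K (Fin (α i) → K)) : Prop :=
  ∀ a : Q.DA, ∀ v ∈ U (Q.dt a), (x a).mulVec v ∈ U (Q.dh a)

/-- The module given by `x` has the simple module `S_{i₀}` (dimension vector
`ε_{i₀}`, all arrows acting as zero) as a composition factor: it has a subquotient
of dimension vector `ε_{i₀}` on which all arrows act as zero. -/
def HasSFactor (α : Q.I → ℕ) (i0 : Q.I) (x : Q.Rep K α) : Prop :=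
  ∃ U W : ∀ i : Q.I, Submodule K (Fin (α i) → K),
    Q.SubRep K α x U ∧ Q.SubRep K α x W ∧ (∀ i, U i ≤ W i) ∧
    (∀ i, Module.finrank K (W i) =
      Module.finrank K (U i) + (if i = i0 then 1 else 0)) ∧
    (∀ a : Q.DA, Q.dh a = i0 → Q.dt a = i0 →
      ∀ v ∈ W (Q.dt a), (x a).mulVec v ∈ U (Q.dh a))

/-- `W/U` is a simple subquotient of the module given by `x`; the simple
subquotients of a module are, up to isomorphism, exactly its composition factors. -/
def SimpleSubquot (α : Q.I → ℕ) (x : Q.Rep K α)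
    (U W : ∀ i : Q.I, Submodule K (Fin (α i) → K)) : Prop :=
  Q.SubRep K α x U ∧ Q.SubRep K α x W ∧ (∀ i, U i ≤ W i) ∧ U ≠ W ∧
    ∀ V : ∀ i : Q.I, Submodule K (Fin (α i) → K),
      Q.SubRep K α x V → (∀ i, U i ≤ V i) → (∀ i, V i ≤ W i) → V = U ∨ V = W

/-- The direct sum map `∏_{j=1}^m Rep(Q̄,δ) → Rep(Q̄,mδ)` (block diagonal). -/
def dsMap (δ : Q.I → ℕ) (m : ℕ) (y : Fin m → Q.Rep K δ) :
    Q.Rep K (fun i => m * δ i) :=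
  fun a => Matrix.of fun r c =>
    if (finProdFinEquiv.symm r).1 = (finProdFinEquiv.symm c).1 then
      y (finProdFinEquiv.symm r).1 a (finProdFinEquiv.symm r).2
        (finProdFinEquiv.symm c).2
    else 0

end FinQuiver

/-!
It suffices to find, for every nonzero `α ∈ ℕR_λ^+`, some `τ ∈ Σ_λ` that is a subsum of every
decomposition of `α` into elements of `Σ_λ`; splitting off `τ` and inducting on the height of `α`
gives the coarsest decomposition.

Reflections at loopfree vertices `i` with `λ_i ≠ 0` transport all the data, while for `λ_i = 0` and
`(α, ε_i) > 0` the vector `ε_i` occurs in every decomposition, since `(β, ε_i) ≤ 0` for all other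
`β ∈ Σ_λ`. So one may take `α` in the fundamental region. If `α ∉ Σ_λ`, then `α = ∑ σ_t` with
`σ_t ∈ Σ_λ` and `p(α) ≤ ∑ p(σ_t)`, that is, `∑ (2 + (σ_t, α - σ_t)) ≥ 2`. Hence either some
isotropic `σ_t` has `(σ_t, α) ≥ -1`, or two of the `σ_t` are anisotropic with
`(σ_t, α - σ_t) = -1`. In both cases `τ = σ_t` works: once `τ` has been moved into the fundamental
region, either `α` is supported on the support of `τ`, or a single simple edge joins that support to
the rest of the support of `α`, and `α` restricts to a multiple of `τ` there. At most one part of a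
decomposition crosses this edge. If the multiple is `τ` itself, the parts lying in the support of
`τ` sum to `τ`. In the isotropic case `(x, x)`, written as a Dirichlet form with weights `τ`, shows
that every root below `τ` orthogonal to `τ` has a complementary root, and a partial sum of the parts
that is maximal below `τ` must then equal `τ`.
-/

namespace FinQuiver

variable {Q : FinQuiver}

/-! ### The symmetric form and reflections -/

section BilinearForm

lemma bil_add_left (x y z : Q.I → ℤ) : Q.bil (x + y) z = Q.bil x z + Q.bil y z := by
  simp only [bil, Pi.add_apply, mul_add, add_mul, Finset.sum_add_distrib]
  ring

lemma bil_smul_left (c : ℤ) (x z : Q.I → ℤ) : Q.bil (c • x) z = c * Q.bil x z := by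
  simp only [bil, Pi.smul_apply, smul_eq_mul, mul_sub, Finset.mul_sum]
  congr 1 <;> exact Finset.sum_congr rfl fun _ _ => by ring

lemma bil_comm (x y : Q.I → ℤ) : Q.bil x y = Q.bil y x := by
  simp only [bil, Fintype.sum_sum_type, mul_right_comm 2 (x _), mul_comm (x (Q.h _)),
    mul_comm (x (Q.t _))]
  rw [add_comm]

lemma bil_add_right (x y z : Q.I → ℤ) : Q.bil x (y + z) = Q.bil x y + Q.bil x z := by
  rw [bil_comm, bil_add_left, bil_comm y, bil_comm z]

lemma bil_smul_right (c : ℤ) (x z : Q.I → ℤ) : Q.bil x (c • z) = c * Q.bil x z := by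
  rw [bil_comm, bil_smul_left, bil_comm]

variable (Q) in
/-- The form `bil` as a bundled bilinear form, which gives access to the library's lemmas on
sums and differences. -/
def bilForm : LinearMap.BilinForm ℤ (Q.I → ℤ) :=
  LinearMap.mk₂ ℤ Q.bil bil_add_left bil_smul_left bil_add_right bil_smul_right

lemma bil_sub_left (x y z : Q.I → ℤ) : Q.bil (x - y) z = Q.bil x z - Q.bil y z :=
  Q.bilForm.map_sub₂ x y z

lemma bil_sub_right (x y z : Q.I → ℤ) : Q.bil x (y - z) = Q.bil x y - Q.bil x z :=
  (Q.bilForm x).map_sub y z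

lemma bil_sum_left {ι : Type*} (s : Finset ι) (f : ι → Q.I → ℤ) (z : Q.I → ℤ) :
    Q.bil (∑ j ∈ s, f j) z = ∑ j ∈ s, Q.bil (f j) z :=
  map_sum (Q.bilForm.flip z) f s

lemma bil_sum_right {ι : Type*} (s : Finset ι) (f : ι → Q.I → ℤ) (z : Q.I → ℤ) :
    Q.bil z (∑ j ∈ s, f j) = ∑ j ∈ s, Q.bil z (f j) :=
  map_sum (Q.bilForm z) f s

lemma bil_self (x : Q.I → ℤ) : Q.bil x x = 2 - 2 * Q.pp x := by
  have diag : ∑ i, 2 * x i * x i = 2 * ∑ i, x i * x i := by simp only [Finset.mul_sum, mul_assoc]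
  simp only [bil, pp, Fintype.sum_sum_type, diag, mul_comm (x (Q.h _))]
  ring

lemma pp_add (x y : Q.I → ℤ) : Q.pp (x + y) = Q.pp x + Q.pp y - 1 - Q.bil x y := by
  have h := bil_self (x + y)
  rw [bil_add_left, bil_add_right, bil_add_right, bil_comm y x, bil_self, bil_self] at h
  linarith

end BilinearForm

section CoordinateVectors

lemma ev_self (i : Q.I) : Q.ev i i = 1 := if_pos rfl

lemma ev_apply_of_ne {i j : Q.I} (h : j ≠ i) : Q.ev i j = 0 := if_neg h

lemma ev_nonneg (i : Q.I) : 0 ≤ Q.ev i := fun j => by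
  unfold ev
  split_ifs <;> simp

lemma ev_ne_zero (i : Q.I) : Q.ev i ≠ 0 := fun h => by
  simpa [ev_self] using congrFun h i

lemma eq_sum_smul_ev (x : Q.I → ℤ) : x = ∑ i, x i • Q.ev i := by
  funext j
  simp [Finset.sum_apply, ev]

lemma bil_eq_sum_left (x y : Q.I → ℤ) : Q.bil x y = ∑ i, x i * Q.bil (Q.ev i) y := by
  conv_lhs => rw [eq_sum_smul_ev x, bil_sum_left]
  simp only [bil_smul_left]

lemma bil_eq_sum_right (x y : Q.I → ℤ) : Q.bil x y = ∑ i, y i * Q.bil x (Q.ev i) := by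
  simp only [bil_comm x, bil_eq_sum_left y x]

lemma bil_ev_ev_of_ne {i j : Q.I} (h : i ≠ j) :
    Q.bil (Q.ev i) (Q.ev j) = -∑ a : Q.DA, Q.ev i (Q.dh a) * Q.ev j (Q.dt a) := by
  have diag : ∑ k, 2 * Q.ev i k * Q.ev j k = 0 := by simp [ev, h.symm]
  rw [bil, diag, zero_sub]

lemma bil_ev_ev_nonpos {i j : Q.I} (h : i ≠ j) : Q.bil (Q.ev i) (Q.ev j) ≤ 0 := by
  rw [bil_ev_ev_of_ne h, neg_nonpos]
  exact Finset.sum_nonneg fun a _ => mul_nonneg (ev_nonneg _ _) (ev_nonneg _ _)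

lemma adj_iff_bil_ne_zero {i j : Q.I} (h : i ≠ j) :
    Q.Adj i j ↔ Q.bil (Q.ev i) (Q.ev j) ≠ 0 := by
  have term_nonneg : ∀ a ∈ (Finset.univ : Finset Q.DA), 0 ≤ Q.ev i (Q.dh a) * Q.ev j (Q.dt a) :=
    fun a _ => mul_nonneg (ev_nonneg i _) (ev_nonneg j _)
  rw [bil_ev_ev_of_ne h, neg_ne_zero, Ne, Finset.sum_eq_zero_iff_of_nonneg term_nonneg]
  simp only [Adj, ev, Finset.mem_univ, forall_const, Sum.forall, mul_eq_zero, ite_eq_right_iff,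
    one_ne_zero, imp_false, not_and_or, not_forall, not_or, not_not, ← exists_or]
  exact exists_congr fun a => or_congr_right and_comm

lemma bil_ev_self (i : Q.I) :
    Q.bil (Q.ev i) (Q.ev i) = 2 - 2 * ∑ a : Q.A, Q.ev i (Q.t a) * Q.ev i (Q.h a) := by
  have diag : ∑ k, Q.ev i k * Q.ev i k = 1 := by simp [ev]
  rw [bil_self, pp, diag]
  ring

lemma bil_ev_self_of_loopfree {i : Q.I} (hi : Q.Loopfree i) : Q.bil (Q.ev i) (Q.ev i) = 2 := by
  rw [bil_ev_self, Finset.sum_eq_zero fun a _ => ?_]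
  · simp
  · by_cases ht : Q.t a = i
    · rw [ev_apply_of_ne fun hh => hi a ⟨hh, ht⟩, mul_zero]
    · rw [ev_apply_of_ne ht, zero_mul]

lemma bil_ev_self_le_two (i : Q.I) : Q.bil (Q.ev i) (Q.ev i) ≤ 2 := by
  rw [bil_ev_self, sub_le_self_iff]
  exact mul_nonneg zero_le_two
    (Finset.sum_nonneg fun a _ => mul_nonneg (ev_nonneg _ _) (ev_nonneg _ _))

lemma bil_ev_self_of_not_loopfree {i : Q.I} (hi : ¬ Q.Loopfree i) :
    Q.bil (Q.ev i) (Q.ev i) ≤ 0 := by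
  simp only [Loopfree, not_forall, not_not] at hi
  obtain ⟨a, hh, ht⟩ := hi
  have one_le : Q.ev i (Q.t a) * Q.ev i (Q.h a) ≤ ∑ a, Q.ev i (Q.t a) * Q.ev i (Q.h a) :=
    Finset.single_le_sum (f := fun a => Q.ev i (Q.t a) * Q.ev i (Q.h a))
      (fun a _ => mul_nonneg (ev_nonneg _ _) (ev_nonneg _ _)) (Finset.mem_univ a)
  rw [hh, ht, ev_self] at one_le
  rw [bil_ev_self]
  linarith

end CoordinateVectors

section Positivity

lemma bil_nonpos_of_nonneg {x y : Q.I → ℤ} (hy : 0 ≤ y)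
    (hx : ∀ i, y i ≠ 0 → Q.bil x (Q.ev i) ≤ 0) : Q.bil x y ≤ 0 := by
  rw [bil_eq_sum_right]
  refine Finset.sum_nonpos fun i _ => ?_
  by_cases h : y i = 0
  · simp [h]
  · exact mul_nonpos_of_nonneg_of_nonpos (hy i) (hx i h)

lemma bil_ev_le_mul {x : Q.I → ℤ} (hx : 0 ≤ x) (i : Q.I) :
    Q.bil x (Q.ev i) ≤ x i * Q.bil (Q.ev i) (Q.ev i) := by
  rw [bil_eq_sum_left, ← Finset.add_sum_erase _ _ (Finset.mem_univ i), add_le_iff_nonpos_right]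
  exact Finset.sum_nonpos fun k hk =>
    mul_nonpos_of_nonneg_of_nonpos (hx k) (bil_ev_ev_nonpos (Finset.ne_of_mem_erase hk))

lemma loopfree_of_bil_ev_pos {x : Q.I → ℤ} (hx : 0 ≤ x) {i : Q.I} (h : 0 < Q.bil x (Q.ev i)) :
    Q.Loopfree i := by
  by_contra hi
  exact absurd ((bil_ev_le_mul hx i).trans
    (mul_nonpos_of_nonneg_of_nonpos (hx i) (bil_ev_self_of_not_loopfree hi))) h.not_ge

lemma apply_pos_of_bil_ev_pos {x : Q.I → ℤ} (hx : 0 ≤ x) {i : Q.I}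
    (h : 0 < Q.bil x (Q.ev i)) : 0 < x i := by
  have := h.trans_le (bil_ev_le_mul hx i)
  rw [bil_ev_self_of_loopfree (loopfree_of_bil_ev_pos hx h)] at this
  linarith

lemma bil_nonpos_of_disjoint {x y : Q.I → ℤ} (hx : 0 ≤ x) (hy : 0 ≤ y)
    (h : ∀ i, x i = 0 ∨ y i = 0) : Q.bil x y ≤ 0 := by
  refine bil_nonpos_of_nonneg hy fun i hi => not_lt.1 fun hpos => ?_
  exact (apply_pos_of_bil_ev_pos hx hpos).ne' ((h i).resolve_right hi)

end Positivity

section Connectedness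

/-- `T` is a union of connected components of the support of `x`, up to vertices off that
support. -/
def Separates (x : Q.I → ℤ) (T : Set Q.I) : Prop :=
  ∀ i ∈ T, ∀ j ∉ T, x i ≠ 0 → x j ≠ 0 → Q.bil (Q.ev i) (Q.ev j) = 0

lemma Separates.compl {x : Q.I → ℤ} {T : Set Q.I} (h : Separates x T) : Separates x Tᶜ :=
  fun i hi j hj hxi hxj => bil_comm (Q.ev j) (Q.ev i) ▸ h j (not_not.1 hj) i hi hxj hxi

lemma SuppConnected.eq_zero_or_eq_zero {x : Q.I → ℤ} (hx : Q.SuppConnected x) {T : Set Q.I}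
    (hT : Separates x T) :
    (∀ i ∈ T, x i = 0) ∨ ∀ j ∉ T, x j = 0 := by
  by_contra! hc
  obtain ⟨⟨i, hi, hxi⟩, j, hj, hxj⟩ := hc
  have mem_of_reachable : ∀ k, Relation.ReflTransGen
      (fun a b => x a ≠ 0 ∧ x b ≠ 0 ∧ Q.Adj a b) i k → k ∈ T := by
    intro k hk
    induction hk with
    | refl => exact hi
    | @tail b c _ hbc hb =>
      obtain ⟨hxb, hxc, hadj⟩ := hbc
      by_contra hc
      have hbc : b ≠ c := fun h => hc (h ▸ hb)
      exact (adj_iff_bil_ne_zero hbc).1 hadj (hT b hb c hc hxb hxc)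
  exact hj (mem_of_reachable j (hx i j hxi hxj))

lemma suppConnected_of_forall_separates {x : Q.I → ℤ}
    (h : ∀ T : Set Q.I, Separates x T → (∀ i ∈ T, x i = 0) ∨ ∀ j ∉ T, x j = 0) :
    Q.SuppConnected x := by
  intro i j hxi hxj
  let component : Set Q.I :=
    {k | Relation.ReflTransGen (fun a b => x a ≠ 0 ∧ x b ≠ 0 ∧ Q.Adj a b) i k}
  have separated : Separates x component := by
    intro a ha b hb hxa hxb
    by_contra hab
    have hne : a ≠ b := fun h => hb (h ▸ ha)
    exact hb (ha.tail ⟨hxa, hxb, (adj_iff_bil_ne_zero hne).2 hab⟩)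
  rcases h component separated with h0 | h0
  · exact absurd (h0 i .refl) hxi
  · exact not_imp_comm.1 (h0 j) hxj

lemma suppConnected_ev (i : Q.I) : Q.SuppConnected (Q.ev i) := by
  have eq_i : ∀ {j}, Q.ev i j ≠ 0 → j = i := fun hj => not_imp_comm.1 ev_apply_of_ne hj
  intro j k hj hk
  rw [eq_i hj, eq_i hk]

end Connectedness

section Height

variable (Q) in
/-- The height `∑ i, x i` of a vector, the quantity on which all inductions run. -/
def ht : (Q.I → ℤ) →ₗ[ℤ] ℤ := ∑ i, LinearMap.proj i

lemma ht_apply (x : Q.I → ℤ) : Q.ht x = ∑ i, x i := by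
  simp [ht]

lemma ht_ev (i : Q.I) : Q.ht (Q.ev i) = 1 := by
  simp [ht_apply, ev]

lemma ht_nonneg {x : Q.I → ℤ} (hx : 0 ≤ x) : 0 ≤ Q.ht x :=
  ht_apply x ▸ Finset.sum_nonneg fun i _ => hx i

lemma ht_pos {x : Q.I → ℤ} (hx : 0 ≤ x) (h0 : x ≠ 0) : 0 < Q.ht x :=
  ht_apply x ▸ Fintype.sum_pos (hx.lt_of_ne h0.symm)

end Height

section Reflections

/-- The reflection `refl i` as a linear map. -/
def reflLinear (i : Q.I) : (Q.I → ℤ) →ₗ[ℤ] (Q.I → ℤ) :=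
  Module.preReflection (Q.ev i) (Q.bilForm.flip (Q.ev i))

lemma refl_sub (i : Q.I) (x y : Q.I → ℤ) : Q.refl i (x - y) = Q.refl i x - Q.refl i y :=
  map_sub (reflLinear i) x y

lemma refl_zero (i : Q.I) : Q.refl i 0 = 0 :=
  map_zero (reflLinear i)

lemma refl_sum {ι : Type*} (i : Q.I) (s : Finset ι) (f : ι → Q.I → ℤ) :
    Q.refl i (∑ j ∈ s, f j) = ∑ j ∈ s, Q.refl i (f j) :=
  map_sum (reflLinear i) f s

lemma refl_apply_of_ne {i j : Q.I} (h : j ≠ i) (x : Q.I → ℤ) : Q.refl i x j = x j := by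
  simp [refl, ev_apply_of_ne h]

lemma refl_apply_self (i : Q.I) (x : Q.I → ℤ) : Q.refl i x i = x i - Q.bil x (Q.ev i) := by
  simp [refl, ev_self]

lemma refl_of_bil_ev_eq_zero {i : Q.I} {x : Q.I → ℤ} (h : Q.bil x (Q.ev i) = 0) :
    Q.refl i x = x := by
  simp [refl, h]

lemma ht_refl (i : Q.I) (x : Q.I → ℤ) : Q.ht (Q.refl i x) = Q.ht x - Q.bil x (Q.ev i) := by
  rw [refl, map_sub, map_smul, ht_ev, smul_eq_mul, mul_one]

lemma bil_refl_left (i : Q.I) (x y : Q.I → ℤ) :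
    Q.bil (Q.refl i x) y = Q.bil x y - Q.bil x (Q.ev i) * Q.bil (Q.ev i) y := by
  rw [refl, bil_sub_left, bil_smul_left]

lemma bil_refl_ev {i : Q.I} (hi : Q.Loopfree i) (x : Q.I → ℤ) :
    Q.bil (Q.refl i x) (Q.ev i) = -Q.bil x (Q.ev i) := by
  rw [bil_refl_left, bil_ev_self_of_loopfree hi]
  ring

lemma bil_refl_refl {i : Q.I} (hi : Q.Loopfree i) (x y : Q.I → ℤ) :
    Q.bil (Q.refl i x) (Q.refl i y) = Q.bil x y := by
  rw [Q.bil_comm, Q.bil_refl_left, Q.bil_comm y, bil_comm (Q.ev i), bil_refl_ev hi, bil_refl_left,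
    bil_comm y (Q.ev i)]
  ring

lemma refl_refl {i : Q.I} (hi : Q.Loopfree i) (x : Q.I → ℤ) : Q.refl i (Q.refl i x) = x :=
  Module.involutive_preReflection (f := Q.bilForm.flip (Q.ev i)) (bil_ev_self_of_loopfree hi) x

lemma refl_ev {i : Q.I} (hi : Q.Loopfree i) : Q.refl i (Q.ev i) = -Q.ev i := by
  rw [refl, bil_ev_self_of_loopfree hi]
  module

lemma pp_refl {i : Q.I} (hi : Q.Loopfree i) (x : Q.I → ℤ) : Q.pp (Q.refl i x) = Q.pp x := by
  have h := bil_refl_refl hi x x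
  rw [bil_self, bil_self] at h
  linarith

end Reflections

/-! ### Positive roots -/

section PositiveRoots

variable (Q) in
/-- The vectors obtained from the simple roots and the fundamental region by reflections that
increase the height. They turn out to be exactly the positive roots
(`IsPosRoot.isAscendingRoot`), and inductions on positive roots run along this description. -/
inductive IsAscendingRoot : (Q.I → ℤ) → Prop
  | simple (i : Q.I) (hi : Q.Loopfree i) : IsAscendingRoot (Q.ev i)
  | fund (x : Q.I → ℤ) (hx : Q.InFund x) : IsAscendingRoot x
  | ascend (i : Q.I) (hi : Q.Loopfree i) (x : Q.I → ℤ) (hx : IsAscendingRoot x)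
      (h : Q.bil x (Q.ev i) < 0) : IsAscendingRoot (Q.refl i x)

lemma IsAscendingRoot.isRoot {x : Q.I → ℤ} (h : Q.IsAscendingRoot x) : Q.IsRoot x := by
  induction h with
  | simple i hi => exact .simple i hi
  | fund x hx => exact .fund x hx
  | ascend i hi x _ _ ih => exact .reflect i hi x ih

lemma IsAscendingRoot.nonneg {x : Q.I → ℤ} (h : Q.IsAscendingRoot x) : 0 ≤ x := by
  induction h with
  | simple i _ => exact ev_nonneg i
  | fund x hx => exact hx.2.1
  | ascend i _ x _ hlt ih =>
    intro j
    rcases eq_or_ne j i with rfl | hj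
    · rw [refl_apply_self]
      exact (ih j).trans (by linarith)
    · rw [refl_apply_of_ne hj]
      exact ih j

lemma IsAscendingRoot.ne_zero {x : Q.I → ℤ} (h : Q.IsAscendingRoot x) : x ≠ 0 := by
  induction h with
  | simple i _ => exact ev_ne_zero i
  | fund x hx => exact hx.1
  | ascend i hi x _ _ ih =>
    intro h0
    rw [← refl_refl hi x, h0, refl_zero] at ih
    exact ih rfl

lemma Separates.eq_zero_of_bil_ev_ne_zero {x y : Q.I → ℤ} {T : Set Q.I} (hT : Separates y T)
    {i : Q.I} (hxy : ∀ j ≠ i, y j = x j) (hi : y i ≠ 0) (hbil : Q.bil x (Q.ev i) ≠ 0)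
    (hxT : ∀ a ∈ T, x a = 0) : ∀ a ∈ T, y a = 0 := by
  intro a ha
  rcases eq_or_ne a i with rfl | hai
  · refine absurd ?_ hbil
    rw [bil_eq_sum_left]
    refine Finset.sum_eq_zero fun j _ => ?_
    by_cases hj : j ∈ T
    · rw [hxT j hj, zero_mul]
    · have hja : j ≠ a := fun h => hj (h ▸ ha)
      by_cases hxj : x j = 0
      · rw [hxj, zero_mul]
      · rw [bil_comm, hT a ha j hj hi (hxy j hja ▸ hxj), mul_zero]
  · rw [hxy a hai, hxT a ha]

lemma SuppConnected.of_bil_ev_ne_zero {x y : Q.I → ℤ} {i : Q.I} (hx : Q.SuppConnected x)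
    (hxy : ∀ j ≠ i, y j = x j) (hi : y i ≠ 0) (hbil : Q.bil x (Q.ev i) ≠ 0) :
    Q.SuppConnected y := by
  have support_subset : ∀ j, x j ≠ 0 → y j ≠ 0 := by
    intro j hj
    rcases eq_or_ne j i with rfl | hji
    · exact hi
    · rwa [hxy j hji]
  refine suppConnected_of_forall_separates fun T hT => ?_
  have hTx : Separates x T := fun a ha b hb hxa hxb =>
    hT a ha b hb (support_subset a hxa) (support_subset b hxb)
  exact (hx.eq_zero_or_eq_zero hTx).imp (hT.eq_zero_of_bil_ev_ne_zero hxy hi hbil)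
    (hT.compl.eq_zero_of_bil_ev_ne_zero hxy hi hbil)

lemma IsAscendingRoot.suppConnected {x : Q.I → ℤ} (h : Q.IsAscendingRoot x) :
    Q.SuppConnected x := by
  induction h with
  | simple i _ => exact suppConnected_ev i
  | fund x hx => exact hx.2.2.1
  | ascend i _ x hx hlt ih =>
    refine ih.of_bil_ev_ne_zero (fun j hj => refl_apply_of_ne hj x) ?_ hlt.ne
    have : 0 ≤ x i := hx.nonneg i
    rw [refl_apply_self]
    linarith

section RankTwo

variable {i j : Q.I}

lemma refl_comm (hij : Q.bil (Q.ev i) (Q.ev j) = 0) (x : Q.I → ℤ) :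
    Q.refl i (Q.refl j x) = Q.refl j (Q.refl i x) := by
  have hji : Q.bil (Q.ev j) (Q.ev i) = 0 := by rwa [bil_comm]
  simp only [refl, bil_sub_left, bil_smul_left, hij, hji]
  module

lemma refl_braid (hi : Q.Loopfree i) (hj : Q.Loopfree j)
    (hij : Q.bil (Q.ev i) (Q.ev j) = -1) (x : Q.I → ℤ) :
    Q.refl i (Q.refl j x) = Q.refl j (Q.refl i (Q.refl j (Q.refl i x))) := by
  have hji : Q.bil (Q.ev j) (Q.ev i) = -1 := by rwa [bil_comm]
  simp only [refl, bil_sub_left, bil_smul_left, hij, hji, bil_ev_self_of_loopfree hi,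
    bil_ev_self_of_loopfree hj]
  module

lemma bil_eq_add_of_support_pair (hij : i ≠ j) {x : Q.I → ℤ}
    (hx : ∀ k, k ≠ i → k ≠ j → x k = 0) (y : Q.I → ℤ) :
    Q.bil x y = x i * Q.bil (Q.ev i) y + x j * Q.bil (Q.ev j) y := by
  rw [bil_eq_sum_left]
  exact Fintype.sum_eq_add i j hij fun k hk => by rw [hx k hk.1 hk.2, zero_mul]

lemma bil_ev_add_bil_ev_nonpos (hi : Q.Loopfree i) (hj : Q.Loopfree j) (hij : i ≠ j)
    (hm : Q.bil (Q.ev i) (Q.ev j) ≤ -2) {x : Q.I → ℤ} (hx : 0 ≤ x)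
    (hsupp : ∀ k, k ≠ i → k ≠ j → x k = 0) :
    Q.bil x (Q.ev i) + Q.bil x (Q.ev j) ≤ 0 := by
  have hxi : 0 ≤ x i := hx i
  have hxj : 0 ≤ x j := hx j
  rw [bil_eq_add_of_support_pair hij hsupp, bil_eq_add_of_support_pair hij hsupp,
    bil_comm (Q.ev j) (Q.ev i), bil_ev_self_of_loopfree hi, bil_ev_self_of_loopfree hj]
  nlinarith

variable (Q) in
/-- Below height `N`, reflections other than the one at a simple root itself preserve
`IsAscendingRoot`. This is the inductive hypothesis in the proof of `IsAscendingRoot.refl`. -/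
def ReflStableBelow (N : ℤ) : Prop :=
  ∀ x, Q.IsAscendingRoot x → Q.ht x < N → ∀ i, Q.Loopfree i → x ≠ Q.ev i →
    Q.IsAscendingRoot (Q.refl i x)

lemma ReflStableBelow.support_subset_pair {N : ℤ} (hN : Q.ReflStableBelow N) {x : Q.I → ℤ}
    (hx : Q.IsAscendingRoot x) (hxN : Q.ht x < N) (hi : Q.Loopfree i) (hj : Q.Loopfree j)
    (hm : Q.bil (Q.ev i) (Q.ev j) ≤ -2) (hpos : 0 < Q.bil x (Q.ev i))
    (hsum : 0 < Q.bil x (Q.ev i) + Q.bil x (Q.ev j)) {k : Q.I} (hki : k ≠ i) (hkj : k ≠ j) :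
    x k = 0 := by
  induction hn : (Q.ht x).toNat using Nat.strong_induction_on generalizing x i j with
  | _ n ih =>
    subst hn
    rcases eq_or_ne x (Q.ev i) with rfl | hxi
    · exact ev_apply_of_ne hki
    · have hht : Q.ht (Q.refl i x) < Q.ht x := by rw [ht_refl]; linarith
      have hxpos : 0 < Q.ht x := ht_pos hx.nonneg hx.ne_zero
      have hbil_i : Q.bil (Q.refl i x) (Q.ev i) = -Q.bil x (Q.ev i) := bil_refl_ev hi x
      have hbil_j := bil_refl_left i x (Q.ev j)
      rw [← refl_apply_of_ne hki x]
      exact ih _ (by omega) (hN x hx hxN i hi hxi) (hht.trans hxN) hj hi (by rwa [bil_comm])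
        (by nlinarith) (by nlinarith) hkj hki rfl



lemma ReflStableBelow.refl_refl_of_bil_eq_zero {N : ℤ} (hN : Q.ReflStableBelow N) {x : Q.I → ℤ}
    (hx : Q.IsAscendingRoot x) (hxN : Q.ht x < N) (hi : Q.Loopfree i) (hj : Q.Loopfree j)
    (hij : Q.bil (Q.ev i) (Q.ev j) = 0) (hxj : Q.bil x (Q.ev j) < 0) :
    Q.IsAscendingRoot (Q.refl i (Q.refl j x)) := by
  have hxi : x ≠ Q.ev i := fun h => by rw [h, hij] at hxj; exact lt_irrefl 0 hxj
  rw [refl_comm hij]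
  refine .ascend j hj _ (hN x hx hxN i hi hxi) ?_
  rwa [bil_refl_left, hij, mul_zero, sub_zero]

lemma ReflStableBelow.refl_refl_of_bil_eq_neg_one {N : ℤ} (hN : Q.ReflStableBelow N)
    {x : Q.I → ℤ} (hx : Q.IsAscendingRoot x) (hxN : Q.ht x < N) (hi : Q.Loopfree i)
    (hj : Q.Loopfree j) (hij : Q.bil (Q.ev i) (Q.ev j) = -1) (hxj : Q.bil x (Q.ev j) < 0)
    (hpos : 0 < Q.bil (Q.refl j x) (Q.ev i)) :
    Q.IsAscendingRoot (Q.refl i (Q.refl j x)) := by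
  have hji : Q.bil (Q.ev j) (Q.ev i) = -1 := by rwa [bil_comm]
  have hsum : 0 < Q.bil x (Q.ev i) + Q.bil x (Q.ev j) := by
    rw [bil_refl_left, hji] at hpos
    linarith
  rcases eq_or_ne x (Q.ev i) with rfl | hxi
  · have : Q.refl i (Q.refl j (Q.ev i)) = Q.ev j := by
      simp only [refl, bil_sub_left, bil_smul_left, hij, hji, bil_ev_self_of_loopfree hi]
      module
    exact this ▸ .simple j hj
  · have hi_i := bil_refl_ev hi x
    have hi_j := bil_refl_left i x (Q.ev j)
    rw [hij] at hi_j
    have hix : Q.IsAscendingRoot (Q.refl i x) := hN x hx hxN i hi hxi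
    have hix_ne : Q.refl i x ≠ Q.ev j := fun h => by rw [h, hji] at hi_i; linarith
    have hjix := hN _ hix (by rw [ht_refl]; linarith) j hj hix_ne
    have hji_i := bil_refl_left j (Q.refl i x) (Q.ev i)
    have hji_j := bil_refl_ev hj (Q.refl i x)
    rw [hji] at hji_i
    rw [refl_braid hi hj hij]
    refine .ascend j hj _ (.ascend i hi _ hjix (by linarith)) ?_
    rw [bil_refl_left, hij]
    linarith

lemma ReflStableBelow.neg_one_le_bil_ev_ev {N : ℤ} (hN : Q.ReflStableBelow N) {x : Q.I → ℤ}
    (hx : Q.IsAscendingRoot x) (hxN : Q.ht x < N) (hi : Q.Loopfree i) (hj : Q.Loopfree j)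
    (hij : i ≠ j) (hxj : Q.bil x (Q.ev j) < 0) (hpos : 0 < Q.bil (Q.refl j x) (Q.ev i)) :
    -1 ≤ Q.bil (Q.ev i) (Q.ev j) := by
  by_contra! hm
  have hm : Q.bil (Q.ev i) (Q.ev j) ≤ -2 := by omega
  have hbil_i := bil_refl_left j x (Q.ev i)
  rw [bil_comm (Q.ev j)] at hbil_i
  have hsupp : ∀ k, k ≠ i → k ≠ j → Q.refl j x k = 0 := by
    intro k hki hkj
    rw [refl_apply_of_ne hkj]
    exact hN.support_subset_pair hx hxN hi hj hm (by nlinarith) (by nlinarith) hki hkj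
  have hle := bil_ev_add_bil_ev_nonpos hi hj hij hm
    (IsAscendingRoot.ascend j hj x hx hxj).nonneg hsupp
  rw [bil_refl_ev hj] at hle
  linarith

end RankTwo

lemma reflStableBelow (N : ℕ) : Q.ReflStableBelow N := by
  induction N with
  | zero => exact fun x hx hlt => absurd (ht_nonneg hx.nonneg) (not_le.2 hlt)
  | succ N hN =>
    intro x hx hxN i hi hne
    rcases lt_trichotomy (Q.bil x (Q.ev i)) 0 with hlt | heq | hpos
    · exact .ascend i hi x hx hlt
    · rwa [refl_of_bil_ev_eq_zero heq]
    cases hx with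
    | simple j _ => exact absurd (bil_ev_ev_nonpos fun h : j = i => hne (h ▸ rfl)) hpos.not_ge
    | fund _ hx => exact absurd (hx.2.2.2 i) hpos.not_ge
    | ascend j hj y hy hyj =>
      have hyN : Q.ht y < N := by
        rw [ht_refl] at hxN
        push_cast at hxN
        linarith
      rcases eq_or_ne i j with rfl | hij
      · rwa [refl_refl hi]
      -- `s_j y` descends along `j` and along `i`; the value of `(ε_i, ε_j)` decides how the two
      -- descents meet again.
      have hge := hN.neg_one_le_bil_ev_ev hy hyN hi hj hij hyj hpos
      have hle := bil_ev_ev_nonpos hij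
      rcases (by omega : Q.bil (Q.ev i) (Q.ev j) = 0 ∨ Q.bil (Q.ev i) (Q.ev j) = -1) with h | h
      · exact hN.refl_refl_of_bil_eq_zero hy hyN hi hj h hyj
      · exact hN.refl_refl_of_bil_eq_neg_one hy hyN hi hj h hyj hpos

lemma IsAscendingRoot.refl {x : Q.I → ℤ} (hx : Q.IsAscendingRoot x) {i : Q.I}
    (hi : Q.Loopfree i) (hne : x ≠ Q.ev i) : Q.IsAscendingRoot (Q.refl i x) :=
  reflStableBelow ((Q.ht x).toNat + 1) x hx (by omega) i hi hne

lemma refl_neg (i : Q.I) (x : Q.I → ℤ) : Q.refl i (-x) = -Q.refl i x :=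
  map_neg (reflLinear i) x

lemma IsAscendingRoot.refl_or_neg {x : Q.I → ℤ} (hx : Q.IsAscendingRoot x) {i : Q.I}
    (hi : Q.Loopfree i) : Q.IsAscendingRoot (Q.refl i x) ∨ Q.IsAscendingRoot (-Q.refl i x) := by
  rcases eq_or_ne x (Q.ev i) with rfl | hne
  · exact .inr (by rw [refl_ev hi, neg_neg]; exact .simple i hi)
  · exact .inl (hx.refl hi hne)

lemma IsRoot.isAscendingRoot_or_neg {x : Q.I → ℤ} (h : Q.IsRoot x) :
    Q.IsAscendingRoot x ∨ Q.IsAscendingRoot (-x) := by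
  induction h with
  | simple i hi => exact .inl (.simple i hi)
  | fund x hx => exact .inl (.fund x hx)
  | neg_fund x hx => exact .inr (by rw [neg_neg]; exact .fund x hx)
  | reflect i hi x _ ih =>
    rcases ih with hx | hx
    · exact hx.refl_or_neg hi
    · simpa only [refl_neg, neg_neg, or_comm] using hx.refl_or_neg hi

lemma IsPosRoot.isAscendingRoot {x : Q.I → ℤ} (h : Q.IsPosRoot x) : Q.IsAscendingRoot x := by
  refine h.1.isAscendingRoot_or_neg.resolve_right fun hneg => h.2.2 ?_
  exact le_antisymm (neg_nonneg.1 hneg.nonneg) h.2.1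

lemma IsAscendingRoot.isPosRoot {x : Q.I → ℤ} (h : Q.IsAscendingRoot x) : Q.IsPosRoot x :=
  ⟨h.isRoot, h.nonneg, h.ne_zero⟩

lemma IsPosRoot.nonneg {x : Q.I → ℤ} (h : Q.IsPosRoot x) : 0 ≤ x := h.2.1

lemma IsPosRoot.suppConnected {x : Q.I → ℤ} (h : Q.IsPosRoot x) : Q.SuppConnected x :=
  h.isAscendingRoot.suppConnected

lemma IsPosRoot.refl {x : Q.I → ℤ} (h : Q.IsPosRoot x) {i : Q.I} (hi : Q.Loopfree i)
    (hne : x ≠ Q.ev i) : Q.IsPosRoot (Q.refl i x) :=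
  (h.isAscendingRoot.refl hi hne).isPosRoot

lemma isPosRoot_ev {i : Q.I} (hi : Q.Loopfree i) : Q.IsPosRoot (Q.ev i) :=
  (IsAscendingRoot.simple i hi).isPosRoot

lemma InFund.isPosRoot {x : Q.I → ℤ} (h : Q.InFund x) : Q.IsPosRoot x :=
  (IsAscendingRoot.fund x h).isPosRoot

lemma InFund.bil_self_nonpos {x : Q.I → ℤ} (h : Q.InFund x) : Q.bil x x ≤ 0 :=
  bil_nonpos_of_nonneg h.2.1 fun i _ => h.2.2.2 i

lemma IsPosRoot.bil_self_eq_two_or_nonpos {x : Q.I → ℤ} (h : Q.IsPosRoot x) :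
    Q.bil x x = 2 ∨ Q.bil x x ≤ 0 := by
  induction h.isAscendingRoot with
  | simple i hi => exact .inl (bil_ev_self_of_loopfree hi)
  | fund x hx => exact .inr hx.bil_self_nonpos
  | ascend i hi x hx _ ih => rw [bil_refl_refl hi]; exact ih hx.isPosRoot

lemma IsPosRoot.pp_nonneg {x : Q.I → ℤ} (h : Q.IsPosRoot x) : 0 ≤ Q.pp x := by
  have := bil_self x
  rcases h.bil_self_eq_two_or_nonpos with h | h <;> linarith

end PositiveRoots

/-! ### The set `Σ_λ` -/

section Pairing

variable {K : Type} [Field K]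

/-- The pairing `x ↦ λ·x` as a homomorphism of additive groups. -/
def pairHom (l : Q.I → K) : (Q.I → ℤ) →+ K where
  toFun := Q.pair K l
  map_zero' := by simp [pair]
  map_add' x y := by simp [pair, mul_add, Finset.sum_add_distrib]

lemma pair_add (l : Q.I → K) (x y : Q.I → ℤ) :
    Q.pair K l (x + y) = Q.pair K l x + Q.pair K l y :=
  map_add (pairHom l) x y

lemma pair_sub (l : Q.I → K) (x y : Q.I → ℤ) :
    Q.pair K l (x - y) = Q.pair K l x - Q.pair K l y :=
  map_sub (pairHom l) x y

lemma pair_sum {ι : Type*} (l : Q.I → K) (s : Finset ι) (f : ι → Q.I → ℤ) :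
    Q.pair K l (∑ j ∈ s, f j) = ∑ j ∈ s, Q.pair K l (f j) :=
  map_sum (pairHom l) f s

lemma pair_smul (l : Q.I → K) (c : ℤ) (x : Q.I → ℤ) :
    Q.pair K l (c • x) = c * Q.pair K l x :=
  (map_zsmul (pairHom l) c x).trans (zsmul_eq_mul _ _)

lemma pair_ev (l : Q.I → K) (i : Q.I) : Q.pair K l (Q.ev i) = l i := by
  simp [pair, ev]

lemma pair_refl (l : Q.I → K) (i : Q.I) (x : Q.I → ℤ) :
    Q.pair K l (Q.refl i x) = Q.pair K l x - Q.bil x (Q.ev i) * l i := by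
  rw [refl, pair_sub, pair_smul, pair_ev]

lemma pair_coRefl (l : Q.I → K) (i : Q.I) (x : Q.I → ℤ) :
    Q.pair K (Q.coRefl K i l) x = Q.pair K l x - Q.bil x (Q.ev i) * l i := by
  simp only [bil_eq_sum_left x, pair, coRefl, sub_mul, Finset.sum_sub_distrib, Int.cast_sum,
    Int.cast_mul, Finset.sum_mul, bil_comm (Q.ev i)]
  congr 1
  exact Finset.sum_congr rfl fun j _ => by ring

lemma coRefl_self {i : Q.I} (hi : Q.Loopfree i) (l : Q.I → K) : Q.coRefl K i l i = -l i := by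
  rw [coRefl, bil_ev_self_of_loopfree hi]
  push_cast
  ring

lemma coRefl_self_ne_zero {i : Q.I} (hi : Q.Loopfree i) {l : Q.I → K} (hl : l i ≠ 0) :
    Q.coRefl K i l i ≠ 0 := by
  rw [coRefl_self hi]
  exact neg_ne_zero.2 hl

lemma pair_coRefl_refl {i : Q.I} (hi : Q.Loopfree i) (l : Q.I → K) (x : Q.I → ℤ) :
    Q.pair K (Q.coRefl K i l) (Q.refl i x) = Q.pair K l x := by
  rw [pair_refl, pair_coRefl, coRefl_self hi]
  ring

lemma coRefl_coRefl {i : Q.I} (hi : Q.Loopfree i) (l : Q.I → K) :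
    Q.coRefl K i (Q.coRefl K i l) = l := by
  funext j
  change Q.coRefl K i l j - Q.bil (Q.ev i) (Q.ev j) * Q.coRefl K i l i = l j
  rw [coRefl_self hi, coRefl]
  ring

end Pairing

section AdmissibleReflections

variable {K : Type} [Field K] {l : Q.I → K} {i : Q.I}

lemma refl_mem_rplus (hi : Q.Loopfree i) (hl : l i ≠ 0) {x : Q.I → ℤ} (hx : x ∈ Q.Rplus K l) :
    Q.refl i x ∈ Q.Rplus K (Q.coRefl K i l) := by
  refine ⟨hx.1.refl hi ?_, (pair_coRefl_refl hi l x).trans hx.2⟩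
  rintro rfl
  exact hl ((pair_ev l i).symm.trans hx.2)

lemma refl_mem_rplus_of_coRefl (hi : Q.Loopfree i) (hl : l i ≠ 0) {x : Q.I → ℤ}
    (hx : x ∈ Q.Rplus K (Q.coRefl K i l)) : Q.refl i x ∈ Q.Rplus K l := by
  simpa only [coRefl_coRefl hi] using refl_mem_rplus hi (coRefl_self_ne_zero hi hl) hx

lemma refl_mem_sigmaSet (hi : Q.Loopfree i) (hl : l i ≠ 0) {x : Q.I → ℤ}
    (hx : x ∈ Q.SigmaSet K l) : Q.refl i x ∈ Q.SigmaSet K (Q.coRefl K i l) := by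
  refine ⟨refl_mem_rplus hi hl hx.1, fun n β hn hβ hsum => ?_⟩
  have := hx.2 n (fun j => Q.refl i (β j)) hn (fun j => refl_mem_rplus_of_coRefl hi hl (hβ j))
    (by rw [← refl_sum, ← hsum, refl_refl hi])
  simpa only [pp_refl hi] using this

lemma refl_mem_sigmaSet_of_coRefl (hi : Q.Loopfree i) (hl : l i ≠ 0) {x : Q.I → ℤ}
    (hx : x ∈ Q.SigmaSet K (Q.coRefl K i l)) : Q.refl i x ∈ Q.SigmaSet K l := by
  simpa only [coRefl_coRefl hi] using refl_mem_sigmaSet hi (coRefl_self_ne_zero hi hl) hx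

lemma refl_mem_nrplus (hi : Q.Loopfree i) (hl : l i ≠ 0) {x : Q.I → ℤ} (hx : x ∈ Q.NRplus K l) :
    Q.refl i x ∈ Q.NRplus K (Q.coRefl K i l) := by
  have hle : AddSubmonoid.closure (Q.Rplus K l) ≤
      (AddSubmonoid.closure (Q.Rplus K (Q.coRefl K i l))).comap
        (reflLinear i : (Q.I → ℤ) →ₗ[ℤ] _) :=
    AddSubmonoid.closure_le.2 fun _ hy => AddSubmonoid.subset_closure (refl_mem_rplus hi hl hy)
  exact hle hx

end AdmissibleReflections

section SigmaSet

variable {K : Type} [Field K] {l : Q.I → K}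

lemma sum_mem_nrplus {ι : Type*} {J : Finset ι} {β : ι → Q.I → ℤ}
    (h : ∀ j ∈ J, β j ∈ Q.Rplus K l) : ∑ j ∈ J, β j ∈ Q.NRplus K l :=
  AddSubmonoid.sum_mem _ fun j hj => AddSubmonoid.subset_closure (h j hj)

lemma nonneg_of_mem_nrplus {x : Q.I → ℤ} (hx : x ∈ Q.NRplus K l) : 0 ≤ x :=
  (AddSubmonoid.closure_le (S := AddSubmonoid.nonneg (Q.I → ℤ))).2 (fun _ hy => hy.1.nonneg) hx

lemma pair_eq_zero_of_mem_nrplus {x : Q.I → ℤ} (hx : x ∈ Q.NRplus K l) : Q.pair K l x = 0 :=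
  (AddSubmonoid.closure_le (S := AddMonoidHom.mker (pairHom l))).2 (fun _ hy => hy.2) hx

lemma ht_pos_of_mem_rplus {x : Q.I → ℤ} (hx : x ∈ Q.Rplus K l) : 0 < Q.ht x :=
  ht_pos hx.1.nonneg hx.1.2.2

lemma card_le_ht_sum {ι : Type*} {J : Finset ι} {β : ι → Q.I → ℤ}
    (h : ∀ j ∈ J, β j ∈ Q.Rplus K l) : (J.card : ℤ) ≤ Q.ht (∑ j ∈ J, β j) := by
  rw [map_sum, Finset.cast_card]
  exact Finset.sum_le_sum fun j hj => ht_pos_of_mem_rplus (h j hj)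

lemma ev_mem_rplus {i : Q.I} (hi : Q.Loopfree i) (hl : l i = 0) : Q.ev i ∈ Q.Rplus K l :=
  ⟨isPosRoot_ev hi, (pair_ev l i).trans hl⟩

lemma ev_mem_sigmaSet {i : Q.I} (hi : Q.Loopfree i) (hl : l i = 0) :
    Q.ev i ∈ Q.SigmaSet K l := by
  refine ⟨ev_mem_rplus hi hl, fun n β hn hβ hsum => ?_⟩
  have hcard := card_le_ht_sum (J := Finset.univ) fun j _ => hβ j
  rw [← hsum, ht_ev, Finset.card_univ, Fintype.card_fin] at hcard
  omega

lemma pp_add_pp_lt_of_mem_sigmaSet {x y z : Q.I → ℤ} (hx : x ∈ Q.SigmaSet K l)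
    (hy : y ∈ Q.Rplus K l) (hz : z ∈ Q.Rplus K l) (hsum : x = y + z) :
    Q.pp y + Q.pp z < Q.pp x := by
  simpa using hx.2 2 ![y, z] le_rfl (by simp [Fin.forall_fin_two, hy, hz]) (by simpa using hsum)

lemma bil_ev_nonpos_of_mem_sigmaSet {x : Q.I → ℤ} (hx : x ∈ Q.SigmaSet K l) {i : Q.I}
    (hi : Q.Loopfree i) (hl : l i = 0) (hne : x ≠ Q.ev i) : Q.bil x (Q.ev i) ≤ 0 := by
  by_contra! hpos
  obtain ⟨k, hk⟩ := Int.eq_ofNat_of_zero_le hpos.le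
  have hrefl : Q.refl i x ∈ Q.Rplus K l :=
    ⟨hx.1.1.refl hi hne, by rw [pair_refl, hl, hx.1.2, mul_zero, sub_zero]⟩
  -- `x = s_i x + k ε_i` contradicts `p(s_i x) = p(x)` and `p(ε_i) = 0`.
  have hlt := hx.2 (k + 1) (Fin.cons (Q.refl i x) fun _ => Q.ev i) (by omega)
    (Fin.forall_fin_succ.2 ⟨hrefl, fun _ => ev_mem_rplus hi hl⟩)
    (by simp [Fin.sum_univ_succ, refl, hk])
  have hpp : 0 ≤ Q.pp (Q.ev i) := (isPosRoot_ev hi).pp_nonneg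
  simp only [Fin.sum_univ_succ, Fin.cons_zero, Fin.cons_succ, pp_refl hi, Finset.sum_const] at hlt
  linarith [nsmul_nonneg hpp (Finset.univ : Finset (Fin k)).card]

theorem bil_nonpos_of_mem_sigmaSet {x y : Q.I → ℤ} (hx : x ∈ Q.SigmaSet K l)
    (hy : y ∈ Q.SigmaSet K l) (hne : x ≠ y) : Q.bil x y ≤ 0 := by
  induction h : (Q.ht x).toNat using Nat.strong_induction_on generalizing l x y with
  | _ n ih =>
    subst h
    by_cases! hdom : ∀ i, Q.bil x (Q.ev i) ≤ 0
    · exact bil_nonpos_of_nonneg hy.1.1.nonneg fun i _ => hdom i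
    obtain ⟨i, hpos⟩ := hdom
    have hi := loopfree_of_bil_ev_pos hx.1.1.nonneg hpos
    by_cases hl : l i = 0
    · have hxi : x = Q.ev i := by
        by_contra hxi
        exact hpos.not_ge (bil_ev_nonpos_of_mem_sigmaSet hx hi hl hxi)
      rw [hxi, bil_comm]
      exact bil_ev_nonpos_of_mem_sigmaSet hy hi hl fun hyi => hne (hxi.trans hyi.symm)
    · rw [← bil_refl_refl hi]
      refine ih _ ?_ (refl_mem_sigmaSet hi hl hx) (refl_mem_sigmaSet hi hl hy)
        (fun heq => hne ?_) rfl
      · have := ht_pos_of_mem_rplus hx.1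
        rw [ht_refl]
        omega
      · rw [← refl_refl hi x, heq, refl_refl hi]

/-! ### Decompositions into elements of `Σ_λ` -/

theorem exists_sigma_decomposition_of_mem_rplus {x : Q.I → ℤ} (hx : x ∈ Q.Rplus K l) :
    ∃ (ι : Type) (_ : Fintype ι) (σ : ι → Q.I → ℤ),
      (∀ t, σ t ∈ Q.SigmaSet K l) ∧ ∑ t, σ t = x ∧ Q.pp x ≤ ∑ t, Q.pp (σ t) := by
  induction h : (Q.ht x).toNat using Nat.strong_induction_on generalizing x with
  | _ n ih =>
    subst h
    by_cases! hS : ∀ (n : ℕ) (β : Fin n → Q.I → ℤ), 2 ≤ n → (∀ j, β j ∈ Q.Rplus K l) →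
        x = ∑ j, β j → ∑ j, Q.pp (β j) < Q.pp x
    · exact ⟨Unit, inferInstance, fun _ => x, fun _ => ⟨hx, hS⟩, by simp, by simp⟩
    obtain ⟨n, β, hn, hβ, hsum, hpp⟩ := hS
    have hlt : ∀ j, (Q.ht (β j)).toNat < (Q.ht x).toNat := by
      intro j
      have hrest := card_le_ht_sum (J := Finset.univ.erase j) fun k _ => hβ k
      rw [Finset.card_erase_of_mem (Finset.mem_univ j), Finset.card_univ, Fintype.card_fin] at hrest
      have hsplit : Q.ht x = Q.ht (β j) + Q.ht (∑ k ∈ Finset.univ.erase j, β k) := by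
        rw [hsum, ← map_add, Finset.add_sum_erase _ _ (Finset.mem_univ j)]
      have := ht_pos_of_mem_rplus (hβ j)
      omega
    choose κ fκ σ hσ hσsum hσpp using fun j => ih _ (hlt j) (hβ j) rfl
    refine ⟨Σ j, κ j, inferInstance, fun t => σ t.1 t.2, fun t => hσ t.1 t.2, ?_, ?_⟩
    · simp only [Fintype.sum_sigma, hσsum, hsum]
    · rw [Fintype.sum_sigma]
      exact hpp.trans (Finset.sum_le_sum fun j _ => hσpp j)

lemma exists_sigma_decomposition {x : Q.I → ℤ} (hx : x ∈ Q.NRplus K l) :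
    ∃ (ι : Type) (_ : Fintype ι) (σ : ι → Q.I → ℤ),
      (∀ t, σ t ∈ Q.SigmaSet K l) ∧ ∑ t, σ t = x := by
  unfold NRplus at hx
  induction hx using AddSubmonoid.closure_induction with
  | mem x hx =>
    obtain ⟨ι, hι, σ, hσ, hsum, -⟩ := exists_sigma_decomposition_of_mem_rplus hx
    exact ⟨ι, hι, σ, hσ, hsum⟩
  | zero => exact ⟨Empty, inferInstance, Empty.rec, fun t => t.elim, by simp⟩
  | add x y _ _ hx hy =>
    obtain ⟨ι, hι, σ, hσ, rfl⟩ := hx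
    obtain ⟨κ, hκ, ρ, hρ, rfl⟩ := hy
    exact ⟨ι ⊕ κ, inferInstance, Sum.elim σ ρ, Sum.forall.2 ⟨hσ, hρ⟩, by simp⟩

/-- Some element of `Σ_λ` is a partial sum of every decomposition of `α` into elements of `Σ_λ`. -/
def HasCommonSubsum (l : Q.I → K) (α : Q.I → ℤ) : Prop :=
  ∃ τ ∈ Q.SigmaSet K l, ∀ (ι : Type) (J : Finset ι) (β : ι → Q.I → ℤ),
    (∀ j ∈ J, β j ∈ Q.SigmaSet K l) → ∑ j ∈ J, β j = α → ∃ C ⊆ J, ∑ j ∈ C, β j = τ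

lemma HasCommonSubsum.of_refl {i : Q.I} (hi : Q.Loopfree i) (hl : l i ≠ 0) {α : Q.I → ℤ}
    (h : HasCommonSubsum (Q.coRefl K i l) (Q.refl i α)) : HasCommonSubsum l α := by
  obtain ⟨τ, hτ, hsub⟩ := h
  refine ⟨Q.refl i τ, refl_mem_sigmaSet_of_coRefl hi hl hτ, fun ι J β hβ hsum => ?_⟩
  obtain ⟨C, hCJ, hC⟩ := hsub ι J (fun j => Q.refl i (β j))
    (fun j hj => refl_mem_sigmaSet hi hl (hβ j hj)) (by rw [← refl_sum, hsum])
  exact ⟨C, hCJ, by rw [← hC, ← refl_sum, refl_refl hi]⟩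

lemma hasCommonSubsum_of_bil_ev_pos {i : Q.I} (hi : Q.Loopfree i) (hl : l i = 0) {α : Q.I → ℤ}
    (h : 0 < Q.bil α (Q.ev i)) : HasCommonSubsum l α := by
  refine ⟨Q.ev i, ev_mem_sigmaSet hi hl, fun ι J β hβ hsum => ?_⟩
  obtain ⟨j, hj, hpos⟩ : ∃ j ∈ J, 0 < Q.bil (β j) (Q.ev i) := by
    by_contra! hle
    rw [← hsum, bil_sum_left] at h
    exact h.not_ge (Finset.sum_nonpos hle)
  refine ⟨{j}, Finset.singleton_subset_iff.2 hj, (Finset.sum_singleton β j).trans ?_⟩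
  by_contra hne
  exact hpos.not_ge (bil_ev_nonpos_of_mem_sigmaSet (hβ j hj) hi hl hne)

/-- `σ` is a decomposition of `α` into elements of `Σ_λ` which every other such decomposition
refines; a decomposition `β` refines it through a map sending each index of `β` to its block. -/
def IsCoarsestDecomposition (l : Q.I → K) (α : Q.I → ℤ) {r : ℕ} (σ : Fin r → Q.I → ℤ) : Prop :=
  (∀ t, σ t ∈ Q.SigmaSet K l) ∧ α = ∑ t, σ t ∧
    ∀ (ι : Type) [Fintype ι] (β : ι → Q.I → ℤ), (∀ j, β j ∈ Q.SigmaSet K l) → α = ∑ j, β j →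
      ∃ P : ι → Fin r, ∀ t, σ t = ∑ j with P j = t, β j

lemma isCoarsestDecomposition_zero : IsCoarsestDecomposition l (0 : Q.I → ℤ) Fin.elim0 := by
  refine ⟨fun t => t.elim0, by simp, fun ι _ β hβ hsum => ?_⟩
  have hcard := card_le_ht_sum (J := Finset.univ) fun j _ => (hβ j).1
  rw [← hsum, map_zero] at hcard
  have : IsEmpty ι := by
    rw [← Fintype.card_eq_zero_iff, ← Finset.card_univ]
    omega
  exact ⟨isEmptyElim, fun t => t.elim0⟩

lemma IsCoarsestDecomposition.cons {τ α : Q.I → ℤ} {r : ℕ} {σ : Fin r → Q.I → ℤ}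
    (hτ : τ ∈ Q.SigmaSet K l)
    (hsub : ∀ (ι : Type) (J : Finset ι) (β : ι → Q.I → ℤ), (∀ j ∈ J, β j ∈ Q.SigmaSet K l) →
      ∑ j ∈ J, β j = α → ∃ C ⊆ J, ∑ j ∈ C, β j = τ)
    (hσ : IsCoarsestDecomposition l (α - τ) σ) :
    IsCoarsestDecomposition l α (Fin.cons τ σ : Fin (r + 1) → Q.I → ℤ) := by
  classical
  obtain ⟨hσmem, hσsum, hσref⟩ := hσ
  refine ⟨Fin.forall_fin_succ.2 ⟨hτ, hσmem⟩, by simp [Fin.sum_univ_succ, ← hσsum],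
    fun ι _ β hβ hsum => ?_⟩
  obtain ⟨C, -, hC⟩ := hsub ι Finset.univ β (fun j _ => hβ j) hsum.symm
  have hrest : α - τ = ∑ j : {j // j ∉ C}, β j := by
    rw [← Finset.sum_subtype Cᶜ (fun _ => Finset.mem_compl) β, hsum, ← hC,
      ← Finset.sum_add_sum_compl C, add_sub_cancel_left]
  obtain ⟨P, hP⟩ := hσref {j // j ∉ C} (fun j => β j) (fun j => hβ j) hrest
  refine ⟨fun j => if h : j ∈ C then 0 else (P ⟨j, h⟩).succ, Fin.forall_fin_succ.2 ⟨?_, ?_⟩⟩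
  · rw [Fin.cons_zero, ← hC]
    refine Finset.sum_congr (Finset.ext fun j => ?_) fun _ _ => rfl
    by_cases hj : j ∈ C <;> simp [hj]
  · intro t
    rw [Fin.cons_succ, hP t]
    refine Finset.sum_bij (fun j _ => j.1) ?_ (fun _ _ _ _ => Subtype.ext) ?_ fun _ _ => rfl
    · rintro ⟨j, hj⟩ hjt
      simpa [hj] using hjt
    · intro j hjt
      by_cases hj : j ∈ C
      · simp [hj, (Fin.succ_ne_zero t).symm] at hjt
      · exact ⟨⟨j, hj⟩, by simpa [hj] using hjt, rfl⟩

theorem exists_isCoarsestDecomposition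
    (h : ∀ α ∈ Q.NRplus K l, α ≠ 0 → HasCommonSubsum l α) {α : Q.I → ℤ} (hα : α ∈ Q.NRplus K l) :
    ∃ (r : ℕ) (σ : Fin r → Q.I → ℤ), IsCoarsestDecomposition l α σ := by
  induction hn : (Q.ht α).toNat using Nat.strong_induction_on generalizing α with
  | _ n ih =>
    subst hn
    by_cases h0 : α = 0
    · exact ⟨0, Fin.elim0, h0 ▸ isCoarsestDecomposition_zero⟩
    obtain ⟨τ, hτ, hsub⟩ := h α hα h0
    have hrest : α - τ ∈ Q.NRplus K l := by
      classical
      obtain ⟨ι, _, β, hβ, hsum⟩ := exists_sigma_decomposition hα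
      obtain ⟨C, -, hC⟩ := hsub ι Finset.univ β (fun j _ => hβ j) hsum
      rw [← hsum, ← hC, ← Finset.sum_add_sum_compl C, add_sub_cancel_left]
      exact sum_mem_nrplus fun j _ => (hβ j).1
    have hlt : (Q.ht (α - τ)).toNat < (Q.ht α).toNat := by
      have := ht_pos_of_mem_rplus hτ.1
      have := ht_pos (nonneg_of_mem_nrplus hα) h0
      rw [map_sub]
      omega
    obtain ⟨r, σ, hσ⟩ := ih _ hlt hrest rfl
    exact ⟨r + 1, Fin.cons τ σ, hσ.cons hτ hsub⟩

end SigmaSet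

/-! ### Isotropic vectors in the fundamental region -/

section DirichletForm

lemma two_mul_sum_mul_symm {ι R : Type*} [Fintype ι] [CommRing R] (T : ι → ι → R)
    (hT : ∀ i j, T i j = T j i) (f g : ι → R) :
    2 * ∑ i, ∑ j, f i * g j * T i j =
      2 * ∑ i, f i * g i * ∑ j, T i j - ∑ i, ∑ j, T i j * ((f i - f j) * (g i - g j)) := by
  have swap : ∀ h : ι → ι → R, ∑ i, ∑ j, h j i * T i j = ∑ i, ∑ j, h i j * T i j := by
    intro h
    rw [Finset.sum_comm]
    simp only [hT]
  have expand : ∑ i, ∑ j, T i j * ((f i - f j) * (g i - g j)) =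
      ∑ i, ∑ j, f i * g i * T i j + ∑ i, ∑ j, f j * g j * T i j
        - ∑ i, ∑ j, f i * g j * T i j - ∑ i, ∑ j, f j * g i * T i j := by
    simp only [← Finset.sum_add_distrib, ← Finset.sum_sub_distrib]
    exact Finset.sum_congr rfl fun i _ => Finset.sum_congr rfl fun j _ => by ring
  have factor : ∑ i, ∑ j, f i * g i * T i j = ∑ i, f i * g i * ∑ j, T i j := by
    simp only [Finset.mul_sum]
  have hfg := swap fun i j => f i * g j
  have hdiag := swap fun i _ => f i * g i
  linear_combination expand - hfg + hdiag + 2 * factor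

/-- The Dirichlet form of the weighted graph on the vertices of `Q` in which the edge `{i, j}` has
weight `-τ_i τ_j (ε_i, ε_j)`. Compared with `(fτ, gτ)` it measures how far `f` and `g` are from
being constant on the support of `τ`. -/
def dirichlet (τ : Q.I → ℤ) (f g : Q.I → ℚ) : ℚ :=
  -∑ i, ∑ j, (τ i : ℚ) * τ j * Q.bil (Q.ev i) (Q.ev j) * ((f i - f j) * (g i - g j))

lemma dirichlet_term_nonpos {τ : Q.I → ℤ} (hτ : 0 ≤ τ) (f : Q.I → ℚ) (i j : Q.I) :
    (τ i : ℚ) * τ j * Q.bil (Q.ev i) (Q.ev j) * ((f i - f j) * (f i - f j)) ≤ 0 := by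
  rcases eq_or_ne i j with rfl | hij
  · simp
  · refine mul_nonpos_of_nonpos_of_nonneg ?_ (mul_self_nonneg _)
    exact_mod_cast mul_nonpos_of_nonneg_of_nonpos (mul_nonneg (hτ i) (hτ j)) (bil_ev_ev_nonpos hij)

lemma dirichlet_self_nonneg {τ : Q.I → ℤ} (hτ : 0 ≤ τ) (f : Q.I → ℚ) : 0 ≤ dirichlet τ f f :=
  neg_nonneg.2 <| Finset.sum_nonpos fun i _ => Finset.sum_nonpos fun j _ =>
    dirichlet_term_nonpos hτ f i j

lemma exists_forall_eq_of_dirichlet_self_nonpos {τ : Q.I → ℤ} (hτ : 0 ≤ τ)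
    (hconn : Q.SuppConnected τ) {f : Q.I → ℚ} (h : dirichlet τ f f ≤ 0) :
    ∃ c : ℚ, ∀ i, τ i ≠ 0 → f i = c := by
  have hsum := neg_eq_zero.1 (le_antisymm h (dirichlet_self_nonneg hτ f))
  have hterm : ∀ i j,
      (τ i : ℚ) * τ j * Q.bil (Q.ev i) (Q.ev j) * ((f i - f j) * (f i - f j)) = 0 := by
    intro i j
    have hrow := (Finset.sum_eq_zero_iff_of_nonpos fun i _ => Finset.sum_nonpos fun j _ =>
      dirichlet_term_nonpos hτ f i j).1 hsum i (Finset.mem_univ i)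
    exact (Finset.sum_eq_zero_iff_of_nonpos fun j _ => dirichlet_term_nonpos hτ f i j).1 hrow j
      (Finset.mem_univ j)
  have heq_of_adj : ∀ i j, τ i ≠ 0 → τ j ≠ 0 → Q.Adj i j → f i = f j := by
    intro i j hi hj hadj
    rcases eq_or_ne i j with rfl | hij
    · rfl
    have hbil := (adj_iff_bil_ne_zero hij).1 hadj
    simpa [hi, hj, hbil, sub_eq_zero] using hterm i j
  by_cases! hne : ∃ i, τ i ≠ 0
  · obtain ⟨i, hi⟩ := hne
    refine ⟨f i, fun j hj => ?_⟩
    induction hconn i j hi hj with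
    | refl => rfl
    | tail _ hstep ih =>
      obtain ⟨ha, hb, hadj⟩ := hstep
      exact (heq_of_adj _ _ ha hb hadj).symm.trans (ih ha)
  · exact ⟨0, fun i hi => absurd (hne i) hi⟩

theorem two_mul_bil_eq_add_dirichlet {τ x y : Q.I → ℤ} {f g : Q.I → ℚ}
    (hf : ∀ i, f i * τ i = x i) (hg : ∀ i, g i * τ i = y i) :
    2 * (Q.bil x y : ℚ) =
      2 * ∑ i, f i * g i * τ i * Q.bil τ (Q.ev i) + dirichlet τ f g := by
  have hxy : (Q.bil x y : ℚ) =
      ∑ i, ∑ j, f i * g j * (τ i * τ j * Q.bil (Q.ev i) (Q.ev j)) := by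
    rw [bil_eq_sum_left]
    push_cast
    refine Finset.sum_congr rfl fun i _ => ?_
    rw [bil_eq_sum_right, Int.cast_sum, Finset.mul_sum]
    refine Finset.sum_congr rfl fun j _ => ?_
    rw [← hf, Int.cast_mul, ← hg]
    ring
  have hrow : ∀ i, ∑ j, (τ i : ℚ) * τ j * Q.bil (Q.ev i) (Q.ev j) = τ i * Q.bil τ (Q.ev i) := by
    intro i
    rw [bil_comm, bil_eq_sum_right, Int.cast_sum, Finset.mul_sum]
    exact Finset.sum_congr rfl fun j _ => by push_cast; ring
  rw [hxy, two_mul_sum_mul_symm _ (fun i j => by rw [bil_comm]; ring), dirichlet,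
    ← sub_eq_add_neg]
  simp only [hrow, ← mul_assoc]

lemma div_mul_cancel_of_support {τ x : Q.I → ℤ} (h : ∀ i, x i ≠ 0 → τ i ≠ 0) (i : Q.I) :
    (x i : ℚ) / τ i * τ i = x i :=
  div_mul_cancel_of_imp fun h0 => by
    by_contra hx
    exact h i (by exact_mod_cast hx) (by exact_mod_cast h0)

lemma sum_div_mul_div_le_bil_self {τ x : Q.I → ℤ} (hτ : 0 ≤ τ) (h : ∀ i, x i ≠ 0 → τ i ≠ 0) :
    ∑ i, (x i : ℚ) / τ i * (x i / τ i) * τ i * Q.bil τ (Q.ev i) ≤ Q.bil x x := by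
  have := two_mul_bil_eq_add_dirichlet (div_mul_cancel_of_support h) (div_mul_cancel_of_support h)
  have := dirichlet_self_nonneg hτ fun i => (x i : ℚ) / τ i
  linarith

lemma bil_eq_mul_of_forall_eq_mul {τ y : Q.I → ℤ} {s : ℚ} (h : ∀ i, (y i : ℚ) = s * τ i)
    (z : Q.I → ℤ) : (Q.bil y z : ℚ) = s * Q.bil τ z := by
  rw [bil_eq_sum_left y, bil_eq_sum_left τ]
  push_cast
  rw [Finset.mul_sum]
  exact Finset.sum_congr rfl fun i _ => by rw [h i, mul_assoc]

lemma pos_of_forall_eq_mul {τ y : Q.I → ℤ} {s : ℚ} (h : ∀ i, (y i : ℚ) = s * τ i) (hτ : 0 ≤ τ)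
    (hy : 0 ≤ y) (hy0 : y ≠ 0) : 0 < s := by
  obtain ⟨i, hi⟩ := Function.ne_iff.1 hy0
  have hyi : (0 : ℚ) < y i := by exact_mod_cast (hy i).lt_of_ne' hi
  exact pos_of_mul_pos_left (h i ▸ hyi) (by exact_mod_cast hτ i)

theorem InFund.exists_forall_eq_mul_of_add {α a b : Q.I → ℤ} (hα : Q.InFund α) (hab : a + b = α)
    (ha : 0 ≤ a) (hb : 0 ≤ b) (h : 0 ≤ Q.bil a b) :
    ∃ c : ℚ, (∀ i, (a i : ℚ) = c * α i) ∧ ∀ i, (b i : ℚ) = (1 - c) * α i := by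
  have hab_apply : ∀ i, (b i : ℚ) = α i - a i := fun i => by
    rw [← hab, Pi.add_apply]
    push_cast
    ring
  set f : Q.I → ℚ := fun i => (a i : ℚ) / α i
  have hfa : ∀ i, f i * α i = a i := div_mul_cancel_of_support fun i hi hαi => hi (by
    have : 0 ≤ a i := ha i
    have : 0 ≤ b i := hb i
    have : a i + b i = α i := congrFun hab i
    linarith)
  have hfb : ∀ i, (1 - f i) * α i = b i := fun i => by rw [one_sub_mul, hfa, hab_apply]
  have hsum : ∑ i, f i * (1 - f i) * α i * Q.bil α (Q.ev i) ≤ 0 := by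
    refine Finset.sum_nonpos fun i _ => mul_nonpos_of_nonneg_of_nonpos ?_ ?_
    · rw [mul_assoc, hfb]
      have : (0 : ℚ) ≤ a i := by exact_mod_cast ha i
      have : (0 : ℚ) ≤ α i := by exact_mod_cast hα.2.1 i
      have : (0 : ℚ) ≤ b i := by exact_mod_cast hb i
      positivity
    · exact_mod_cast hα.2.2.2 i
  have hneg : dirichlet α f (fun i => 1 - f i) = -dirichlet α f f := by
    simp only [dirichlet, ← Finset.sum_neg_distrib]
    exact Finset.sum_congr rfl fun i _ => Finset.sum_congr rfl fun j _ => by ring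
  obtain ⟨c, hc⟩ := exists_forall_eq_of_dirichlet_self_nonpos hα.2.1 hα.2.2.1 (f := f) (by
    have := two_mul_bil_eq_add_dirichlet hfa hfb
    have : (0 : ℚ) ≤ Q.bil a b := by exact_mod_cast h
    linarith)
  have hac : ∀ i, (a i : ℚ) = c * α i := fun i => by
    rcases eq_or_ne (α i) 0 with hi | hi
    · rw [← hfa, hi, Int.cast_zero, mul_zero, mul_zero]
    · rw [← hfa, hc i hi]
  exact ⟨c, hac, fun i => by rw [one_sub_mul, ← hac, hab_apply]⟩

theorem InFund.bil_self_eq_zero_of_add {α a b : Q.I → ℤ} (hα : Q.InFund α) (hab : a + b = α)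
    (ha : 0 ≤ a) (hb : 0 ≤ b) (ha0 : a ≠ 0) (hb0 : b ≠ 0) (h : 0 ≤ Q.bil a b) :
    Q.bil a a = 0 := by
  obtain ⟨c, hac, hbc⟩ := hα.exists_forall_eq_mul_of_add hab ha hb h
  have hpos : 0 < c * (1 - c) :=
    mul_pos (pos_of_forall_eq_mul hac hα.2.1 ha ha0) (pos_of_forall_eq_mul hbc hα.2.1 hb hb0)
  have hab_bil : (Q.bil a b : ℚ) = c * (1 - c) * Q.bil α α := by
    rw [bil_eq_mul_of_forall_eq_mul hac, bil_comm, bil_eq_mul_of_forall_eq_mul hbc, mul_assoc]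
  have hαα : (Q.bil α α : ℚ) = 0 :=
    le_antisymm (by exact_mod_cast hα.bil_self_nonpos)
      (nonneg_of_mul_nonneg_right (hab_bil ▸ by exact_mod_cast h) hpos)
  have haa : (Q.bil a a : ℚ) = 0 := by
    rw [bil_eq_mul_of_forall_eq_mul hac, bil_comm, bil_eq_mul_of_forall_eq_mul hac, hαα, mul_zero,
      mul_zero]
  exact_mod_cast haa

end DirichletForm

section NullSupport

/-- `x` is supported on the vertices `i` of the support of `τ` with `(τ, ε_i) = 0`. For `τ` in the
fundamental region the form is positive semidefinite on such vectors, with radical spanned by the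
multiples of `τ` among them. -/
def NullSupported (τ x : Q.I → ℤ) : Prop :=
  ∀ i, x i ≠ 0 → τ i ≠ 0 ∧ Q.bil τ (Q.ev i) = 0

lemma NullSupported.mono {τ x y : Q.I → ℤ} (h : NullSupported τ x)
    (hyx : ∀ i, x i = 0 → y i = 0) : NullSupported τ y :=
  fun i hi => h i fun hx => hi (hyx i hx)

lemma NullSupported.mono_of_le {τ x y : Q.I → ℤ} (h : NullSupported τ x) (hy : 0 ≤ y)
    (hyx : y ≤ x) : NullSupported τ y :=
  h.mono fun i hi => le_antisymm (hi ▸ hyx i) (hy i)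

lemma InFund.bil_ev_eq_zero {τ : Q.I → ℤ} (hτ : Q.InFund τ) (h : Q.bil τ τ = 0) {i : Q.I}
    (hi : τ i ≠ 0) : Q.bil τ (Q.ev i) = 0 := by
  rw [bil_eq_sum_right] at h
  have := (Finset.sum_eq_zero_iff_of_nonpos fun i _ =>
    mul_nonpos_of_nonneg_of_nonpos (hτ.2.1 i) (hτ.2.2.2 i)).1 h i (Finset.mem_univ i)
  exact (mul_eq_zero.1 this).resolve_left hi

lemma InFund.nullSupported {τ x : Q.I → ℤ} (hτ : Q.InFund τ) (h : Q.bil τ τ = 0)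
    (hx : ∀ i, x i ≠ 0 → τ i ≠ 0) : NullSupported τ x :=
  fun i hi => ⟨hx i hi, hτ.bil_ev_eq_zero h (hx i hi)⟩

lemma NullSupported.bil_eq_zero {τ x : Q.I → ℤ} (h : NullSupported τ x) : Q.bil τ x = 0 := by
  rw [bil_eq_sum_right]
  refine Finset.sum_eq_zero fun i _ => ?_
  by_cases hi : x i = 0
  · rw [hi, zero_mul]
  · rw [(h i hi).2, mul_zero]

lemma NullSupported.sum_eq_zero {τ x : Q.I → ℤ} (h : NullSupported τ x) :
    ∑ i, (x i : ℚ) / τ i * (x i / τ i) * τ i * Q.bil τ (Q.ev i) = 0 := by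
  refine Finset.sum_eq_zero fun i _ => ?_
  by_cases hi : x i = 0
  · simp [hi]
  · simp [(h i hi).2]

lemma NullSupported.bil_self_nonneg {τ x : Q.I → ℤ} (h : NullSupported τ x) (hτ : 0 ≤ τ) :
    0 ≤ Q.bil x x := by
  have := sum_div_mul_div_le_bil_self hτ fun i hi => (h i hi).1
  rw [h.sum_eq_zero] at this
  exact_mod_cast this

lemma NullSupported.exists_forall_eq_mul {τ x : Q.I → ℤ} (h : NullSupported τ x)
    (hτ : Q.InFund τ) (h0 : Q.bil x x ≤ 0) : ∃ c : ℚ, ∀ i, (x i : ℚ) = c * τ i := by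
  have hx := div_mul_cancel_of_support fun i hi => (h i hi).1
  have hnorm := two_mul_bil_eq_add_dirichlet hx hx
  rw [h.sum_eq_zero, mul_zero, zero_add] at hnorm
  have h0' : (Q.bil x x : ℚ) ≤ 0 := by exact_mod_cast h0
  obtain ⟨c, hc⟩ := exists_forall_eq_of_dirichlet_self_nonpos hτ.2.1 hτ.2.2.1
    (f := fun i => (x i : ℚ) / τ i) (by linarith)
  refine ⟨c, fun i => ?_⟩
  rcases eq_or_ne (τ i) 0 with hi | hi
  · rw [← hx i, hi, Int.cast_zero, mul_zero, mul_zero]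
  · rw [← hx i, hc i hi]

end NullSupport

section ShortVectors

lemma add_ev_le {x y : Q.I → ℤ} (h : x ≤ y) {i : Q.I} (hi : x i < y i) : x + Q.ev i ≤ y :=
  fun j => by
    rw [Pi.add_apply]
    rcases eq_or_ne j i with rfl | hj
    · rw [ev_self]
      exact hi
    · rw [ev_apply_of_ne hj, add_zero]
      exact h j

lemma exists_le_bil_self_le_two {b : Q.I → ℤ} (hb : 0 ≤ b) (hb0 : b ≠ 0) :
    ∃ η, 0 ≤ η ∧ η ≤ b ∧ η ≠ 0 ∧ Q.bil η η ≤ 2 ∧ ∀ j, η j < b j → 0 ≤ Q.bil η (Q.ev j) := by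
  let IsShort (η : Q.I → ℤ) : Prop := η ∈ Set.Icc 0 b ∧ η ≠ 0 ∧ Q.bil η η ≤ 2
  obtain ⟨i, hi⟩ := Function.ne_iff.1 hb0
  have hev : IsShort (Q.ev i) :=
    ⟨⟨ev_nonneg i, zero_add (Q.ev i) ▸ add_ev_le hb ((hb i).lt_of_ne' hi)⟩, ev_ne_zero i,
      bil_ev_self_le_two i⟩
  obtain ⟨η, hmax⟩ :=
    ((Set.finite_Icc 0 b).subset fun η (hη : IsShort η) => hη.1).exists_maximal ⟨_, hev⟩
  obtain ⟨⟨hη0, hηb⟩, hηne, hη2⟩ := hmax.prop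
  refine ⟨η, hη0, hηb, hηne, hη2, fun j hlt => ?_⟩
  by_contra! hneg
  have hshort : IsShort (η + Q.ev j) := by
    refine ⟨⟨add_nonneg hη0 (ev_nonneg j), add_ev_le hηb hlt⟩, ?_, ?_⟩
    · exact (add_pos_of_nonneg_of_pos hη0 ((ev_nonneg j).lt_of_ne' (ev_ne_zero j))).ne'
    · simp only [bil_add_left, bil_add_right, bil_comm (Q.ev j) η]
      linarith [bil_ev_self_le_two j]
  have := hmax.le_of_ge hshort (le_add_of_nonneg_right (ev_nonneg j)) j
  rw [Pi.add_apply, ev_self] at this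
  exact absurd this (lt_add_one _).not_ge

end ShortVectors

section IsotropicMultiples

variable {K : Type} [Field K] {l : Q.I → K}

lemma InFund.of_forall_eq_mul {τ y : Q.I → ℤ} (hτ : Q.InFund τ) {s : ℚ} (hs : 0 < s)
    (h : ∀ i, (y i : ℚ) = s * τ i) : Q.InFund y := by
  have hzero : ∀ i, y i = 0 ↔ τ i = 0 := fun i => by
    rw [← Int.cast_eq_zero (α := ℚ), h i, mul_eq_zero, Int.cast_eq_zero, or_iff_right hs.ne']
  refine ⟨fun hy => hτ.1 (funext fun i => (hzero i).1 (congrFun hy i)), fun i => ?_, ?_,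
    fun i => ?_⟩
  · have : (0 : ℚ) ≤ τ i := by exact_mod_cast hτ.2.1 i
    have : (0 : ℚ) ≤ y i := by rw [h i]; positivity
    exact_mod_cast this
  · simpa only [SuppConnected, ne_eq, hzero] using hτ.2.2.1
  · have hle : (Q.bil τ (Q.ev i) : ℚ) ≤ 0 := by exact_mod_cast hτ.2.2.2 i
    have := bil_eq_mul_of_forall_eq_mul h (Q.ev i) ▸ mul_nonpos_of_nonneg_of_nonpos hs.le hle
    exact_mod_cast this

lemma pair_eq_zero_of_forall_eq_mul [CharZero K] {τ y : Q.I → ℤ} (hτ : Q.pair K l τ = 0) {s : ℚ}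
    (h : ∀ i, (y i : ℚ) = s * τ i) : Q.pair K l y = 0 := by
  have hclear : (s.den : ℤ) • y = s.num • τ := by
    funext i
    have : (s.den * y i : ℚ) = s.num * τ i := by
      rw [h i, ← mul_assoc, mul_comm (s.den : ℚ), Rat.mul_den_eq_num]
    exact_mod_cast this
  have hmul := congrArg (Q.pair K l) hclear
  rw [pair_smul, pair_smul, hτ, mul_zero] at hmul
  exact (mul_eq_zero.1 hmul).resolve_left (by exact_mod_cast s.den_nz)

lemma mem_rplus_and_pp_eq_one_of_forall_eq_mul [CharZero K] {τ y : Q.I → ℤ} (hτ : Q.InFund τ)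
    (hpair : Q.pair K l τ = 0) (h0 : Q.bil τ τ = 0) {s : ℚ} (hs : 0 < s)
    (h : ∀ i, (y i : ℚ) = s * τ i) : y ∈ Q.Rplus K l ∧ Q.pp y = 1 := by
  refine ⟨⟨(hτ.of_forall_eq_mul hs h).isPosRoot, pair_eq_zero_of_forall_eq_mul hpair h⟩, ?_⟩
  have hyy : (Q.bil y y : ℚ) = 0 := by
    rw [bil_eq_mul_of_forall_eq_mul h, bil_comm, bil_eq_mul_of_forall_eq_mul h, h0, Int.cast_zero,
      mul_zero, mul_zero]
  have hyy' : Q.bil y y = 0 := by exact_mod_cast hyy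
  have := bil_self y
  linarith

lemma exists_intCast_eq_of_forall_eq_mul [CharZero K] {τ y : Q.I → ℤ} (hS : τ ∈ Q.SigmaSet K l)
    (hτ : Q.InFund τ) (h0 : Q.bil τ τ = 0) {s : ℚ} (h : ∀ i, (y i : ℚ) = s * τ i) :
    ∃ k : ℤ, s = k := by
  by_contra! hs
  have hfract : 0 < Int.fract s := (Int.fract_nonneg s).lt_of_ne' fun h0 =>
    hs ⌊s⌋ (by linarith [Int.self_sub_floor s])
  have hfract_lt := Int.fract_lt_one s
  obtain ⟨hz, hzpp⟩ := mem_rplus_and_pp_eq_one_of_forall_eq_mul (y := y - ⌊s⌋ • τ) hτ hS.1.2 h0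
    hfract fun i => by
      rw [Pi.sub_apply, Pi.smul_apply, smul_eq_mul, Int.fract, sub_mul, ← h i]
      push_cast
      ring
  obtain ⟨hw, hwpp⟩ := mem_rplus_and_pp_eq_one_of_forall_eq_mul (y := τ - (y - ⌊s⌋ • τ)) hτ hS.1.2
    h0 (sub_pos.2 hfract_lt) fun i => by
      rw [Pi.sub_apply, Pi.sub_apply, Pi.smul_apply, smul_eq_mul, Int.fract, one_sub_mul, sub_mul,
        ← h i]
      push_cast
      ring
  have hlt := pp_add_pp_lt_of_mem_sigmaSet hS hz hw (add_sub_cancel _ _).symm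
  have := bil_self τ
  omega

variable [CharZero K]

theorem NullSupported.exists_eq_smul {τ x : Q.I → ℤ} (h : NullSupported τ x)
    (hS : τ ∈ Q.SigmaSet K l) (hτ : Q.InFund τ) (hx : 0 ≤ x) (hle : Q.bil x x ≤ 0) :
    ∃ m : ℕ, x = (m : ℤ) • τ := by
  obtain ⟨c, hc⟩ := h.exists_forall_eq_mul hτ hle
  by_cases hx0 : x = 0
  · exact ⟨0, by simp [hx0]⟩
  obtain ⟨i, hi⟩ := Function.ne_iff.1 hx0
  have hcpos : 0 < c := by
    have hxi : (0 : ℚ) < x i := by exact_mod_cast (hx i).lt_of_ne' hi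
    exact pos_of_mul_pos_left (hc i ▸ hxi) (by exact_mod_cast hτ.2.1 i)
  have h0 : Q.bil τ τ = 0 := by
    have hmul := bil_eq_mul_of_forall_eq_mul hc τ
    rw [bil_comm, h.bil_eq_zero, Int.cast_zero, eq_comm, mul_eq_zero,
      or_iff_right hcpos.ne'] at hmul
    exact_mod_cast hmul
  obtain ⟨k, rfl⟩ := exists_intCast_eq_of_forall_eq_mul hS hτ h0 hc
  obtain ⟨m, rfl⟩ := Int.eq_ofNat_of_zero_le (by exact_mod_cast hcpos.le : (0 : ℤ) ≤ k)
  exact ⟨m, funext fun i => by exact_mod_cast hc i⟩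

lemma NullSupported.eq_zero_or_le {τ x : Q.I → ℤ} (h : NullSupported τ x)
    (hS : τ ∈ Q.SigmaSet K l) (hτ : Q.InFund τ) (hx : 0 ≤ x) (hle : Q.bil x x ≤ 0) :
    x = 0 ∨ τ ≤ x := by
  obtain ⟨m, rfl⟩ := h.exists_eq_smul hS hτ hx hle
  rcases Nat.eq_zero_or_pos m with rfl | hm
  · simp
  · exact .inr fun i => le_mul_of_one_le_left (hτ.2.1 i) (Nat.one_le_cast.2 hm)

lemma NullSupported.le_or_le {τ η : Q.I → ℤ} (h : NullSupported τ η) (hS : τ ∈ Q.SigmaSet K l)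
    (hτ : Q.InFund τ) (hη : 0 ≤ η) (hle : Q.bil η η ≤ 2) : τ ≤ η ∨ η ≤ τ := by
  have hτ0 : 0 ≤ τ := hτ.2.1
  set v := η ⊓ τ with hv
  set w := η - v with hw
  have hv0 : 0 ≤ v := le_inf hη hτ0
  have hw0 : 0 ≤ w := sub_nonneg.2 inf_le_left
  have hvnull : NullSupported τ v := h.mono_of_le hv0 inf_le_left
  have hwnull : NullSupported τ w := h.mono_of_le hw0 (sub_le_self η hv0)
  -- where `w` is nonzero, `v` agrees with `τ`, and `τ - v` pairs nonpositively with `ε_i` there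
  have hvw : 0 ≤ Q.bil v w := by
    have hle : Q.bil (τ - v) w ≤ 0 := by
      refine bil_nonpos_of_disjoint (sub_nonneg.2 inf_le_right) hw0 fun i => ?_
      simp only [hw, hv, Pi.sub_apply, Pi.inf_apply]
      omega
    rw [bil_sub_left, hwnull.bil_eq_zero] at hle
    linarith
  have hsplit : Q.bil η η = Q.bil v v + 2 * Q.bil v w + Q.bil w w := by
    rw [(add_sub_cancel v η).symm, ← hw]
    simp only [bil_add_left, bil_add_right, bil_comm w v]
    ring
  have hv2 := bil_self v
  have hw2 := bil_self w
  have := hvnull.bil_self_nonneg hτ0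
  have := hwnull.bil_self_nonneg hτ0
  rcases (by omega : Q.bil w w ≤ 0 ∨ Q.bil v v ≤ 0) with hneg | hneg
  · rcases hwnull.eq_zero_or_le hS hτ hw0 hneg with h0 | hτw
    · exact .inr (sub_eq_zero.1 h0 ▸ inf_le_right)
    · exact .inl (hτw.trans (sub_le_self η hv0))
  · rcases hvnull.eq_zero_or_le hS hτ hv0 hneg with h0 | hτv
    · refine .inr fun i => show (η i : ℤ) ≤ τ i from ?_
      have hmin : min (η i) (τ i) = (0 : ℤ) := congrFun h0 i
      have hτi : (0 : ℤ) ≤ τ i := hτ0 i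
      by_contra! hlt
      exact (h i (by omega)).1 (by omega)
    · exact .inl (hτv.trans inf_le_left)

lemma NullSupported.eq_zero_of_bil_ev_le {τ b : Q.I → ℤ} (h : NullSupported τ b)
    (hS : τ ∈ Q.SigmaSet K l) (hτ : Q.InFund τ) (hb : 0 ≤ b) (hτb : ¬ τ ≤ b) {c : Q.I}
    (hc : τ c = 1)
    (hbil : ∀ i, τ i ≠ 0 → Q.bil τ (Q.ev i) = 0 → Q.bil b (Q.ev i) ≤ Q.ev c i) : b = 0 := by
  by_contra hb0
  obtain ⟨η, hη0, hηb, hηne, hη2, hηev⟩ := exists_le_bil_self_le_two hb hb0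
  have hηnull := h.mono_of_le hη0 hηb
  have hτη : ¬ τ ≤ η := fun hle => hτb (hle.trans hηb)
  have hηpos : 2 ≤ Q.bil η η := by
    by_contra! hlt
    have := bil_self η
    exact (hηnull.eq_zero_or_le hS hτ hη0 (by omega)).elim hηne hτη
  have hbη : Q.bil η η ≤ Q.bil η b := by
    rw [← sub_nonneg, ← bil_sub_right, bil_eq_sum_right]
    refine Finset.sum_nonneg fun j _ => ?_
    rcases (hηb j).eq_or_lt with heq | hlt
    · rw [Pi.sub_apply, heq, sub_self, zero_mul]
    · exact mul_nonneg (sub_nonneg.2 hlt.le) (hηev j hlt)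
  have hle_one : Q.bil η b ≤ 1 := calc
    Q.bil η b = ∑ j, η j * Q.bil b (Q.ev j) := by rw [bil_comm, bil_eq_sum_right]
    _ ≤ ∑ j, η j * Q.ev c j := by
      refine Finset.sum_le_sum fun j _ => ?_
      by_cases hj : η j = 0
      · simp [hj]
      · exact mul_le_mul_of_nonneg_left (hbil j (hηnull j hj).1 (hηnull j hj).2) (hη0 j)
    _ = η c := by simp [ev]
    _ ≤ τ c := (hηnull.le_or_le hS hτ hη0 hη2).resolve_left hτη c
    _ = 1 := hc
  omega

end IsotropicMultiples

/-! ### Roots supported where an isotropic root is null -/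

section RootCriteria

lemma suppConnected_of_forall_notMem {x : Q.I → ℤ} (u : Q.I)
    (h : ∀ T : Set Q.I, u ∉ T → Separates x T → ∀ i ∈ T, x i = 0) : Q.SuppConnected x := by
  refine suppConnected_of_forall_separates fun T hT => ?_
  by_cases hu : u ∈ T
  · exact .inr (h Tᶜ (not_not.2 hu) hT.compl)
  · exact .inl (h T hu hT)

lemma bil_ev_nonpos_of_apply_eq_zero {x : Q.I → ℤ} (hx : 0 ≤ x) {i : Q.I} (h : x i = 0) :
    Q.bil x (Q.ev i) ≤ 0 :=
  not_lt.1 fun hlt => (apply_pos_of_bil_ev_pos hx hlt).ne' h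

lemma exists_eq_neg_one_of_sum_eq_neg_one {ι : Type*} {s : Finset ι} {f : ι → ℤ}
    (hf : ∀ i ∈ s, f i ≤ 0) (h : ∑ i ∈ s, f i = -1) :
    ∃ u ∈ s, f u = -1 ∧ ∀ i ∈ s, i ≠ u → f i = 0 := by
  classical
  obtain ⟨u, hu, hneg⟩ := Finset.exists_lt_of_sum_lt (s := s) (f := f) (g := 0) (by simp [h])
  have hrest_nonpos : ∀ i ∈ s.erase u, f i ≤ 0 := fun i hi => hf i (Finset.mem_of_mem_erase hi)
  have hrest_sum := Finset.sum_nonpos hrest_nonpos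
  have hsplit := Finset.add_sum_erase s f hu
  rw [Pi.zero_apply] at hneg
  have hrest : ∑ i ∈ s.erase u, f i = 0 := by omega
  refine ⟨u, hu, by omega, fun i hi hiu => ?_⟩
  exact (Finset.sum_eq_zero_iff_of_nonpos hrest_nonpos).1 hrest i (Finset.mem_erase.2 ⟨hiu, hi⟩)

lemma eq_ev_of_forall_bil_eq_zero {x : Q.I → ℤ} {v : Q.I} (hx : Q.SuppConnected x) (hv : x v = 1)
    (h : ∀ j ≠ v, x j ≠ 0 → Q.bil (Q.ev j) (Q.ev v) = 0) : x = Q.ev v := by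
  have hsep : Separates x {v} := by
    rintro _ rfl j hj - hxj
    rw [bil_comm, h j hj hxj]
  rcases hx.eq_zero_or_eq_zero hsep with h0 | h0
  · exact absurd (hv.symm.trans (h0 v rfl)) one_ne_zero
  · funext j
    rcases eq_or_ne j v with rfl | hj
    · rw [hv, ev_self]
    · rw [h0 j hj, ev_apply_of_ne hj]

lemma eq_ev_or_exists_unique_neighbour {x : Q.I → ℤ} {v : Q.I} (hx : 0 ≤ x)
    (hconn : Q.SuppConnected x) (hv : x v = 1) (hpos : 0 < Q.bil x (Q.ev v)) :
    x = Q.ev v ∨ Q.bil x (Q.ev v) = 1 ∧ ∃ u ≠ v, x u = 1 ∧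
      ∀ j ≠ v, j ≠ u → x j ≠ 0 → Q.bil (Q.ev j) (Q.ev v) = 0 := by
  have hterm : ∀ k ∈ Finset.univ.erase v, x k * Q.bil (Q.ev k) (Q.ev v) ≤ 0 := fun k hk =>
    mul_nonpos_of_nonneg_of_nonpos (hx k) (bil_ev_ev_nonpos (Finset.ne_of_mem_erase hk))
  have hbil : Q.bil x (Q.ev v) =
      2 + ∑ k ∈ Finset.univ.erase v, x k * Q.bil (Q.ev k) (Q.ev v) := by
    rw [bil_eq_sum_left, ← Finset.add_sum_erase _ _ (Finset.mem_univ v), hv, one_mul,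
      bil_ev_self_of_loopfree (loopfree_of_bil_ev_pos hx hpos)]
  have mem_erase : ∀ {j}, j ≠ v → j ∈ Finset.univ.erase v := fun hj =>
    Finset.mem_erase.2 ⟨hj, Finset.mem_univ _⟩
  have hsum := Finset.sum_nonpos hterm
  rcases (by omega : Q.bil x (Q.ev v) = 2 ∨ Q.bil x (Q.ev v) = 1) with h2 | h1
  · have hzero := (Finset.sum_eq_zero_iff_of_nonpos hterm).1 (by omega)
    exact .inl (eq_ev_of_forall_bil_eq_zero hconn hv fun j hj hxj =>
      (mul_eq_zero.1 (hzero j (mem_erase hj))).resolve_left hxj)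
  · obtain ⟨u, hu, hu1, hrest⟩ := exists_eq_neg_one_of_sum_eq_neg_one hterm (by omega)
    refine .inr ⟨h1, u, Finset.ne_of_mem_erase hu, Int.eq_one_of_dvd_one (hx u) ?_,
      fun j hjv hju hxj => (mul_eq_zero.1 (hrest j (mem_erase hjv) hju)).resolve_left hxj⟩
    exact ⟨-Q.bil (Q.ev u) (Q.ev v), by linarith⟩

lemma SuppConnected.erase_leaf {x y : Q.I → ℤ} {u v : Q.I} (hx : Q.SuppConnected x)
    (hv : y v = 0) (hxy : ∀ j ≠ v, y j = x j) (hu : x u ≠ 0) (huv : u ≠ v)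
    (hleaf : ∀ j ≠ v, j ≠ u → x j ≠ 0 → Q.bil (Q.ev j) (Q.ev v) = 0) : Q.SuppConnected y := by
  refine suppConnected_of_forall_notMem u fun T huT hT => ?_
  have hsep : Separates x (T \ {v}) := by
    rintro i ⟨hi, hiv⟩ j hj hxi hxj
    rcases eq_or_ne j v with rfl | hjv
    · exact hleaf i hiv (fun h => huT (h ▸ hi)) hxi
    · exact hT i hi j (fun hjT => hj ⟨hjT, hjv⟩) (hxy i hiv ▸ hxi) (hxy j hjv ▸ hxj)
  rcases hx.eq_zero_or_eq_zero hsep with h0 | h0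
  · intro i hi
    rcases eq_or_ne i v with rfl | hiv
    · exact hv
    · rw [hxy i hiv, h0 i ⟨hi, hiv⟩]
  · exact absurd (h0 u fun h => huT h.1) hu

theorem isPosRoot_of_apply_eq_one {x : Q.I → ℤ} {v : Q.I} (hx : 0 ≤ x) (hconn : Q.SuppConnected x)
    (hv : x v = 1) (hle : ∀ i ≠ v, Q.bil x (Q.ev i) ≤ 0) : Q.IsPosRoot x := by
  induction hn : (Q.ht x).toNat using Nat.strong_induction_on generalizing x v with
  | _ n ih =>
  subst hn
  rcases le_or_gt (Q.bil x (Q.ev v)) 0 with hv0 | hpos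
  · refine InFund.isPosRoot ⟨fun h => by simp [h] at hv, hx, hconn, fun i => ?_⟩
    rcases eq_or_ne i v with rfl | hi
    exacts [hv0, hle i hi]
  have hloop := loopfree_of_bil_ev_pos hx hpos
  rcases eq_ev_or_exists_unique_neighbour hx hconn hv hpos with rfl | ⟨hb, u, huv, hu, hleaf⟩
  · exact isPosRoot_ev hloop
  set y := Q.refl v x with hy
  have hyv : y v = 0 := by rw [hy, refl_apply_self, hv, hb, sub_self]
  have hyx : ∀ j ≠ v, y j = x j := fun j hj => refl_apply_of_ne hj x
  have hy0 : 0 ≤ y := fun i => by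
    rcases eq_or_ne i v with rfl | hi
    exacts [hyv.ge, hyx i hi ▸ hx i]
  have hyle : ∀ i ≠ u, Q.bil y (Q.ev i) ≤ 0 := by
    intro i hiu
    by_cases hyi : y i = 0
    · exact bil_ev_nonpos_of_apply_eq_zero hy0 hyi
    have hiv : i ≠ v := fun h => hyi (h ▸ hyv)
    rw [hy, bil_refl_left, hb, bil_comm (Q.ev v), hleaf i hiv hiu (hyx i hiv ▸ hyi)]
    simpa using hle i hiv
  have hht : (Q.ht y).toNat < (Q.ht x).toNat := by
    have := ht_nonneg hy0
    rw [hy, ht_refl, hb] at this ⊢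
    omega
  have hroot := ih _ hht hy0
    (hconn.erase_leaf hyv hyx (hu ▸ one_ne_zero) huv hleaf) (hyx u huv ▸ hu) hyle rfl
  rw [← refl_refl hloop x]
  exact hroot.refl hloop fun h => by simp [h, ev_self] at hyv

lemma bil_ev_congr {x y : Q.I → ℤ} {i : Q.I}
    (h : ∀ k, x k = y k ∨ Q.bil (Q.ev k) (Q.ev i) = 0) : Q.bil x (Q.ev i) = Q.bil y (Q.ev i) := by
  rw [bil_eq_sum_left, bil_eq_sum_left y]
  refine Finset.sum_congr rfl fun k _ => ?_
  rcases h k with h | h <;> rw [h]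
  rw [mul_zero, mul_zero]

/-- `y` arises from `x` by changing the values on `S`, where `S` is attached to the rest of the
support of `x` only at the vertex `u`, `x u = 1`, the new values satisfy the inequalities of the
fundamental region on `S`, and every component of the support of `y` meeting `S` leaves `S`.
Such a change preserves positive roots. -/
structure IsRegluing (S : Set Q.I) (u : Q.I) (x y : Q.I → ℤ) : Prop where
  notMem : u ∉ S
  apply_eq_one : x u = 1
  nonneg : 0 ≤ y
  eq_of_notMem : ∀ i ∉ S, y i = x i
  bil_eq_zero : ∀ s ∈ S, ∀ i ∉ S, i ≠ u → x i ≠ 0 → Q.bil (Q.ev s) (Q.ev i) = 0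
  bil_ev_nonpos : ∀ i ∈ S, Q.bil y (Q.ev i) ≤ 0
  eq_zero_of_separates : ∀ T ⊆ S, Separates y T → ∀ i ∈ T, y i = 0

namespace IsRegluing

variable {S : Set Q.I} {u : Q.I} {x y : Q.I → ℤ}

lemma bil_ev_eq (h : IsRegluing S u x y) {i : Q.I} (hi : i ∉ S) (hiu : i ≠ u) (hxi : x i ≠ 0) :
    Q.bil y (Q.ev i) = Q.bil x (Q.ev i) := by
  refine bil_ev_congr fun k => ?_
  by_cases hk : k ∈ S
  · exact .inr (h.bil_eq_zero k hk i hi hiu hxi)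
  · exact .inl (h.eq_of_notMem k hk)

lemma suppConnected (h : IsRegluing S u x y) (hx : Q.SuppConnected x) : Q.SuppConnected y := by
  refine suppConnected_of_forall_notMem u fun T huT hT => ?_
  have ne_u : ∀ {i}, i ∈ T → i ≠ u := fun hi hiu => huT (hiu ▸ hi)
  have hsep_inter : Separates y (T ∩ S) := by
    rintro i ⟨hiT, hiS⟩ j hj hyi hyj
    by_cases hjT : j ∈ T
    · have hjS : j ∉ S := fun hjS => hj ⟨hjT, hjS⟩
      exact h.bil_eq_zero i hiS j hjS (ne_u hjT) (h.eq_of_notMem j hjS ▸ hyj)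
    · exact hT i hiT j hjT hyi hyj
  have hsep_diff : Separates x (T \ S) := by
    rintro i ⟨hiT, hiS⟩ j hj hxi hxj
    by_cases hjS : j ∈ S
    · rw [bil_comm]
      exact h.bil_eq_zero j hjS i hiS (ne_u hiT) hxi
    · exact hT i hiT j (fun hjT => hj ⟨hjT, hjS⟩) (h.eq_of_notMem i hiS ▸ hxi)
        (h.eq_of_notMem j hjS ▸ hxj)
  rcases hx.eq_zero_or_eq_zero hsep_diff with h0 | h0
  · intro i hi
    by_cases hiS : i ∈ S
    · exact h.eq_zero_of_separates _ Set.inter_subset_right hsep_inter i ⟨hi, hiS⟩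
    · rw [h.eq_of_notMem i hiS, h0 i ⟨hi, hiS⟩]
  · exact absurd (h.apply_eq_one.symm.trans (h0 u fun hu => huT hu.1)) one_ne_zero

lemma refl (h : IsRegluing S u x y) {i : Q.I} (hi : i ∉ S) (hiu : i ≠ u) (hxi : x i ≠ 0)
    (hrefl : 0 ≤ Q.refl i x) : IsRegluing S u (Q.refl i x) (Q.refl i y) := by
  have hii : Q.refl i y i = Q.refl i x i := by
    rw [refl_apply_self, refl_apply_self, h.bil_ev_eq hi hiu hxi, h.eq_of_notMem i hi]
  have hS : ∀ {s}, s ∈ S → s ≠ i := fun hs hsi => hi (hsi ▸ hs)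
  constructor
  · exact h.notMem
  · rw [refl_apply_of_ne hiu.symm, h.apply_eq_one]
  · intro j
    rcases eq_or_ne j i with rfl | hj
    · exact hii ▸ hrefl j
    · rw [refl_apply_of_ne hj]
      exact h.nonneg j
  · intro j hjS
    rcases eq_or_ne j i with rfl | hj
    · exact hii
    · rw [refl_apply_of_ne hj, refl_apply_of_ne hj, h.eq_of_notMem j hjS]
  · intro s hs j hjS hju hxj
    rcases eq_or_ne j i with rfl | hj
    · exact h.bil_eq_zero s hs j hjS hju hxi
    · exact h.bil_eq_zero s hs j hjS hju (refl_apply_of_ne hj x ▸ hxj)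
  · intro s hs
    rw [bil_refl_left, bil_comm (Q.ev i), h.bil_eq_zero s hs i hi hiu hxi, mul_zero, sub_zero]
    exact h.bil_ev_nonpos s hs
  · intro T hTS hT j hj
    rw [refl_apply_of_ne (hS (hTS hj))]
    refine h.eq_zero_of_separates T hTS (fun a ha b hb hya hyb => ?_) j hj
    rcases eq_or_ne b i with rfl | hbi
    · exact h.bil_eq_zero a (hTS ha) b hi hiu hxi
    · exact hT a ha b hb (by rwa [refl_apply_of_ne (hS (hTS ha))]) (by rwa [refl_apply_of_ne hbi])

theorem isPosRoot (h : IsRegluing S u x y) (hx : Q.IsPosRoot x) : Q.IsPosRoot y := by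
  induction hn : (Q.ht x).toNat using Nat.strong_induction_on generalizing x y with
  | _ n ih =>
  subst hn
  by_cases hdescent : ∃ i ∉ S, i ≠ u ∧ 0 < Q.bil x (Q.ev i)
  · obtain ⟨i, hi, hiu, hpos⟩ := hdescent
    have hloop := loopfree_of_bil_ev_pos hx.nonneg hpos
    have hxi := (apply_pos_of_bil_ev_pos hx.nonneg hpos).ne'
    have hx' : Q.IsPosRoot (Q.refl i x) := hx.refl hloop fun hxe => by
      simpa [hxe, ev_apply_of_ne hiu.symm] using h.apply_eq_one
    have h' := h.refl hi hiu hxi hx'.nonneg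
    have hht : (Q.ht (Q.refl i x)).toNat < (Q.ht x).toNat := by
      have := ht_nonneg hx'.nonneg
      rw [ht_refl] at this ⊢
      omega
    rw [← refl_refl hloop y]
    refine (ih _ hht h' hx' rfl).refl hloop fun hye => ?_
    have hyu := (h'.eq_of_notMem u h.notMem).trans h'.apply_eq_one
    simp [hye, ev_apply_of_ne hiu.symm] at hyu
  · push Not at hdescent
    have hyu := (h.eq_of_notMem u h.notMem).trans h.apply_eq_one
    refine isPosRoot_of_apply_eq_one h.nonneg (h.suppConnected hx.suppConnected) hyu
      fun i hiu => ?_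
    by_cases hi : i ∈ S
    · exact h.bil_ev_nonpos i hi
    by_cases hxi : x i = 0
    · exact bil_ev_nonpos_of_apply_eq_zero h.nonneg (h.eq_of_notMem i hi ▸ hxi)
    · exact h.bil_ev_eq hi hiu hxi ▸ hdescent i hi hiu

end IsRegluing

end RootCriteria

section NullSupportedRoots

lemma NullSupported.eq_zero_of_apply_eq_zero {τ z : Q.I → ℤ} (h : NullSupported τ z)
    (hτ : Q.InFund τ) (hz : Q.bil z z ≤ 0) {i : Q.I} (hτi : τ i ≠ 0) (hzi : z i = 0) : z = 0 := by
  obtain ⟨c, hc⟩ := h.exists_forall_eq_mul hτ hz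
  have hc0 : c = 0 := by simpa [hzi, hτi] using hc i
  funext j
  simpa [hc0] using hc j

lemma NullSupported.eq_ev_of_apply_lt_bil_ev {τ x : Q.I → ℤ} (h : NullSupported τ x)
    (hτ : Q.InFund τ) (hx : 0 ≤ x) (h2 : Q.bil x x = 2) {i : Q.I} (hi : 0 < Q.bil x (Q.ev i))
    (hlt : x i < Q.bil x (Q.ev i)) : x = Q.ev i := by
  have hxi := apply_pos_of_bil_ev_pos hx hi
  set z := x - x i • Q.ev i with hz
  have hzi : z i = 0 := by simp [hz, ev_self]
  have hznull : NullSupported τ z := h.mono fun j hj => by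
    have hji : j ≠ i := fun hji => hxi.ne' (hji ▸ hj)
    simp [hz, hj, ev_apply_of_ne hji]
  have hsplit : Q.bil x x = Q.bil z z + 2 * (x i * (Q.bil x (Q.ev i) - x i)) := by
    simp only [hz, bil_sub_left, bil_sub_right, bil_smul_left, bil_smul_right,
      bil_ev_self_of_loopfree (loopfree_of_bil_ev_pos hx hi), bil_comm (Q.ev i) x]
    ring
  have hz_nonneg := hznull.bil_self_nonneg hτ.2.1
  have hprod : 0 < x i * (Q.bil x (Q.ev i) - x i) := mul_pos hxi (sub_pos.2 hlt)
  have hx1 : x i = 1 :=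
    Int.eq_one_of_dvd_one hxi.le ⟨Q.bil x (Q.ev i) - x i, by omega⟩
  have hz0 := hznull.eq_zero_of_apply_eq_zero hτ (by omega) (h i hxi.ne').1 hzi
  rw [← sub_eq_zero, ← hz0, hz, hx1, one_smul]

theorem NullSupported.isPosRoot {τ x : Q.I → ℤ} (h : NullSupported τ x) (hτ : Q.InFund τ)
    (hx : 0 ≤ x) (h2 : Q.bil x x = 2) : Q.IsPosRoot x := by
  induction hn : (Q.ht x).toNat using Nat.strong_induction_on generalizing x with
  | _ n ih =>
  subst hn
  obtain ⟨i, hxi, hpos⟩ : ∃ i, x i ≠ 0 ∧ 0 < Q.bil x (Q.ev i) := by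
    by_contra! hc
    have := bil_nonpos_of_nonneg hx hc
    omega
  have hloop := loopfree_of_bil_ev_pos hx hpos
  rcases lt_or_ge (x i) (Q.bil x (Q.ev i)) with hlt | hge
  · rw [h.eq_ev_of_apply_lt_bil_ev hτ hx h2 hpos hlt]
    exact isPosRoot_ev hloop
  have hy0 : 0 ≤ Q.refl i x := fun j => by
    rcases eq_or_ne j i with rfl | hj
    · rw [refl_apply_self]
      exact sub_nonneg.2 hge
    · rw [refl_apply_of_ne hj]
      exact hx j
  have hynull : NullSupported τ (Q.refl i x) := h.mono fun j hj => by
    have hji : j ≠ i := fun hji => hxi (hji ▸ hj)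
    rw [refl_apply_of_ne hji, hj]
  have hht : (Q.ht (Q.refl i x)).toNat < (Q.ht x).toNat := by
    have := ht_nonneg hy0
    rw [ht_refl] at this ⊢
    omega
  rw [← refl_refl hloop x]
  refine (ih _ hht hynull hy0 (by rw [bil_refl_refl hloop, h2]) rfl).refl hloop fun hxe => ?_
  have := bil_refl_ev hloop x
  rw [hxe, bil_ev_self_of_loopfree hloop] at this
  omega

lemma NullSupported.add {τ x y : Q.I → ℤ} (hx : NullSupported τ x) (hy : NullSupported τ y) :
    NullSupported τ (x + y) := fun i hi => by
  by_cases hxi : x i = 0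
  · exact hy i fun hyi => hi (by rw [Pi.add_apply, hxi, hyi, add_zero])
  · exact hx i hxi

lemma NullSupported.sub {τ x y : Q.I → ℤ} (hx : NullSupported τ x) (hy : NullSupported τ y) :
    NullSupported τ (x - y) := fun i hi => by
  by_cases hxi : x i = 0
  · exact hy i fun hyi => hi (by rw [Pi.sub_apply, hxi, hyi, sub_zero])
  · exact hx i hxi

lemma NullSupported.bil_sub_self {τ x : Q.I → ℤ} (h : NullSupported τ x) (h0 : Q.bil τ τ = 0) :
    Q.bil (x - τ) (x - τ) = Q.bil x x := by
  simp only [bil_sub_left, bil_sub_right, bil_comm x τ, h.bil_eq_zero, h0, sub_zero]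

lemma NullSupported.bil_self_sub {τ x : Q.I → ℤ} (h : NullSupported τ x) (h0 : Q.bil τ τ = 0) :
    Q.bil (τ - x) (τ - x) = Q.bil x x := by
  simp only [bil_sub_left, bil_sub_right, bil_comm x τ, h.bil_eq_zero, h0, sub_zero, zero_sub,
    neg_neg]

end NullSupportedRoots

section IsotropicSubsums

variable {K : Type} [Field K] [CharZero K] {l : Q.I → K} {τ : Q.I → ℤ}

lemma NullSupported.mem_rplus {y : Q.I → ℤ} (h : NullSupported τ y) (hS : τ ∈ Q.SigmaSet K l)
    (hτ : Q.InFund τ) (h0 : Q.bil τ τ = 0) (hy : 0 ≤ y) (hne : y ≠ 0) (h2 : Q.bil y y ≤ 2)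
    (hpair : Q.pair K l y = 0) : y ∈ Q.Rplus K l := by
  rcases h2.eq_or_lt with heq | hlt
  · exact ⟨h.isPosRoot hτ hy heq, hpair⟩
  have := bil_self y
  obtain ⟨m, rfl⟩ := h.exists_eq_smul hS hτ hy (by omega)
  have hm : (0 : ℚ) < m := by
    refine Nat.cast_pos.2 (Nat.pos_of_ne_zero fun hm => hne ?_)
    rw [hm, Nat.cast_zero, zero_smul]
  exact (mem_rplus_and_pp_eq_one_of_forall_eq_mul hτ hS.1.2 h0 hm fun i => by simp).1

lemma NullSupported.add_le_of_mem_sigmaSet {s β : Q.I → ℤ} (hs : NullSupported τ s)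
    (hβnull : NullSupported τ β) (hS : τ ∈ Q.SigmaSet K l) (hτ : Q.InFund τ)
    (h0 : Q.bil τ τ = 0) (hβ : β ∈ Q.SigmaSet K l) (hsτ : τ - s ∈ Q.Rplus K l)
    (hsβ : 0 ≤ s + β) (h2 : Q.bil (s + β) (s + β) ≤ 2) (hpp : Q.pp β ≤ Q.pp (τ - s)) :
    s + β ≤ τ := by
  by_contra hnot
  have hnull := hs.add hβnull
  have hle := (hnull.le_or_le hS hτ hsβ h2).resolve_right hnot
  have hβsplit : β = (s + β - τ) + (τ - s) := by abel
  have hrest_pair : Q.pair K l (s + β - τ) = 0 := by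
    have := congrArg (Q.pair K l) hβsplit
    rw [pair_add, hβ.1.2, hsτ.2, add_zero] at this
    exact this.symm
  have hrest : s + β - τ ∈ Q.Rplus K l :=
    (hnull.sub (hτ.nullSupported h0 fun _ => id)).mem_rplus hS hτ h0 (sub_nonneg.2 hle)
      (fun heq => hnot (sub_eq_zero.1 heq).le) (hnull.bil_sub_self h0 ▸ h2) hrest_pair
  have := pp_add_pp_lt_of_mem_sigmaSet hβ hrest hsτ hβsplit
  have := hrest.1.pp_nonneg
  omega

lemma NullSupported.eq_of_bil_self_nonpos {x : Q.I → ℤ} (h : NullSupported τ x)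
    (hS : τ ∈ Q.SigmaSet K l) (hτ : Q.InFund τ) (hx : 0 ≤ x) (hne : x ≠ 0) (hle : x ≤ τ)
    (h0 : Q.bil x x ≤ 0) : x = τ :=
  hle.antisymm ((h.eq_zero_or_le hS hτ hx h0).resolve_left hne)

lemma NullSupported.le_of_mem_sigmaSet {β : Q.I → ℤ} (h : NullSupported τ β)
    (hS : τ ∈ Q.SigmaSet K l) (hτ : Q.InFund τ) (h0 : Q.bil τ τ = 0) (hβ : β ∈ Q.SigmaSet K l) :
    β ≤ τ := by
  have hβ0 := hβ.1.1.nonneg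
  have := h.bil_self_nonneg hτ.2.1
  have := bil_self β
  have := bil_self τ
  have := hβ.1.1.pp_nonneg
  have hnull : NullSupported τ 0 := fun _ hi => absurd rfl hi
  simpa using hnull.add_le_of_mem_sigmaSet h hS hτ h0 hβ (by simpa using hS.1) (by simpa using hβ0)
    (by rw [zero_add]; omega) (by rw [sub_zero]; omega)

lemma exists_add_le_of_bil_sum_le_one {ι : Type*} (hS : τ ∈ Q.SigmaSet K l) (hτ : Q.InFund τ)
    (h0 : Q.bil τ τ = 0) {J C : Finset ι} {β : ι → Q.I → ℤ} (hCJ : C ⊆ J)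
    (hβ : ∀ j ∈ J, β j ∈ Q.SigmaSet K l) (hnull : ∀ j ∈ J, NullSupported τ (β j))
    (hβ2 : ∀ j ∈ J, Q.bil (β j) (β j) = 2) {s : Q.I → ℤ} (hs : ∑ j ∈ C, β j = s)
    (hs0 : 0 ≤ s) (hsτ : s ≤ τ) (hs2 : Q.bil s s = 2) (hle : Q.bil s (∑ j ∈ J, β j) ≤ 1) :
    ∃ j ∈ J, j ∉ C ∧ s + β j ≤ τ ∧ Q.bil (s + β j) (s + β j) ≤ 2 := by
  classical
  have hτnull : NullSupported τ τ := hτ.nullSupported h0 fun _ => id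
  have hsnull := hτnull.mono_of_le hs0 hsτ
  obtain ⟨j, hj, hneg⟩ : ∃ j ∈ J \ C, Q.bil s (β j) < 0 := by
    by_contra! hc
    have := Finset.sum_nonneg hc
    rw [← Finset.sum_sdiff hCJ, hs, bil_add_right, hs2, bil_sum_right] at hle
    omega
  obtain ⟨hjJ, hjC⟩ := Finset.mem_sdiff.1 hj
  have hsj2 : Q.bil (s + β j) (s + β j) ≤ 2 := by
    have hβj2 := hβ2 j hjJ
    simp only [bil_add_left, bil_add_right, bil_comm (β j) s]
    omega
  have hrest2 : Q.bil (τ - s) (τ - s) = 2 := by rw [hsnull.bil_self_sub h0, hs2]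
  have hspair : Q.pair K l s = 0 := by
    rw [← hs, pair_sum, Finset.sum_eq_zero fun j hj => (hβ j (hCJ hj)).1.2]
  have hrest : τ - s ∈ Q.Rplus K l :=
    ⟨(hτnull.sub hsnull).isPosRoot hτ (sub_nonneg.2 hsτ) hrest2,
      by rw [pair_sub, hS.1.2, hspair, sub_zero]⟩
  have hpp : Q.pp (β j) ≤ Q.pp (τ - s) := by
    have := bil_self (β j)
    have := bil_self (τ - s)
    have := hβ2 j hjJ
    omega
  exact ⟨j, hjJ, hjC, hsnull.add_le_of_mem_sigmaSet (hnull j hjJ) hS hτ h0 (hβ j hjJ) hrest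
    (add_nonneg hs0 (hβ j hjJ).1.1.nonneg) hsj2 hpp, hsj2⟩

theorem exists_sum_eq_of_forall_nullSupported {ι : Type*} (hS : τ ∈ Q.SigmaSet K l)
    (hτ : Q.InFund τ) (h0 : Q.bil τ τ = 0) {J : Finset ι} {β : ι → Q.I → ℤ} (hJ : J.Nonempty)
    (hβ : ∀ j ∈ J, β j ∈ Q.SigmaSet K l) (hnull : ∀ j ∈ J, NullSupported τ (β j))
    (hle : ∀ x ∈ Q.Rplus K l, NullSupported τ x → x ≤ τ → Q.bil x x = 2 →
      Q.bil x (∑ j ∈ J, β j) ≤ 1) :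
    ∃ C ⊆ J, ∑ j ∈ C, β j = τ := by
  classical
  by_contra! hnone
  have hτnull : NullSupported τ τ := hτ.nullSupported h0 fun _ => id
  have hβτ : ∀ j ∈ J, β j ≤ τ := fun j hj => (hnull j hj).le_of_mem_sigmaSet hS hτ h0 (hβ j hj)
  have hβ2 : ∀ j ∈ J, Q.bil (β j) (β j) = 2 := fun j hj => by
    refine (hβ j hj).1.1.bil_self_eq_two_or_nonpos.resolve_right fun hneg => ?_
    refine hnone {j} (by simpa using hj) ?_
    rw [Finset.sum_singleton]
    exact (hnull j hj).eq_of_bil_self_nonpos hS hτ (hβ j hj).1.1.nonneg (hβ j hj).1.1.2.2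
      (hβτ j hj) hneg
  let IsShort (C : Finset ι) : Prop :=
    C.Nonempty ∧ ∑ j ∈ C, β j ≤ τ ∧ Q.bil (∑ j ∈ C, β j) (∑ j ∈ C, β j) ≤ 2
  obtain ⟨j₀, hj₀⟩ := hJ
  obtain ⟨C, hmax⟩ := (J.powerset.finite_toSet.subset fun C (hC : C ⊆ J ∧ IsShort C) =>
    Finset.mem_coe.2 (Finset.mem_powerset.2 hC.1)).exists_maximal
      ⟨{j₀}, by simpa using hj₀, Finset.singleton_nonempty _, by simpa using hβτ j₀ hj₀,
        by simpa using (hβ2 j₀ hj₀).le⟩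
  obtain ⟨hCJ, hCne, hsτ, hs2⟩ := hmax.prop
  set s := ∑ j ∈ C, β j with hs
  have hs0 : 0 ≤ s := Finset.sum_nonneg fun j hj => (hβ j (hCJ hj)).1.1.nonneg
  have hsne : s ≠ 0 := by
    obtain ⟨j, hj⟩ := hCne
    refine fun h => (hβ j (hCJ hj)).1.1.2.2 ?_
    exact (Finset.sum_eq_zero_iff_of_nonneg fun k hk => (hβ k (hCJ hk)).1.1.nonneg).1 h j hj
  have hsnull := hτnull.mono_of_le hs0 hsτ
  have hs2' : Q.bil s s = 2 := by
    by_contra hne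
    have := bil_self s
    exact hnone C hCJ (hsnull.eq_of_bil_self_nonpos hS hτ hs0 hsne hsτ (by omega))
  have hspair : Q.pair K l s = 0 := by
    rw [hs, pair_sum, Finset.sum_eq_zero fun j hj => (hβ j (hCJ hj)).1.2]
  obtain ⟨j, hjJ, hjC, hjτ, hj2⟩ := exists_add_le_of_bil_sum_le_one hS hτ h0 hCJ hβ hnull hβ2
    hs.symm hs0 hsτ hs2' (hle s ⟨hsnull.isPosRoot hτ hs0 hs2', hspair⟩ hsnull hsτ hs2')
  have hsum : ∑ k ∈ insert j C, β k = s + β j := by rw [Finset.sum_insert hjC, add_comm]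
  exact hjC (hmax.le_of_ge (y := insert j C) ⟨Finset.insert_subset hjJ hCJ,
    Finset.insert_nonempty _ _, hsum ▸ hjτ, hsum ▸ hj2⟩ (Finset.subset_insert j C)
      (Finset.mem_insert_self j C))

end IsotropicSubsums

/-! ### Bridges -/

section Separation

lemma Separates.mono {α x : Q.I → ℤ} {T : Set Q.I} (h : Separates α T)
    (hx : ∀ i, x i ≠ 0 → α i ≠ 0) : Separates x T :=
  fun i hi j hj hxi hxj => h i hi j hj (hx i hxi) (hx j hxj)

lemma ne_zero_of_nonneg_of_le {α x : Q.I → ℤ} (hx : 0 ≤ x) (hle : x ≤ α) {i : Q.I}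
    (hi : x i ≠ 0) : α i ≠ 0 :=
  (((hx i).lt_of_ne hi.symm).trans_le (hle i)).ne'

lemma bil_ev_ev_eq_zero_of_bil_ev_eq_zero {τ : Q.I → ℤ} (hτ : 0 ≤ τ) {k : Q.I} (hk : τ k = 0)
    (h : Q.bil τ (Q.ev k) = 0) {i : Q.I} (hi : τ i ≠ 0) : Q.bil (Q.ev i) (Q.ev k) = 0 := by
  rw [bil_eq_sum_left] at h
  have hterm : ∀ j ∈ Finset.univ, τ j * Q.bil (Q.ev j) (Q.ev k) ≤ 0 := fun j _ => by
    rcases eq_or_ne j k with rfl | hj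
    · rw [hk, zero_mul]
    · exact mul_nonpos_of_nonneg_of_nonpos (hτ j) (bil_ev_ev_nonpos hj)
  have hi0 := (Finset.sum_eq_zero_iff_of_nonpos hterm).1 h i (Finset.mem_univ i)
  exact (mul_eq_zero.1 hi0).resolve_left hi

lemma exists_sum_eq_indicator {ι : Type*} {J : Finset ι} {β : ι → Q.I → ℤ} {T : Set Q.I}
    (hβ : ∀ j ∈ J, Q.SuppConnected (β j)) (hT : ∀ j ∈ J, Separates (β j) T) :
    ∃ J' ⊆ J, (∀ j ∈ J', ∀ i ∉ T, β j i = 0) ∧ ∑ j ∈ J', β j = T.indicator (∑ j ∈ J, β j) := by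
  classical
  refine ⟨{j ∈ J | ∀ i ∉ T, β j i = 0}, Finset.filter_subset _ _,
    fun j hj => (Finset.mem_filter.1 hj).2, ?_⟩
  rw [Finset.sum_filter, Finset.indicator_sum]
  refine Finset.sum_congr rfl fun j hj => ?_
  split_ifs with h
  · exact (Set.indicator_eq_self.2 fun i hi => by_contra fun hiT => hi (h i hiT)).symm
  · have h0 := ((hβ j hj).eq_zero_or_eq_zero (hT j hj)).resolve_right h
    exact (Set.indicator_eq_zero'.2 (Set.disjoint_left.2 fun i hi hiT => hi (h0 i hiT))).symm

end Separation

section Bridges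

/-- The edge `c - u` is the only one joining the support of `τ` to the rest of the support of `α`,
it is simple, and `τ c = α u = 1`. -/
structure IsBridge (τ α : Q.I → ℤ) (c u : Q.I) : Prop where
  left_eq_one : τ c = 1
  left_eq_zero : τ u = 0
  right_eq_one : α u = 1
  bil_eq_neg_one : Q.bil (Q.ev c) (Q.ev u) = -1
  bil_eq_zero : ∀ i k, τ i ≠ 0 → τ k = 0 → α k ≠ 0 → i ≠ c ∨ k ≠ u →
    Q.bil (Q.ev i) (Q.ev k) = 0

namespace IsBridge

variable {τ α γ : Q.I → ℤ} {c u : Q.I}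

lemma left_ne_zero (b : IsBridge τ α c u) : τ c ≠ 0 := b.left_eq_one ▸ one_ne_zero

lemma right_ne_zero (b : IsBridge τ α c u) : α u ≠ 0 := b.right_eq_one ▸ one_ne_zero

lemma mono (b : IsBridge τ α c u) (hγ : 0 ≤ γ) (hle : γ ≤ α) (hu : γ u = 1) :
    IsBridge τ γ c u where
  left_eq_one := b.left_eq_one
  left_eq_zero := b.left_eq_zero
  right_eq_one := hu
  bil_eq_neg_one := b.bil_eq_neg_one
  bil_eq_zero i k hi hk hγk := b.bil_eq_zero i k hi hk (ne_zero_of_nonneg_of_le hγ hle hγk)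

lemma bil_eq (b : IsBridge τ α c u) {x z : Q.I → ℤ} (hx : ∀ i, x i ≠ 0 → τ i ≠ 0)
    (hz : ∀ i, z i ≠ 0 → τ i = 0 ∧ α i ≠ 0) : Q.bil x z = -(x c * z u) := by
  have hterm : ∀ i k, i ≠ c ∨ k ≠ u → z k * (x i * Q.bil (Q.ev i) (Q.ev k)) = 0 := by
    intro i k hik
    by_cases hxi : x i = 0
    · rw [hxi, zero_mul, mul_zero]
    by_cases hzk : z k = 0
    · rw [hzk, zero_mul]
    rw [b.bil_eq_zero i k (hx i hxi) (hz k hzk).1 (hz k hzk).2 hik, mul_zero, mul_zero]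
  have hexpand : Q.bil x z = ∑ k, ∑ i, z k * (x i * Q.bil (Q.ev i) (Q.ev k)) := by
    rw [bil_eq_sum_right]
    exact Finset.sum_congr rfl fun k _ => by rw [bil_eq_sum_left x, Finset.mul_sum]
  rw [hexpand, Finset.sum_eq_single u
      (fun k _ hk => Finset.sum_eq_zero fun i _ => hterm i k (.inr hk)) (by simp),
    Finset.sum_eq_single c (fun i _ hi => hterm i u (.inl hi)) (by simp), b.bil_eq_neg_one]
  ring

lemma bil_eq_bil_indicator_sub (b : IsBridge τ α c u) {x : Q.I → ℤ}
    (hx : ∀ i, x i ≠ 0 → τ i ≠ 0) :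
    Q.bil x α = Q.bil x ((Function.support τ).indicator α) - x c := by
  have hu : (Function.support τ)ᶜ.indicator α u = 1 := by
    rw [Set.indicator_of_mem (by simpa using b.left_eq_zero), b.right_eq_one]
  conv_lhs => rw [← Set.indicator_self_add_compl (Function.support τ) α, bil_add_right,
    b.bil_eq hx (z := (Function.support τ)ᶜ.indicator α) (by simp), hu, mul_one]
  rfl

lemma separates_of_apply_eq_zero (b : IsBridge τ α c u) {x : Q.I → ℤ}
    (hx : ∀ i, x i ≠ 0 → α i ≠ 0) (h : x c = 0 ∨ x u = 0) :
    Separates x (Function.support τ) := by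
  intro i hi k hk hxi hxk
  refine b.bil_eq_zero i k hi (by simpa using hk) (hx k hxk) (h.imp ?_ ?_) <;>
  · rintro h0 rfl
    exact absurd h0 ‹_›

lemma isRegluing (b : IsBridge τ γ c u) {y : Q.I → ℤ} (hy : 0 ≤ y)
    (hyγ : ∀ i, τ i = 0 → y i = γ i) (hle : ∀ i, τ i ≠ 0 → Q.bil y (Q.ev i) ≤ 0)
    (hsep : ∀ T ⊆ Function.support τ, Separates y T → ∀ i ∈ T, y i = 0) :
    IsRegluing (Function.support τ) u γ y where
  notMem hu := hu b.left_eq_zero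
  apply_eq_one := b.right_eq_one
  nonneg := hy
  eq_of_notMem i hi := hyγ i (by simpa using hi)
  bil_eq_zero s hs i hi hiu hγi := b.bil_eq_zero s i hs (by simpa using hi) hγi (.inr hiu)
  bil_ev_nonpos := hle
  eq_zero_of_separates := hsep

lemma isPosRoot_indicator_compl (b : IsBridge τ γ c u) (hγ : Q.IsPosRoot γ) :
    Q.IsPosRoot ((Function.support τ)ᶜ.indicator γ) := by
  have hnonneg : 0 ≤ (Function.support τ)ᶜ.indicator γ :=
    Set.indicator_nonneg fun i _ => hγ.nonneg i
  have hzero : ∀ i, τ i ≠ 0 → (Function.support τ)ᶜ.indicator γ i = 0 := fun i hi =>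
    Set.indicator_of_notMem (by simpa using hi) γ
  exact (b.isRegluing hnonneg (fun i hi => Set.indicator_of_mem (fun h => h hi) γ)
    (fun i hi => bil_ev_nonpos_of_apply_eq_zero hnonneg (hzero i hi))
    fun T hT _ i hi => hzero i (hT hi)).isPosRoot hγ

lemma isPosRoot_indicator (b : IsBridge τ γ c u) (hγ : Q.IsPosRoot γ) (hc : γ c = 1) :
    Q.IsPosRoot ((Function.support τ).indicator γ) := by
  have hnonneg : 0 ≤ (Function.support τ).indicator γ := Set.indicator_nonneg fun i _ => hγ.nonneg i
  have hzero : ∀ i, τ i = 0 → (Function.support τ).indicator γ i = 0 := fun i hi =>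
    Set.indicator_of_notMem (by simpa using hi) γ
  have hreglue : IsRegluing {i | τ i = 0 ∧ γ i ≠ 0} c γ ((Function.support τ).indicator γ) :=
    { notMem := fun h => b.left_ne_zero h.1
      apply_eq_one := hc
      nonneg := hnonneg
      eq_of_notMem := fun i hi => by
        by_cases hτi : τ i = 0
        · rw [hzero i hτi]
          exact (not_not.1 fun hγi => hi ⟨hτi, hγi⟩).symm
        · exact Set.indicator_of_mem hτi γ
      bil_eq_zero := fun s hs i hi hic hγi => by
        rw [bil_comm]
        exact b.bil_eq_zero i s (fun hτi => hi ⟨hτi, hγi⟩) hs.1 hs.2 (.inl hic)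
      bil_ev_nonpos := fun i hi => bil_ev_nonpos_of_apply_eq_zero hnonneg (hzero i hi.1)
      eq_zero_of_separates := fun T hT _ i hi => hzero i (hT hi).1 }
  exact hreglue.isPosRoot hγ

lemma isPosRoot_sub (b : IsBridge τ γ c u) (hγ : Q.IsPosRoot γ) (hτ : Q.InFund τ)
    (h0 : Q.bil τ τ = 0) {n : ℤ} (hn : 1 ≤ n) (hγτ : (Function.support τ).indicator γ = n • τ) :
    Q.IsPosRoot (γ - τ) := by
  have hon : ∀ i, τ i ≠ 0 → (γ - τ) i = (n - 1) * τ i := fun i hi => by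
    have := congrFun hγτ i
    rw [Set.indicator_of_mem hi, Pi.smul_apply, smul_eq_mul] at this
    rw [Pi.sub_apply, this]
    ring
  have hoff : ∀ i, τ i = 0 → (γ - τ) i = γ i := fun i hi => by rw [Pi.sub_apply, hi, sub_zero]
  have hnonneg : 0 ≤ γ - τ := fun i => by
    by_cases hi : τ i = 0
    · exact hoff i hi ▸ hγ.nonneg i
    · exact hon i hi ▸ mul_nonneg (sub_nonneg.2 hn) (hτ.2.1 i)
  refine (b.isRegluing hnonneg hoff (fun i hi => ?_) fun T hT hsep i hi => ?_).isPosRoot hγ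
  · have hsplit : γ - τ = (n - 1) • τ + (Function.support τ)ᶜ.indicator γ := by
      rw [sub_smul, one_smul, ← hγτ, sub_add_eq_add_sub, Set.indicator_self_add_compl]
    rw [hsplit, bil_add_left, bil_smul_left, hτ.bil_ev_eq_zero h0 hi, mul_zero, zero_add]
    exact bil_ev_nonpos_of_apply_eq_zero (Set.indicator_nonneg fun j _ => hγ.nonneg j)
      (Set.indicator_of_notMem (by simpa using hi) γ)
  · rw [hon i (hT hi)]
    rcases hn.eq_or_lt with rfl | hn
    · rw [sub_self, zero_mul]
    exfalso
    have hne : ∀ j, τ j ≠ 0 → (γ - τ) j ≠ 0 := fun j hj =>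
      hon j hj ▸ mul_ne_zero (sub_pos.2 hn).ne' hj
    rcases hτ.2.2.1.eq_zero_or_eq_zero (hsep.mono hne) with hzero | hzero
    · exact hT hi (hzero i hi)
    · have hcu := hsep c (not_not.1 fun hc => b.left_ne_zero (hzero c hc)) u
        (fun hu => hT hu b.left_eq_zero) (hne c b.left_ne_zero)
        (hoff u b.left_eq_zero ▸ b.right_ne_zero)
      rw [b.bil_eq_neg_one] at hcu
      omega

lemma exists_sum_eq_indicator_sub (b : IsBridge τ α c u) {ι : Type*} {J : Finset ι}
    {β : ι → Q.I → ℤ} (hβ : ∀ j ∈ J, Q.IsPosRoot (β j)) (hsum : ∑ j ∈ J, β j = α) :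
    ∃ j₀ ∈ J, IsBridge τ (β j₀) c u ∧ ∃ J' ⊆ J, (∀ j ∈ J', ∀ i, β j i ≠ 0 → τ i ≠ 0) ∧
      ∑ j ∈ J', β j = (Function.support τ).indicator (α - β j₀) := by
  classical
  have hnonneg : ∀ j ∈ J, 0 ≤ β j := fun j hj => (hβ j hj).nonneg
  have hle : ∀ j ∈ J, β j ≤ α := fun j hj => hsum ▸ Finset.single_le_sum hnonneg hj
  have hsum_u : ∑ j ∈ J, β j u = 1 := by
    rw [← Finset.sum_apply, hsum, b.right_eq_one]
  obtain ⟨j₀, hj₀, hne⟩ := Finset.exists_ne_zero_of_sum_ne_zero (hsum_u ▸ one_ne_zero)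
  have hu : β j₀ u = 1 := le_antisymm (b.right_eq_one ▸ hle j₀ hj₀ u)
    (Int.add_one_le_of_lt ((hnonneg j₀ hj₀ u).lt_of_ne hne.symm))
  have hrest_u : ∀ j ∈ J.erase j₀, β j u = 0 := by
    rw [← Finset.add_sum_erase J _ hj₀, hu, add_eq_left] at hsum_u
    exact (Finset.sum_eq_zero_iff_of_nonneg fun j hj =>
      hnonneg j (Finset.mem_of_mem_erase hj) u).1 hsum_u
  obtain ⟨J', hJ', hsupp, hJ'sum⟩ := exists_sum_eq_indicator
    (fun j hj => (hβ j (Finset.mem_of_mem_erase hj)).suppConnected)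
    fun j hj => b.separates_of_apply_eq_zero
      (fun _ => ne_zero_of_nonneg_of_le (hnonneg j (Finset.mem_of_mem_erase hj))
        (hle j (Finset.mem_of_mem_erase hj))) (.inr (hrest_u j hj))
  refine ⟨j₀, hj₀, b.mono (hnonneg j₀ hj₀) (hle j₀ hj₀) hu, J', hJ'.trans (J.erase_subset j₀),
    fun j hj i hi hτi => hi (hsupp j hj i fun h => h hτi), ?_⟩
  rw [hJ'sum, ← hsum, ← Finset.add_sum_erase J β hj₀, add_sub_cancel_left]

end IsBridge

end Bridges

section BridgeSubsums

variable {K : Type} [Field K] {l : Q.I → K} {τ α γ : Q.I → ℤ} {c u : Q.I}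

namespace IsBridge

-- If `γ c = 1`, cutting the bridge splits `γ` into two roots `x`, `y` with `(x, y) = -1`, so that
-- `p γ = p x + p y`.
lemma apply_ne_one_of_mem_sigmaSet (b : IsBridge τ γ c u) (hγ : γ ∈ Q.SigmaSet K l)
    (hpair : Q.pair K l ((Function.support τ).indicator γ) = 0) : γ c ≠ 1 := by
  intro hc
  have hsplit := (Set.indicator_self_add_compl (Function.support τ) γ).symm
  have hpair' : Q.pair K l ((Function.support τ)ᶜ.indicator γ) = 0 := by
    have h := hγ.1.2
    rwa [hsplit, pair_add, hpair, zero_add] at h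
  have hlt := pp_add_pp_lt_of_mem_sigmaSet hγ ⟨b.isPosRoot_indicator hγ.1.1 hc, hpair⟩
    ⟨b.isPosRoot_indicator_compl hγ.1.1, hpair'⟩ hsplit
  have hbil : Q.bil ((Function.support τ).indicator γ) ((Function.support τ)ᶜ.indicator γ) =
      -1 := by
    rw [b.bil_eq (fun i hi => (Set.indicator_apply_ne_zero.1 hi).1) (by simp),
      Set.indicator_of_mem b.left_ne_zero,
      Set.indicator_of_mem (fun h => h b.left_eq_zero), hc, b.right_eq_one, mul_one]
  have := pp_add ((Function.support τ).indicator γ) ((Function.support τ)ᶜ.indicator γ)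
  rw [← hsplit, hbil] at this
  omega

lemma bil_left_eq_neg_one (b : IsBridge τ γ c u) (hτ : Q.InFund τ) (h0 : Q.bil τ τ = 0) :
    Q.bil τ γ = -1 := by
  rw [b.bil_eq_bil_indicator_sub fun _ => id, b.left_eq_one,
    (hτ.nullSupported h0 fun i hi => (Set.indicator_apply_ne_zero.1 hi).1).bil_eq_zero, zero_sub]

lemma notMem_sigmaSet (b : IsBridge τ γ c u) (hS : τ ∈ Q.SigmaSet K l) (hτ : Q.InFund τ)
    (h0 : Q.bil τ τ = 0) {n : ℤ} (hn : 1 ≤ n) (hγτ : (Function.support τ).indicator γ = n • τ) :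
    γ ∉ Q.SigmaSet K l := fun hγ => by
  have hrest : γ - τ ∈ Q.Rplus K l :=
    ⟨b.isPosRoot_sub hγ.1.1 hτ h0 hn hγτ, by rw [pair_sub, hγ.1.2, hS.1.2, sub_zero]⟩
  have hlt := pp_add_pp_lt_of_mem_sigmaSet hγ hS.1 hrest (add_sub_cancel τ γ).symm
  have := pp_add τ (γ - τ)
  rw [add_sub_cancel, bil_sub_right, b.bil_left_eq_neg_one hτ h0, h0] at this
  omega

lemma neg_one_le_bil (b : IsBridge τ γ c u) (hγ : γ ∈ Q.SigmaSet K l) (hS : τ ∈ Q.SigmaSet K l)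
    (hτ : Q.InFund τ) (h0 : Q.bil τ τ = 0) {x : Q.I → ℤ} (hx : x ∈ Q.Rplus K l)
    (hxτ : x ≤ τ) (hx2 : Q.bil x x = 2) : -1 ≤ Q.bil x γ := by
  have hτnull : NullSupported τ τ := hτ.nullSupported h0 fun _ => id
  have hxnull := hτnull.mono_of_le hx.1.nonneg hxτ
  have hrest : τ - x ∈ Q.Rplus K l :=
    ⟨(hτnull.sub hxnull).isPosRoot hτ (sub_nonneg.2 hxτ) ((hxnull.bil_self_sub h0).trans hx2),
      by rw [pair_sub, hS.1.2, hx.2, sub_zero]⟩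
  obtain ⟨ι, _, σ, hσ, hsum, -⟩ := exists_sigma_decomposition_of_mem_rplus hrest
  have hle : Q.bil (τ - x) γ ≤ 0 := by
    rw [← hsum, bil_sum_left]
    refine Finset.sum_nonpos fun t _ => bil_nonpos_of_mem_sigmaSet (hσ t) hγ ?_
    intro hσγ
    have hσle : σ t ≤ τ - x :=
      hsum ▸ Finset.single_le_sum (fun t _ => (hσ t).1.1.nonneg) (Finset.mem_univ t)
    have hu : σ t u ≤ τ u - x u := hσle u
    have hxu : (0 : ℤ) ≤ x u := hx.1.nonneg u
    rw [hσγ, b.right_eq_one, b.left_eq_zero] at hu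
    omega
  rw [bil_sub_left, b.bil_left_eq_neg_one hτ h0] at hle
  omega

theorem hasCommonSubsum_of_indicator_eq (b : IsBridge τ α c u) (hS : τ ∈ Q.SigmaSet K l)
    (hα : (Function.support τ).indicator α = τ) : HasCommonSubsum l α := by
  refine ⟨τ, hS, fun ι J β hβ hsum => ?_⟩
  obtain ⟨j₀, hj₀, bγ, J', hJ', -, hJ'sum⟩ :=
    b.exists_sum_eq_indicator_sub (fun j hj => (hβ j hj).1.1) hsum
  refine ⟨J', hJ', ?_⟩
  have hγ := hβ j₀ hj₀
  rw [Set.indicator_sub', hα] at hJ'sum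
  have hpair : Q.pair K l ((Function.support τ).indicator (β j₀)) = 0 := by
    rw [← sub_eq_iff_eq_add.2 (eq_add_of_sub_eq' hJ'sum.symm), pair_sub, hS.1.2, pair_sum,
      Finset.sum_eq_zero fun j hj => (hβ j (hJ' hj)).1.2, sub_zero]
  have hγc : β j₀ c ≤ 1 := by
    have hle : β j₀ ≤ α := hsum ▸ Finset.single_le_sum (fun j hj => (hβ j hj).1.1.nonneg) hj₀
    have := congrFun hα c
    rw [Set.indicator_of_mem b.left_ne_zero, b.left_eq_one] at this
    exact this ▸ hle c
  have hγc0 : β j₀ c = 0 := by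
    have h1 := bγ.apply_ne_one_of_mem_sigmaSet hγ hpair
    have h0 : (0 : ℤ) ≤ β j₀ c := hγ.1.1.nonneg c
    omega
  have hzero := (hγ.1.1.suppConnected.eq_zero_or_eq_zero
    (bγ.separates_of_apply_eq_zero (fun _ => id) (.inl hγc0))).resolve_right
      fun h => bγ.right_ne_zero (h u fun hu => hu b.left_eq_zero)
  rw [hJ'sum, Set.indicator_eq_zero'.2 (Set.disjoint_left.2 fun i hi hiT => hi (hzero i hiT)),
    sub_zero]

variable [CharZero K] in
theorem hasCommonSubsum_of_isotropic (b : IsBridge τ α c u) (hS : τ ∈ Q.SigmaSet K l)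
    (hτ : Q.InFund τ) (h0 : Q.bil τ τ = 0) {n : ℤ} (hn : 1 ≤ n)
    (hα : (Function.support τ).indicator α = n • τ) : HasCommonSubsum l α := by
  refine ⟨τ, hS, fun ι J β hβ hsum => ?_⟩
  obtain ⟨j₀, hj₀, bγ, J', hJ', hsupp, hJ'sum⟩ :=
    b.exists_sum_eq_indicator_sub (fun j hj => (hβ j hj).1.1) hsum
  rw [Set.indicator_sub', hα] at hJ'sum
  have hJ'ne : J'.Nonempty := by
    rw [Finset.nonempty_iff_ne_empty]
    rintro rfl
    exact bγ.notMem_sigmaSet hS hτ h0 hn (sub_eq_zero.1 hJ'sum.symm).symm (hβ j₀ hj₀)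
  obtain ⟨C, hC, hCsum⟩ := exists_sum_eq_of_forall_nullSupported hS hτ h0 hJ'ne
    (fun j hj => hβ j (hJ' hj)) (fun j hj => hτ.nullSupported h0 (hsupp j hj))
    fun x hx hxnull hxτ hx2 => by
      have hge := bγ.neg_one_le_bil (hβ j₀ hj₀) hS hτ h0 hx hxτ hx2
      have hxc : (0 : ℤ) ≤ x c := hx.1.nonneg c
      rw [bγ.bil_eq_bil_indicator_sub fun i hi => (hxnull i hi).1] at hge
      rw [hJ'sum, bil_sub_right, bil_smul_right, bil_comm x τ, hxnull.bil_eq_zero, mul_zero]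
      omega
  exact ⟨C, hC.trans hJ', hCsum⟩

end IsBridge

end BridgeSubsums

section ExistenceOfBridges

variable {τ α : Q.I → ℤ} {c u : Q.I}

lemma exists_maximal_smul_le (hτ : 0 ≤ τ) (hne : τ ≠ 0) (hle : τ ≤ α) :
    ∃ n : ℤ, 1 ≤ n ∧ n • τ ≤ α ∧ ¬ (n + 1) • τ ≤ α := by
  obtain ⟨i, hi⟩ := Function.ne_iff.1 hne
  have hτi : 0 < τ i := (hτ i).lt_of_ne (Ne.symm hi)
  have hbdd : ∀ n : ℤ, n • τ ≤ α → n ≤ α i := fun n hn => by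
    have h1 : n * τ i ≤ α i := hn i
    have h2 : τ i ≤ α i := hle i
    nlinarith
  obtain ⟨n, hn, hmax⟩ := Int.exists_greatest_of_bdd ⟨α i, hbdd⟩ ⟨1, by rwa [one_smul]⟩
  exact ⟨n, hmax 1 (by rwa [one_smul]), hn, fun h => by have := hmax _ h; omega⟩

lemma InFund.exists_bil_ev_eq_neg_one {ρ : Q.I → ℤ} (hτ : Q.InFund τ) (hρ : 0 ≤ ρ)
    (h : Q.bil τ ρ = -1) : ∃ u, ρ u = 1 ∧ Q.bil τ (Q.ev u) = -1 ∧
      ∀ i, i ≠ u → ρ i ≠ 0 → Q.bil τ (Q.ev i) = 0 := by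
  rw [bil_eq_sum_right] at h
  obtain ⟨u, -, hu, hrest⟩ := exists_eq_neg_one_of_sum_eq_neg_one
    (fun i _ => mul_nonpos_of_nonneg_of_nonpos (hρ i) (hτ.2.2.2 i)) h
  have hρu : (0 : ℤ) ≤ ρ u := hρ u
  have := Int.mul_eq_neg_one_iff_eq_one_or_neg_one.1 hu
  exact ⟨u, by omega, by omega, fun i hi hρi =>
    (mul_eq_zero.1 (hrest i (Finset.mem_univ i) hi)).resolve_left hρi⟩

lemma exists_isBridge (hτ : 0 ≤ τ) (hu : τ u = 0) (hαu : α u = 1)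
    (hbil : Q.bil τ (Q.ev u) = -1)
    (hrest : ∀ i, τ i = 0 → α i ≠ 0 → i ≠ u → Q.bil τ (Q.ev i) = 0) :
    ∃ c, IsBridge τ α c u := by
  rw [bil_eq_sum_left] at hbil
  have hterm : ∀ i ∈ Finset.univ, τ i * Q.bil (Q.ev i) (Q.ev u) ≤ 0 := fun i _ => by
    rcases eq_or_ne i u with rfl | hi
    · rw [hu, zero_mul]
    · exact mul_nonpos_of_nonneg_of_nonpos (hτ i) (bil_ev_ev_nonpos hi)
  obtain ⟨c, -, hc, hne⟩ := exists_eq_neg_one_of_sum_eq_neg_one hterm hbil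
  have hτc : (0 : ℤ) ≤ τ c := hτ c
  have := Int.mul_eq_neg_one_iff_eq_one_or_neg_one.1 hc
  refine ⟨c, by omega, hu, hαu, by omega, fun i k hi hk hαk hik => ?_⟩
  rcases eq_or_ne k u with rfl | hku
  · have hic := hik.resolve_right fun h => h rfl
    exact (mul_eq_zero.1 (hne i (Finset.mem_univ i) hic)).resolve_left hi
  · exact bil_ev_ev_eq_zero_of_bil_ev_eq_zero hτ hk (hrest k hk hαk hku) hi

lemma IsBridge.exists_indicator_eq_smul {K : Type} [Field K] [CharZero K] {l : Q.I → K}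
    (b : IsBridge τ α c u) (hS : τ ∈ Q.SigmaSet K l) (hτ : Q.InFund τ) (hle : τ ≤ α)
    (hα : ∀ i, τ i ≠ 0 → Q.bil τ (Q.ev i) = 0 → Q.bil α (Q.ev i) ≤ 0)
    (hne : ∀ i, τ i ≠ 0 → α i ≠ τ i → Q.bil τ (Q.ev i) = 0) :
    ∃ n : ℤ, 1 ≤ n ∧ (Function.support τ).indicator α = n • τ := by
  obtain ⟨n, hn, hnα, hmax⟩ := exists_maximal_smul_le hτ.2.1 hτ.1 hle
  refine ⟨n, hn, sub_eq_zero.1 ?_⟩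
  set d := (Function.support τ).indicator α - n • τ with hd
  have hd_on : ∀ i, τ i ≠ 0 → d i = α i - n * τ i := fun i hi => by
    rw [hd, Pi.sub_apply, Set.indicator_of_mem hi, Pi.smul_apply, smul_eq_mul]
  have hd_off : ∀ i, τ i = 0 → d i = 0 := fun i hi => by
    rw [hd, Pi.sub_apply, Set.indicator_of_notMem (by simpa using hi), Pi.smul_apply, hi, smul_zero,
      sub_zero]
  have hd_nonneg : 0 ≤ d := fun i => by
    by_cases hi : τ i = 0
    · exact (hd_off i hi).ge
    · exact hd_on i hi ▸ sub_nonneg.2 (hnα i)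
  have hd_null : NullSupported τ d := fun i hi => by
    have hτi : τ i ≠ 0 := fun h => hi (hd_off i h)
    refine ⟨hτi, hne i hτi fun h => hi ?_⟩
    have hτi0 : (0 : ℤ) ≤ τ i := hτ.2.1 i
    have hdi : (0 : ℤ) ≤ d i := hd_nonneg i
    rw [hd_on i hτi] at hdi ⊢
    nlinarith
  refine hd_null.eq_zero_of_bil_ev_le hS hτ hd_nonneg (fun hτd => hmax fun i => ?_) b.left_eq_one
    fun i hi hi0 => ?_
  · by_cases hi : τ i = 0
    · rw [Pi.smul_apply, hi, smul_zero, ← hi]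
      exact hle i
    · have := hd_on i hi ▸ hτd i
      rw [Pi.smul_apply, smul_eq_mul]
      linarith
  · have hαd := hα i hi hi0
    rw [bil_comm, b.bil_eq_bil_indicator_sub fun k hk => by
        rcases eq_or_ne k i with rfl | hki
        exacts [hi, absurd (ev_apply_of_ne hki) hk],
      ← sub_add_cancel ((Function.support τ).indicator α) (n • τ), ← hd, bil_add_right,
      bil_smul_right, bil_comm _ τ, hi0, bil_comm _ d] at hαd
    have : Q.ev i c = Q.ev c i := by simp only [ev, eq_comm]
    omega

end ExistenceOfBridges

/-! ### Common subsums -/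

section FundamentalRegion

variable {τ α : Q.I → ℤ}

lemma SuppConnected.apply_eq_zero_of_bil_ev_eq_zero (hα : Q.SuppConnected α) (hτ : 0 ≤ τ)
    (hτ0 : τ ≠ 0) (hle : τ ≤ α) (h : ∀ k, τ k = 0 → α k ≠ 0 → Q.bil τ (Q.ev k) = 0) :
    ∀ k, τ k = 0 → α k = 0 := by
  have hsep : Separates α (Function.support τ) := fun i hi k hk _ hαk => by
    have hk : τ k = 0 := by simpa using hk
    exact bil_ev_ev_eq_zero_of_bil_ev_eq_zero hτ hk (h k hk hαk) hi
  obtain ⟨i, hi⟩ := Function.ne_iff.1 hτ0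
  rcases hα.eq_zero_or_eq_zero hsep with hzero | hzero
  · exact absurd (hzero i hi) (ne_zero_of_nonneg_of_le hτ hle hi)
  · exact fun k hk => hzero k (by simpa using hk)

lemma InFund.neg_one_le_bil_self {x : Q.I → ℤ} {u : Q.I} (hτ : Q.InFund τ) (hτu : τ u ≠ 0)
    (hu : Q.bil τ (Q.ev u) = -1) (hx : 0 ≤ x) (hsupp : ∀ i, x i ≠ 0 → τ i ≠ 0) (hxu : x u ≤ 1)
    (hrest : ∀ i, i ≠ u → x i ≠ 0 → Q.bil τ (Q.ev i) = 0) : -1 ≤ Q.bil x x := by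
  have hge := sum_div_mul_div_le_bil_self hτ.2.1 hsupp
  rw [Finset.sum_eq_single u (fun i _ hi => by
      by_cases hxi : x i = 0
      · rw [hxi, Int.cast_zero, zero_div, zero_mul, zero_mul, zero_mul]
      · rw [hrest i hi hxi, Int.cast_zero, mul_zero]) (by simp), hu,
    mul_assoc (_ / _) (_ / _), div_mul_cancel₀ _ (Int.cast_ne_zero.2 hτu)] at hge
  have hτu1 : (1 : ℤ) ≤ τ u := Int.add_one_le_of_lt ((hτ.2.1 u).lt_of_ne hτu.symm)
  have hxu0 : (0 : ℤ) ≤ x u := hx u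
  have hdiv : (x u : ℚ) / τ u ≤ 1 :=
    div_le_one_of_le₀ (by exact_mod_cast hxu.trans hτu1) (by exact_mod_cast hτ.2.1 u)
  have hprod : (x u : ℚ) / τ u * x u ≤ 1 :=
    mul_le_one₀ hdiv (by exact_mod_cast hxu0) (by exact_mod_cast hxu)
  have : (-1 : ℚ) ≤ Q.bil x x := by
    push_cast at hge
    linarith
  exact_mod_cast this

end FundamentalRegion

section AdmissiblePairs

variable {K : Type} [Field K] {l : Q.I → K} {τ α : Q.I → ℤ}

/-- The pairs `(τ, α)` for which `τ ∈ Σ_λ` turns out, after suitable reflections, to be a subsum of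
every decomposition of the root `α` into elements of `Σ_λ`. The condition is stable under
admissible reflections. -/
structure IsAdmissible (l : Q.I → K) (τ α : Q.I → ℤ) : Prop where
  left_mem : τ ∈ Q.SigmaSet K l
  right_mem : α ∈ Q.Rplus K l
  sub_mem : α - τ ∈ Q.NRplus K l
  bil_cases : (Q.bil τ τ = 0 ∧ -1 ≤ Q.bil τ α) ∨ (Q.bil τ τ < 0 ∧ Q.bil τ (α - τ) = -1 ∧
    ∃ τ' ∈ Q.SigmaSet K l, Q.bil τ' τ' < 0 ∧ α - τ - τ' ∈ Q.NRplus K l)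

lemma IsAdmissible.refl (h : IsAdmissible l τ α) {i : Q.I} (hi : Q.Loopfree i) (hl : l i ≠ 0) :
    IsAdmissible (Q.coRefl K i l) (Q.refl i τ) (Q.refl i α) where
  left_mem := refl_mem_sigmaSet hi hl h.left_mem
  right_mem := refl_mem_rplus hi hl h.right_mem
  sub_mem := refl_sub i α τ ▸ refl_mem_nrplus hi hl h.sub_mem
  bil_cases := by
    simp only [← refl_sub, bil_refl_refl hi]
    refine h.bil_cases.imp_right fun ⟨hneg, hbil, τ', hτ', hneg', hrest⟩ =>
      ⟨hneg, hbil, Q.refl i τ', refl_mem_sigmaSet hi hl hτ', ?_, ?_⟩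
    · rwa [bil_refl_refl hi]
    · rw [← refl_sub]
      exact refl_mem_nrplus hi hl hrest

lemma IsAdmissible.le (h : IsAdmissible l τ α) : τ ≤ α :=
  sub_nonneg.1 (nonneg_of_mem_nrplus h.sub_mem)

lemma IsAdmissible.bil_self_nonpos (h : IsAdmissible l τ α) : Q.bil τ τ ≤ 0 :=
  h.bil_cases.elim (fun h => h.1.le) fun h => h.1.le

variable [CharZero K]

lemma InFund.hasCommonSubsum_of_bil_eq_zero (hτ : Q.InFund τ) (hS : τ ∈ Q.SigmaSet K l)
    (h0 : Q.bil τ τ = 0) (hαR : α ∈ Q.Rplus K l) (hle : τ ≤ α)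
    (hα : ∀ i, τ i ≠ 0 → Q.bil τ (Q.ev i) = 0 → Q.bil α (Q.ev i) ≤ 0)
    (h : Q.bil τ (α - τ) = 0) : HasCommonSubsum l α := by
  have hterm : ∀ i ∈ Finset.univ, (α - τ) i * Q.bil τ (Q.ev i) ≤ 0 := fun i _ =>
    mul_nonpos_of_nonneg_of_nonpos (sub_nonneg.2 (hle i)) (hτ.2.2.2 i)
  rw [bil_eq_sum_right] at h
  have hsupp := hαR.1.suppConnected.apply_eq_zero_of_bil_ev_eq_zero hτ.2.1 hτ.1 hle
    fun k hk hαk => (mul_eq_zero.1 ((Finset.sum_eq_zero_iff_of_nonpos hterm).1 h k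
      (Finset.mem_univ k))).resolve_left (by simpa [hk] using hαk)
  refine ⟨τ, hS, fun ι J β hβ hsum => ?_⟩
  have hnonneg : ∀ j ∈ J, 0 ≤ β j := fun j hj => (hβ j hj).1.1.nonneg
  have hJ : J.Nonempty := by
    rw [Finset.nonempty_iff_ne_empty]
    rintro rfl
    exact hαR.1.2.2 (hsum.symm.trans Finset.sum_empty)
  refine exists_sum_eq_of_forall_nullSupported hS hτ h0 hJ hβ
    (fun j hj => hτ.nullSupported h0 fun i hi hτi => ?_) fun x hx hxnull _ _ => ?_
  · exact ne_zero_of_nonneg_of_le (hnonneg j hj) (hsum ▸ Finset.single_le_sum hnonneg hj) hi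
      (hsupp i hτi)
  · rw [hsum, bil_comm]
    exact (bil_nonpos_of_nonneg hx.1.nonneg
      fun i hi => hα i (hxnull i hi).1 (hxnull i hi).2).trans zero_le_one

lemma InFund.hasCommonSubsum_of_isotropic (hτ : Q.InFund τ) (hS : τ ∈ Q.SigmaSet K l)
    (h0 : Q.bil τ τ = 0) (hαR : α ∈ Q.Rplus K l) (hle : τ ≤ α)
    (hα : ∀ i, τ i ≠ 0 → Q.bil τ (Q.ev i) = 0 → Q.bil α (Q.ev i) ≤ 0)
    (h : -1 ≤ Q.bil τ α) : HasCommonSubsum l α := by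
  have hbil : Q.bil τ (α - τ) = Q.bil τ α := by rw [bil_sub_right, h0, sub_zero]
  have hnonpos : Q.bil τ (α - τ) ≤ 0 :=
    bil_nonpos_of_nonneg (sub_nonneg.2 hle) fun i _ => hτ.2.2.2 i
  rcases hnonpos.eq_or_lt with hzero | hneg
  · exact hτ.hasCommonSubsum_of_bil_eq_zero hS h0 hαR hle hα hzero
  obtain ⟨u, hu, hbu, hrest⟩ := hτ.exists_bil_ev_eq_neg_one (sub_nonneg.2 hle) (by omega)
  have hτu : τ u = 0 := by
    by_contra hτu
    have := hτ.bil_ev_eq_zero h0 hτu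
    omega
  rw [Pi.sub_apply, hτu, sub_zero] at hu
  obtain ⟨c, b⟩ := exists_isBridge hτ.2.1 hτu hu hbu
    fun i hi hαi hiu => hrest i hiu (by simpa [hi] using hαi)
  obtain ⟨n, hn, hnα⟩ := b.exists_indicator_eq_smul hS hτ hle hα
    fun i hi _ => hτ.bil_ev_eq_zero h0 hi
  exact b.hasCommonSubsum_of_isotropic hS hτ h0 hn hnα

-- If the vertex `u` with `(τ, ε_u) = -1` lay in the support of `τ`, then `α`, hence also `τ'`,
-- would be supported there, which forces `(τ', τ') ≥ -1`; but `(τ', τ')` is even and negative.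
lemma InFund.apply_eq_zero_of_anisotropic {τ' : Q.I → ℤ} {u : Q.I} (hτ : Q.InFund τ)
    (hα : Q.SuppConnected α) (hle : τ ≤ α) (hτ' : 0 ≤ τ') (hneg' : Q.bil τ' τ' < 0)
    (hτ'le : τ' ≤ α - τ) (hu : (α - τ) u = 1) (hbu : Q.bil τ (Q.ev u) = -1)
    (hrest : ∀ i, i ≠ u → (α - τ) i ≠ 0 → Q.bil τ (Q.ev i) = 0) : τ u = 0 := by
  by_contra hτu
  have hsupp := hα.apply_eq_zero_of_bil_ev_eq_zero hτ.2.1 hτ.1 hle fun k hk hαk =>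
    hrest k (fun hku => hτu (hku ▸ hk)) (by simpa [hk] using hαk)
  have hne : ∀ i, τ' i ≠ 0 → (α - τ) i ≠ 0 := fun _ => ne_zero_of_nonneg_of_le hτ' hτ'le
  have hge := hτ.neg_one_le_bil_self hτu hbu hτ'
    (fun i hi hτi => hne i hi (by rw [Pi.sub_apply, hsupp i hτi, hτi, sub_zero]))
    (hu ▸ hτ'le u) fun i hiu hi => hrest i hiu (hne i hi)
  have := bil_self τ'
  omega

lemma InFund.hasCommonSubsum_of_anisotropic {τ' : Q.I → ℤ} (hτ : Q.InFund τ)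
    (hS : τ ∈ Q.SigmaSet K l) (hneg : Q.bil τ τ < 0) (hαR : α ∈ Q.Rplus K l) (hle : τ ≤ α)
    (hα : ∀ i, τ i ≠ 0 → Q.bil τ (Q.ev i) = 0 → Q.bil α (Q.ev i) ≤ 0)
    (h : Q.bil τ (α - τ) = -1) (hτ' : 0 ≤ τ') (hneg' : Q.bil τ' τ' < 0) (hτ'le : τ' ≤ α - τ) :
    HasCommonSubsum l α := by
  obtain ⟨u, hu, hbu, hrest⟩ := hτ.exists_bil_ev_eq_neg_one (sub_nonneg.2 hle) h
  have hτu := hτ.apply_eq_zero_of_anisotropic hαR.1.suppConnected hle hτ' hneg' hτ'le hu hbu hrest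
  have hrest' : ∀ i, i ≠ u → α i ≠ τ i → Q.bil τ (Q.ev i) = 0 :=
    fun i hiu hi => hrest i hiu (sub_ne_zero.2 hi)
  rw [Pi.sub_apply, hτu, sub_zero] at hu
  obtain ⟨c, b⟩ := exists_isBridge hτ.2.1 hτu hu hbu
    fun i hi hαi hiu => hrest' i hiu (hi ▸ hαi)
  have hsupp_ne : ∀ i, τ i ≠ 0 → i ≠ u := fun i hi hiu => hi (hiu ▸ hτu)
  obtain ⟨n, hn, hnα⟩ := b.exists_indicator_eq_smul hS hτ hle hα
    fun i hi => hrest' i (hsupp_ne i hi)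
  obtain rfl : n = 1 := by
    by_contra hn1
    have hnull : NullSupported τ τ := fun i hi => by
      refine ⟨hi, hrest' i (hsupp_ne i hi) fun hαi => ?_⟩
      have := congrFun hnα i
      rw [Set.indicator_of_mem hi, Pi.smul_apply, smul_eq_mul, hαi] at this
      exact hn1 ((right_eq_mul₀ hi).1 this)
    exact hneg.ne hnull.bil_eq_zero
  exact b.hasCommonSubsum_of_indicator_eq hS (hnα.trans (one_smul ℤ τ))

lemma IsAdmissible.hasCommonSubsum_of_inFund (h : IsAdmissible l τ α) (hτ : Q.InFund τ)
    (hα : ∀ i, τ i ≠ 0 → Q.bil τ (Q.ev i) = 0 → Q.bil α (Q.ev i) ≤ 0) : HasCommonSubsum l α := by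
  rcases h.bil_cases with ⟨h0, hbil⟩ | ⟨hneg, hbil, τ', hτ', hneg', hrest⟩
  · exact hτ.hasCommonSubsum_of_isotropic h.left_mem h0 h.right_mem h.le hα hbil
  · exact hτ.hasCommonSubsum_of_anisotropic h.left_mem hneg h.right_mem h.le hα hbil
      hτ'.1.1.nonneg hneg' (sub_nonneg.1 (nonneg_of_mem_nrplus hrest))

theorem IsAdmissible.hasCommonSubsum {l : Q.I → K} {τ α : Q.I → ℤ} (h : IsAdmissible l τ α) :
    HasCommonSubsum l α := by
  have hτ := h.left_mem.1.1
  by_cases hτ_fund : ∀ i, Q.bil τ (Q.ev i) ≤ 0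
  · by_cases hα_null : ∀ i, Q.bil τ (Q.ev i) = 0 → Q.bil α (Q.ev i) ≤ 0
    · exact h.hasCommonSubsum_of_inFund ⟨hτ.2.2, hτ.nonneg, hτ.suppConnected, hτ_fund⟩
        fun i _ => hα_null i
    · push Not at hα_null
      obtain ⟨i, hi0, hpos⟩ := hα_null
      have hi := loopfree_of_bil_ev_pos h.right_mem.1.nonneg hpos
      by_cases hl : l i = 0
      · exact hasCommonSubsum_of_bil_ev_pos hi hl hpos
      · have hrefl := h.refl hi hl
        rw [refl_of_bil_ev_eq_zero hi0] at hrefl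
        exact hrefl.hasCommonSubsum.of_refl hi hl
  · push Not at hτ_fund
    obtain ⟨i, hpos⟩ := hτ_fund
    have hi := loopfree_of_bil_ev_pos hτ.nonneg hpos
    have hne : τ ≠ Q.ev i := by
      rintro rfl
      have := h.bil_self_nonpos
      rw [bil_ev_self_of_loopfree hi] at this
      omega
    have hl : l i ≠ 0 := fun hl =>
      hpos.not_ge (bil_ev_nonpos_of_mem_sigmaSet h.left_mem hi hl hne)
    exact (h.refl hi hl).hasCommonSubsum.of_refl hi hl
termination_by ((Q.ht τ).toNat, (Q.ht α).toNat)
decreasing_by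
  · have := ht_pos_of_mem_rplus h.right_mem
    rw [ht_refl]
    exact Prod.Lex.right _ (by omega)
  · have := ht_pos_of_mem_rplus h.left_mem.1
    rw [ht_refl i τ]
    exact Prod.Lex.left _ _ (by omega)

end AdmissiblePairs

section CommonSubsums

lemma InFund.isotropic_or_anisotropic {α x : Q.I → ℤ} (hα : Q.InFund α) (hx : Q.IsPosRoot x)
    (hle : x ≤ α) (hne : x ≠ α) (h : -1 ≤ Q.bil x (α - x)) :
    (Q.bil x x = 0 ∧ -1 ≤ Q.bil x α) ∨ (Q.bil x x < 0 ∧ Q.bil x (α - x) = -1) := by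
  have hsub := bil_sub_right x α x
  have hxα : Q.bil x α ≤ 0 :=
    bil_comm x α ▸ bil_nonpos_of_nonneg hx.nonneg fun i _ => hα.2.2.2 i
  rcases hx.bil_self_eq_two_or_nonpos with h2 | hnonpos
  · omega
  rcases hnonpos.eq_or_lt with h0 | hneg
  · exact .inl ⟨h0, by omega⟩
  · refine .inr ⟨hneg, ?_⟩
    by_contra hbil
    exact hneg.ne (hα.bil_self_eq_zero_of_add (add_sub_cancel x α) hx.nonneg (sub_nonneg.2 hle)
      hx.2.2 (sub_ne_zero.2 hne.symm) (by omega))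

lemma two_le_sum_two_add_bil {ι : Type*} [Fintype ι] {σ : ι → Q.I → ℤ} {α : Q.I → ℤ}
    (hsum : ∑ t, σ t = α) (hpp : Q.pp α ≤ ∑ t, Q.pp (σ t)) :
    2 ≤ ∑ t, (2 + Q.bil (σ t) (α - σ t)) := by
  have hterm : ∀ t, 2 + Q.bil (σ t) (α - σ t) = 2 * Q.pp (σ t) + Q.bil (σ t) α := fun t => by
    rw [bil_sub_right, bil_self]
    ring
  rw [Finset.sum_congr rfl fun t _ => hterm t, Finset.sum_add_distrib, ← Finset.mul_sum,
    ← bil_sum_left, hsum, bil_self]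
  linarith

lemma exists_ne_pos_of_two_le_sum {ι : Type*} {s : Finset ι} {f : ι → ℤ}
    (hf : ∀ i ∈ s, f i ≤ 1) (h : 2 ≤ ∑ i ∈ s, f i) :
    ∃ i ∈ s, ∃ j ∈ s, i ≠ j ∧ 0 < f i ∧ 0 < f j := by
  have hle : ∑ i ∈ s, f i ≤ Finset.card {i ∈ s | 0 < f i} := by
    rw [Finset.natCast_card_filter]
    refine Finset.sum_le_sum fun i hi => ?_
    split_ifs with hpos
    exacts [hf i hi, not_lt.1 hpos]
  obtain ⟨i, hi, j, hj, hij⟩ := Finset.one_lt_card.1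
    (by omega : 1 < Finset.card {i ∈ s | 0 < f i})
  rw [Finset.mem_filter] at hi hj
  exact ⟨i, hi.1, j, hj.1, hij, hi.2, hj.2⟩

lemma exists_sum_eq_indicator_of_separates {ι : Type*} {J : Finset ι} {β : ι → Q.I → ℤ}
    {α : Q.I → ℤ} {T : Set Q.I} (hT : Separates α T) (hβ : ∀ j ∈ J, Q.IsPosRoot (β j))
    (hsum : ∑ j ∈ J, β j = α) : ∃ J' ⊆ J, ∑ j ∈ J', β j = T.indicator α := by
  have hnonneg : ∀ j ∈ J, 0 ≤ β j := fun j hj => (hβ j hj).nonneg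
  obtain ⟨J', hJ', -, hJ'sum⟩ := exists_sum_eq_indicator (fun j hj => (hβ j hj).suppConnected)
    fun j hj => hT.mono fun _ => ne_zero_of_nonneg_of_le (hnonneg j hj)
      (hsum ▸ Finset.single_le_sum hnonneg hj)
  exact ⟨J', hJ', by rw [hJ'sum, hsum]⟩

variable {K : Type} [Field K] {l : Q.I → K} {α : Q.I → ℤ} {T : Set Q.I}

lemma Separates.indicator_mem_nrplus (hT : Separates α T) (hα : α ∈ Q.NRplus K l) :
    T.indicator α ∈ Q.NRplus K l := by
  obtain ⟨ι, _, σ, hσ, hsum⟩ := exists_sigma_decomposition hα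
  obtain ⟨J, -, hJ⟩ := exists_sum_eq_indicator_of_separates hT (fun t _ => (hσ t).1.1) hsum
  exact hJ ▸ sum_mem_nrplus fun t _ => (hσ t).1

lemma HasCommonSubsum.of_indicator (hT : Separates α T)
    (h : HasCommonSubsum l (T.indicator α)) : HasCommonSubsum l α := by
  obtain ⟨τ, hτ, hsub⟩ := h
  refine ⟨τ, hτ, fun ι J β hβ hsum => ?_⟩
  obtain ⟨J', hJ', hJ'sum⟩ :=
    exists_sum_eq_indicator_of_separates hT (fun j hj => (hβ j hj).1.1) hsum
  obtain ⟨C, hC, hCsum⟩ := hsub ι J' β (fun j hj => hβ j (hJ' hj)) hJ'sum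
  exact ⟨C, hC.trans hJ', hCsum⟩

variable [CharZero K]

theorem InFund.hasCommonSubsum (hα : Q.InFund α) (hpair : Q.pair K l α = 0) :
    HasCommonSubsum l α := by
  classical
  by_cases hαS : α ∈ Q.SigmaSet K l
  · exact ⟨α, hαS, fun ι J β _ hsum => ⟨J, subset_rfl, hsum⟩⟩
  have hαR : α ∈ Q.Rplus K l := ⟨hα.isPosRoot, hpair⟩
  obtain ⟨ι, _, σ, hσ, hsum, hpp⟩ := exists_sigma_decomposition_of_mem_rplus hαR
  have hsub : ∀ t, α - σ t = ∑ s ∈ Finset.univ.erase t, σ s := fun t => by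
    rw [← hsum, ← Finset.add_sum_erase _ σ (Finset.mem_univ t), add_sub_cancel_left]
  have hsub_mem : ∀ t, α - σ t ∈ Q.NRplus K l := fun t =>
    hsub t ▸ sum_mem_nrplus fun s _ => (hσ s).1
  have hcases : ∀ t, -1 ≤ Q.bil (σ t) (α - σ t) → _ := fun t => hα.isotropic_or_anisotropic
    (hσ t).1.1 (sub_nonneg.1 (nonneg_of_mem_nrplus (hsub_mem t))) fun h => hαS (h ▸ hσ t)
  by_cases hiso : ∃ t, Q.bil (σ t) (σ t) = 0 ∧ -1 ≤ Q.bil (σ t) α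
  · obtain ⟨t, ht⟩ := hiso
    exact (IsAdmissible.mk (hσ t) hαR (hsub_mem t) (.inl ht)).hasCommonSubsum
  have haniso : ∀ t, -1 ≤ Q.bil (σ t) (α - σ t) →
      Q.bil (σ t) (σ t) < 0 ∧ Q.bil (σ t) (α - σ t) = -1 :=
    fun t ht => (hcases t ht).resolve_left fun h => hiso ⟨t, h⟩
  obtain ⟨t, -, t', -, hne, ht, ht'⟩ := exists_ne_pos_of_two_le_sum
    (fun t _ => by have := haniso t; omega) (two_le_sum_two_add_bil hsum hpp)
  obtain ⟨hneg, hbil⟩ := haniso t (by omega)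
  have hsub_mem' : α - σ t - σ t' ∈ Q.NRplus K l := by
    rw [hsub t, ← Finset.add_sum_erase _ σ (Finset.mem_erase.2 ⟨hne.symm, Finset.mem_univ t'⟩),
      add_sub_cancel_left]
    exact sum_mem_nrplus fun s _ => (hσ s).1
  exact (IsAdmissible.mk (hσ t) hαR (hsub_mem t)
    (.inr ⟨hneg, hbil, σ t', hσ t', (haniso t' (by omega)).1, hsub_mem'⟩)).hasCommonSubsum

theorem hasCommonSubsum_of_mem_nrplus (hα : α ∈ Q.NRplus K l) (hα0 : α ≠ 0) :
    HasCommonSubsum l α := by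
  induction hn : (Q.ht α).toNat using Nat.strong_induction_on generalizing l α with
  | _ n ih =>
    subst hn
    have hnonneg := nonneg_of_mem_nrplus hα
    have hht := ht_pos hnonneg hα0
    by_cases hpos : ∃ i, 0 < Q.bil α (Q.ev i)
    · obtain ⟨i, hpos⟩ := hpos
      have hi := loopfree_of_bil_ev_pos hnonneg hpos
      by_cases hl : l i = 0
      · exact hasCommonSubsum_of_bil_ev_pos hi hl hpos
      · refine (ih _ ?_ (refl_mem_nrplus hi hl hα) (fun h => hα0 ?_) rfl).of_refl hi hl
        · rw [ht_refl]
          omega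
        · rw [← refl_refl hi α, h, refl_zero]
    push Not at hpos
    by_cases hconn : Q.SuppConnected α
    · exact InFund.hasCommonSubsum ⟨hα0, hnonneg, hconn, hpos⟩ (pair_eq_zero_of_mem_nrplus hα)
    · obtain ⟨T, hT, ⟨a, haT, ha⟩, b, hbT, hb⟩ : ∃ T : Set Q.I, Separates α T ∧
          (∃ a ∈ T, α a ≠ 0) ∧ ∃ b ∉ T, α b ≠ 0 := by
        by_contra! h
        exact hconn (suppConnected_of_forall_separates fun T hT =>
          or_iff_not_imp_left.2 fun hne => h T hT (by simpa using hne))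
      have hlt : Q.ht (T.indicator α) < Q.ht α := by
        rw [ht_apply, ht_apply]
        exact Finset.sum_lt_sum (fun i _ => Set.indicator_le_self' (fun i _ => hnonneg i) i)
          ⟨b, Finset.mem_univ b, Set.indicator_of_notMem hbT α ▸ (hnonneg b).lt_of_ne hb.symm⟩
      refine (ih _ (by omega) (hT.indicator_mem_nrplus hα) (fun h => ha ?_) rfl).of_indicator hT
      rw [← Set.indicator_of_mem haT α, h, Pi.zero_apply]

end CommonSubsums

end FinQuiver

theorem stmt0_general (Q : FinQuiver) (K : Type) [Field K] [CharZero K]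
    (l : Q.I → K) (α : Q.I → ℤ) (hα : α ∈ Q.NRplus K l) :
    ∃ (r : ℕ) (σ : Fin r → (Q.I → ℤ)),
      (∀ t, σ t ∈ Q.SigmaSet K l) ∧ α = ∑ t, σ t ∧
      ∀ (n : ℕ) (β : Fin n → (Q.I → ℤ)), (∀ j, β j ∈ Q.SigmaSet K l) →
        α = ∑ j, β j →
        ∃ P : Fin n → Fin r,
          ∀ t, σ t = ∑ j ∈ Finset.univ.filter (fun j => P j = t), β j := by
  obtain ⟨r, σ, hσ, hsum, hrefine⟩ := FinQuiver.exists_isCoarsestDecomposition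
    (fun _ => FinQuiver.hasCommonSubsum_of_mem_nrplus) hα
  exact ⟨r, σ, hσ, hsum, fun n => hrefine (Fin n)⟩

/-- Any `α ∈ ℕR_λ^+` has a decomposition as a sum of elements of `Σ_λ`
which every other such decomposition refines (the refinement being given by the
fibres of a map `P` assigning each term of the other decomposition to a part). -/
theorem stmt0 (Q : FinQuiver) (K : Type) [Field K] [CharZero K] [IsAlgClosed K]
    (l : Q.I → K) (α : Q.I → ℤ) (hα : α ∈ Q.NRplus K l) :
    ∃ (r : ℕ) (σ : Fin r → (Q.I → ℤ)),
      (∀ t, σ t ∈ Q.SigmaSet K l) ∧ α = ∑ t, σ t ∧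
      ∀ (n : ℕ) (β : Fin n → (Q.I → ℤ)), (∀ j, β j ∈ Q.SigmaSet K l) →
        α = ∑ j, β j →
        ∃ P : Fin n → Fin r,
          ∀ t, σ t = ∑ j ∈ Finset.univ.filter (fun j => P j = t), β j := by
  exact stmt0_general Q K l α hα

end
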